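/- There exists q₀ > 1, depending only on λ and d, such that for all 1 ≤ q ≤ q₀, all T ≥ 2 and all a ∈ Ω, the weighted estimate Σ_{x∈ℤ^d} |∇_x G_T(a;x,0)|^{2q} ω_q(x) ≤ C(d,λ) log T holds if d = 2, and Σ_{x∈ℤ^d} |∇_x G_T(a;x,0)|^{2q} ω_q(x) ≤ C(d,λ) holds if d > 2, with a constant depending only on d and λ. -/

import Mathlib

/-!
The function `G = G_T(a; ·, 0)` is characterised by the weak formulation
`(1/T) ∑ G φ + ∑ ∇φ · a ∇G = φ 0` for all square-summable `φ` (`IsGreen.form_eq`). Everything below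
follows from testing this identity; bounds on finite partial sums are proved throughout.

**Dimension at least three.** A discrete Hardy inequality (`hardy`) allows testing with `g² G` for
a small power `g` of `A + |x|²` (truncated, to be bounded): the commutator terms are absorbed
(`weighted_energy`), so that `∑ g² |∇G|²` is bounded by `G 0`, and `G 0` itself is bounded by
Hardy and the energy identity. As `|∇G|` is bounded, `|∇G|^{2q} ≤ C |∇G|²`, and for `q` close to `1`
the weight `ω_q` is at most a multiple of `g²` (`case_three_le`).

**Dimension two.** There is no Hardy inequality, and `G 0` grows like `log T`.

* Caccioppoli's inequality and the planar Sobolev-Poincaré inequality give a reverse Hölder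
  inequality for gradients of local solutions (`reverse_holder`). Gehring's lemma (`gehring`),
  proved here by a stopping time, Vitali's covering lemma and a layer-cake sum over geometric
  levels, improves the integrability. It is stated for a variable scale `ρ x` and a slowly varying
  weight `φ`, and bounds `∑ f² (f φ)^p` by `∑ f²`.
* A first application gives decay of the energy of local solutions on small squares
  (`interior_decay`) and hence the bound `|v 0 - mean v| ≤ C ‖∇v‖` (`center_sub_avg_le`).
* The energy of `G` on every annulus `n ≤ |x| ≤ 4 n + 4` is bounded uniformly in `T`
  (`annulus_energy`). With `v` the solution of the transposed equation driven by `∇G` on the annulus,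
  this energy `N` equals `v 0`. The value `v 0` is compared with the mean of `v` on a square of
  radius about `n`, then with the means on a sequence of boxes of doubling size leading away from
  the pole, up to a size of at least `√T`, where the zeroth-order term bounds the mean. The
  differences of consecutive means decay geometrically, again by duality and `interior_decay`.
  Altogether `N ≤ C √N`, so `N` is bounded.
* Beyond distance `√T` the zeroth-order term absorbs the cutoff errors (`far_energy`). Summation
  over the annuli gives `∑ |∇G|² ≤ C log T` (`green_energy_two`).
* A second application of Gehring's lemma, to `f = |∇G|` with scale proportional to the distance
  to the pole, weight `φ ~ |x| + |x|²/√T` and exponent `p = 2 (q - 1)`, bounds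
  `∑ |∇G|^{2q} φ^{2(q-1)}` by `C ∑ |∇G|²` (`gehringData_green`, `case_two`).
-/

open MeasureTheory
open scoped ENNReal

namespace StochHom

noncomputable section


/-- The lattice `ℤ^d`. -/
abbrev Lat (d : ℕ) := Fin d → ℤ

/-- The `i`-th coordinate unit vector of `ℤ^d`. -/
def unitv (d : ℕ) (i : Fin d) : Lat d := fun j => if j = i then 1 else 0

/-- Euclidean norm of a vector in `ℝ^d`. -/
noncomputable def vnorm {d : ℕ} (v : Fin d → ℝ) : ℝ := Real.sqrt (∑ i, (v i) ^ 2)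

/-- Euclidean norm of a lattice point. -/
noncomputable def latnorm {d : ℕ} (x : Lat d) : ℝ := vnorm (fun i => (x i : ℝ))

/-- Discrete gradient `∇u(x) = (u(x+eᵢ) - u(x))ᵢ`. -/
def dgrad {d : ℕ} (u : Lat d → ℝ) (x : Lat d) : Fin d → ℝ :=
  fun i => u (x + unitv d i) - u x

/-- Discrete negative divergence `∇*g(x) = Σᵢ (gᵢ(x-eᵢ) - gᵢ(x))`. -/
def ddiv {d : ℕ} (g : Lat d → Fin d → ℝ) (x : Lat d) : ℝ :=
  ∑ i, (g (x - unitv d i) i - g x i)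

/-- Matrix-vector multiplication for a `d×d` matrix given as `Fin d → Fin d → ℝ`. -/
def mulVec' {d : ℕ} (A : Fin d → Fin d → ℝ) (v : Fin d → ℝ) : Fin d → ℝ :=
  fun i => ∑ j, A i j * v j

/-- The ellipticity condition defining `Ω₀`: `v·Av ≥ λ|v|²` and `|Av| ≤ |v|`. -/
def IsElliptic (d : ℕ) (lam : ℝ) (A : Fin d → Fin d → ℝ) : Prop :=
  (∀ v : Fin d → ℝ, lam * ∑ i, (v i) ^ 2 ≤ ∑ i, v i * mulVec' A v i) ∧
  (∀ v : Fin d → ℝ, vnorm (mulVec' A v) ≤ vnorm v)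

/-- The space `Ω = Ω₀^{ℤ^d}` of admissible coefficient fields. -/
abbrev Coeff (d : ℕ) (lam : ℝ) :=
  {a : Lat d → Fin d → Fin d → ℝ // ∀ x, IsElliptic d lam (a x)}

/-- Shift of a coefficient field: `(τ_z a)(x) = a(x+z)`. -/
def shift {d : ℕ} {lam : ℝ} (z : Lat d) (a : Coeff d lam) : Coeff d lam :=
  ⟨fun x => a.1 (x + z), fun x => a.2 (x + z)⟩

/-- Stationarity of an ensemble: every shift is measure preserving. -/
def Stationary {d : ℕ} {lam : ℝ} (μ : Measure (Coeff d lam)) : Prop :=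
  ∀ z : Lat d, MeasurePreserving (shift z) μ μ

/-- Coefficient fields agreeing with `a` outside of `x`. -/
def sameOutside {d : ℕ} {lam : ℝ} (a : Coeff d lam) (x : Lat d) :
    Set (Coeff d lam) :=
  {b | ∀ y, y ≠ x → b.1 y = a.1 y}

/-- The oscillation `osc_{a(x)} ζ`. -/
noncomputable def osc {d : ℕ} {lam : ℝ} (ζ : Coeff d lam → ℝ) (a : Coeff d lam)
    (x : Lat d) : ℝ :=
  sSup (ζ '' sameOutside a x) - sInf (ζ '' sameOutside a x)

/-- Membership in `C_b(Ω)`: bounded continuous functions. -/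
def MemCb {d : ℕ} {lam : ℝ} (ζ : Coeff d lam → ℝ) : Prop :=
  Continuous ζ ∧ ∃ M, ∀ a, |ζ a| ≤ M

/-- The logarithmic Sobolev inequality with constant `ρ`. -/
def SatisfiesLSI {d : ℕ} {lam : ℝ} (μ : Measure (Coeff d lam)) (ρ : ℝ) : Prop :=
  ∀ ζ : Coeff d lam → ℝ, MemCb ζ →
    ∫ a, (ζ a) ^ 2 * Real.log ((ζ a) ^ 2 / ∫ b, (ζ b) ^ 2 ∂μ) ∂μ
      ≤ (1 / (2 * ρ)) * ∫ a, ∑' x : Lat d, (osc ζ a x) ^ 2 ∂μ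

/-- The spectral gap inequality with constant `ρ`. -/
def SatisfiesSG {d : ℕ} {lam : ℝ} (μ : Measure (Coeff d lam)) (ρ : ℝ) : Prop :=
  ∀ ζ : Coeff d lam → ℝ, MemCb ζ →
    ∫ a, (ζ a - ∫ b, ζ b ∂μ) ^ 2 ∂μ
      ≤ (1 / ρ) * ∫ a, ∑' x : Lat d, (osc ζ a x) ^ 2 ∂μ

/-- `φ` is a bounded solution of the modified corrector equation
`(1/T)φ + ∇*(a∇φ) = -∇*(aξ)` on `ℤ^d`. -/
def IsModCorrector (d : ℕ) (T : ℝ) (ξ : Fin d → ℝ)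
    (a : Lat d → Fin d → Fin d → ℝ) (φ : Lat d → ℝ) : Prop :=
  (∃ M, ∀ x, |φ x| ≤ M) ∧
  ∀ x, (1 / T) * φ x + ddiv (fun y => mulVec' (a y) (dgrad φ y)) x
      = - ddiv (fun y => mulVec' (a y) ξ) x

/-- `G` is the `ℓ²` Green's function of `(1/T) + ∇*(a∇·)` with pole at `y`. -/
def IsGreen (d : ℕ) (T : ℝ) (a : Lat d → Fin d → Fin d → ℝ) (y : Lat d)
    (G : Lat d → ℝ) : Prop :=
  Summable (fun x => (G x) ^ 2) ∧
  ∀ x, (1 / T) * G x + ddiv (fun z => mulVec' (a z) (dgrad G z)) x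
      = if x = y then 1 else 0

/-- Spectral norm (Euclidean operator norm) of a `d×d` matrix. -/
noncomputable def specNorm {d : ℕ} (A : Fin d → Fin d → ℝ) : ℝ :=
  sSup {r : ℝ | ∃ v : Fin d → ℝ, vnorm v ≤ 1 ∧ r = vnorm (mulVec' A v)}

/-- The weight `ω_q` from the paper. -/
noncomputable def weight (d : ℕ) (q T : ℝ) (x : Lat d) : ℝ :=
  if d = 2 then
    (latnorm x + 1) ^ (2 * (q - 1)) + T ^ (1 - q) * (latnorm x + 1) ^ (4 * (q - 1))
  else (latnorm x + 1) ^ (2 * (d : ℝ) * (q - 1))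

section

/-! ### Square-summable lattice functions -/

/-- Square-summability on the lattice. -/
def L2 {d : ℕ} (u : Lat d → ℝ) : Prop := Summable fun x => u x ^ 2

/-- The squared Euclidean length `|∇u(x)|²` of the discrete gradient. -/
def gsq {d : ℕ} (u : Lat d → ℝ) (x : Lat d) : ℝ := ∑ i, dgrad u x i ^ 2

/-- The bilinear form `ζ · A ξ`. -/
def bil {d : ℕ} (A : Fin d → Fin d → ℝ) (ζ ξ : Fin d → ℝ) : ℝ := ∑ i, ζ i * mulVec' A ξ i

/-- The bilinear form of the operator `1/T + ∇* a ∇`; the second function is the test function. -/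
def form {d : ℕ} (T : ℝ) (a : Lat d → Fin d → Fin d → ℝ) (u φ : Lat d → ℝ) : ℝ :=
  (1 / T) * ∑' x, u x * φ x + ∑' x, bil (a x) (dgrad φ x) (dgrad u x)

/-- Ellipticity in the form in which it is used; unlike `IsElliptic` it is visibly invariant under
transposition. -/
def Ell {d : ℕ} (lam : ℝ) (a : Lat d → Fin d → Fin d → ℝ) : Prop :=
  (∀ x ξ, lam * ∑ i, ξ i ^ 2 ≤ bil (a x) ξ ξ) ∧
  (∀ x ζ ξ, |bil (a x) ζ ξ| ≤ √(∑ i, ζ i ^ 2) * √(∑ i, ξ i ^ 2))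

/-- The transposed coefficient field. -/
def transp {d : ℕ} (a : Lat d → Fin d → Fin d → ℝ) : Lat d → Fin d → Fin d → ℝ :=
  fun x i j => a x j i

variable {d : ℕ}

lemma gsq_nonneg (u : Lat d → ℝ) (x : Lat d) : 0 ≤ gsq u x :=
  Finset.sum_nonneg fun _ _ => sq_nonneg _

lemma L2.add {u v : Lat d → ℝ} (hu : L2 u) (hv : L2 v) : L2 fun x => u x + v x := by
  refine Summable.of_nonneg_of_le (fun _ => sq_nonneg _) (fun x => ?_)
    ((hu.mul_left 2).add (hv.mul_left 2))
  nlinarith [sq_nonneg (u x - v x)]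

lemma L2.const_mul {u : Lat d → ℝ} (hu : L2 u) (c : ℝ) : L2 fun x => c * u x := by
  unfold L2
  simp only [mul_pow]
  exact Summable.mul_left (c ^ 2) hu

lemma L2.sub {u v : Lat d → ℝ} (hu : L2 u) (hv : L2 v) : L2 fun x => u x - v x := by
  have := hu.add (hv.const_mul (-1))
  simpa [sub_eq_add_neg] using this

lemma L2.shift {u : Lat d → ℝ} (hu : L2 u) (e : Lat d) : L2 fun x => u (x + e) :=
  (Equiv.summable_iff (f := fun x => u x ^ 2) (Equiv.addRight e)).2 hu

lemma L2.dgrad {u : Lat d → ℝ} (hu : L2 u) (i : Fin d) : L2 fun x => dgrad u x i :=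
  (hu.shift _).sub hu

lemma L2.gsq {u : Lat d → ℝ} (hu : L2 u) : Summable (gsq u) :=
  summable_sum fun i _ => hu.dgrad i

lemma L2.of_support {u : Lat d → ℝ} (s : Finset (Lat d)) (h : ∀ x, x ∉ s → u x = 0) : L2 u :=
  summable_of_ne_finset_zero (s := s) fun x hx => by simp [h x hx]

lemma L2.mul_bdd {u g : Lat d → ℝ} (hu : L2 u) {M : ℝ} (hg : ∀ x, |g x| ≤ M) :
    L2 fun x => g x * u x := by
  refine Summable.of_nonneg_of_le (fun _ => sq_nonneg _) (fun x => ?_) (hu.mul_left (M ^ 2))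
  rw [mul_pow]
  exact mul_le_mul_of_nonneg_right (sq_le_sq' (abs_le.1 (hg x)).1 (abs_le.1 (hg x)).2)
    (sq_nonneg _)

lemma summable_mul_of_sq {ι : Type*} {u v : ι → ℝ} (hu : Summable fun x => u x ^ 2)
    (hv : Summable fun x => v x ^ 2) : Summable fun x => u x * v x := by
  refine Summable.of_norm_bounded (hu.add hv) fun x => ?_
  rw [Real.norm_eq_abs, abs_mul]
  nlinarith [sq_nonneg (|u x| - |v x|), sq_abs (u x), sq_abs (v x), sq_nonneg (|u x| + |v x|)]

lemma abs_tsum_mul_le {ι : Type*} {u v : ι → ℝ} (hu : Summable fun x => u x ^ 2)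
    (hv : Summable fun x => v x ^ 2) :
    |∑' x, u x * v x| ≤ √(∑' x, u x ^ 2) * √(∑' x, v x ^ 2) := by
  have h := (summable_mul_of_sq hu hv).abs
  refine (norm_tsum_le_tsum_norm (f := fun x => u x * v x) h).trans ?_
  refine Summable.tsum_le_of_sum_le h fun s => ?_
  have h1 := Real.sum_mul_le_sqrt_mul_sqrt s (fun x => |u x|) (fun x => |v x|)
  simp only [sq_abs] at h1
  simp only [Real.norm_eq_abs, abs_mul]
  refine h1.trans ?_
  gcongr
  · exact hu.sum_le_tsum s fun _ _ => sq_nonneg _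
  · exact hv.sum_le_tsum s fun _ _ => sq_nonneg _

lemma bil_add_left (A : Fin d → Fin d → ℝ) (ζ ζ' ξ : Fin d → ℝ) :
    bil A (fun i => ζ i + ζ' i) ξ = bil A ζ ξ + bil A ζ' ξ := by
  simp [bil, add_mul, Finset.sum_add_distrib]

lemma bil_smul_left (A : Fin d → Fin d → ℝ) (c : ℝ) (ζ ξ : Fin d → ℝ) :
    bil A (fun i => c * ζ i) ξ = c * bil A ζ ξ := by
  simp [bil, Finset.mul_sum, mul_assoc]

lemma bil_transp (a : Lat d → Fin d → Fin d → ℝ) (x : Lat d) (ζ ξ : Fin d → ℝ) :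
    bil (transp a x) ζ ξ = bil (a x) ξ ζ := by
  simp only [bil, mulVec', transp, Finset.mul_sum]
  rw [Finset.sum_comm]
  refine Finset.sum_congr rfl fun i _ => Finset.sum_congr rfl fun j _ => by ring

lemma bil_add_right (A : Fin d → Fin d → ℝ) (ζ ξ ξ' : Fin d → ℝ) :
    bil A ζ (fun i => ξ i + ξ' i) = bil A ζ ξ + bil A ζ ξ' := by
  simp [bil, mulVec', mul_add, Finset.sum_add_distrib]

lemma bil_smul_right (A : Fin d → Fin d → ℝ) (c : ℝ) (ζ ξ : Fin d → ℝ) :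
    bil A ζ (fun i => c * ξ i) = c * bil A ζ ξ := by
  simp only [bil, mulVec', Finset.mul_sum]
  refine Finset.sum_congr rfl fun i _ => Finset.sum_congr rfl fun j _ => by ring

lemma Ell.of_isElliptic {lam : ℝ} {a : Lat d → Fin d → Fin d → ℝ}
    (h : ∀ x, IsElliptic d lam (a x)) : Ell lam a := by
  refine ⟨fun x => (h x).1, fun x ζ ξ => ?_⟩
  have h2 := (h x).2 ξ
  unfold vnorm at h2
  rw [abs_le]
  constructor
  · have h1 := Real.sum_mul_le_sqrt_mul_sqrt Finset.univ (fun i => - ζ i) (mulVec' (a x) ξ)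
    have : ∑ i, -ζ i * mulVec' (a x) ξ i = - bil (a x) ζ ξ := by
      simp [bil]
    rw [this] at h1
    simp only [neg_sq] at h1
    nlinarith [mul_le_mul_of_nonneg_left h2 (Real.sqrt_nonneg (∑ i, ζ i ^ 2))]
  · refine (Real.sum_mul_le_sqrt_mul_sqrt Finset.univ ζ (mulVec' (a x) ξ)).trans ?_
    gcongr

lemma Ell.transp {lam : ℝ} {a : Lat d → Fin d → Fin d → ℝ} (h : Ell lam a) :
    Ell lam (transp a) :=
  ⟨fun x ξ => by rw [bil_transp]; exact h.1 x ξ,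
   fun x ζ ξ => by rw [bil_transp, mul_comm]; exact h.2 x ξ ζ⟩

lemma form_transp (T : ℝ) (a : Lat d → Fin d → Fin d → ℝ) (u φ : Lat d → ℝ) :
    form T (transp a) u φ = form T a φ u := by
  simp only [form, bil_transp]
  congr 2
  exact tsum_congr fun x => mul_comm _ _

lemma Ell.abs_bil_le {lam : ℝ} {a : Lat d → Fin d → Fin d → ℝ} (h : Ell lam a)
    (u φ : Lat d → ℝ) (x : Lat d) :
    |bil (a x) (dgrad φ x) (dgrad u x)| ≤ √(gsq φ x) * √(gsq u x) := h.2 x _ _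

lemma Ell.summable {lam : ℝ} {a : Lat d → Fin d → Fin d → ℝ} (h : Ell lam a)
    {u φ : Lat d → ℝ} (hu : L2 u) (hφ : L2 φ) :
    Summable fun x => bil (a x) (dgrad φ x) (dgrad u x) := by
  refine Summable.of_norm_bounded (g := fun x => √(gsq φ x) * √(gsq u x)) ?_ (h.abs_bil_le u φ)
  apply summable_mul_of_sq
  · simpa [Real.sq_sqrt, gsq_nonneg] using hφ.gsq
  · simpa [Real.sq_sqrt, gsq_nonneg] using hu.gsq

lemma dgrad_add (u v : Lat d → ℝ) (x : Lat d) :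
    dgrad (fun y => u y + v y) x = fun i => dgrad u x i + dgrad v x i := by
  funext i; simp only [dgrad]; ring

lemma dgrad_const_mul (c : ℝ) (u : Lat d → ℝ) (x : Lat d) :
    dgrad (fun y => c * u y) x = fun i => c * dgrad u x i := by
  funext i; simp only [dgrad]; ring

lemma form_add_right {lam T : ℝ} {a : Lat d → Fin d → Fin d → ℝ} (h : Ell lam a)
    {u v w : Lat d → ℝ} (hu : L2 u) (hv : L2 v) (hw : L2 w) :
    form T a u (fun x => v x + w x) = form T a u v + form T a u w := by
  simp only [form, dgrad_add, bil_add_left, mul_add]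
  rw [Summable.tsum_add (summable_mul_of_sq hu hv) (summable_mul_of_sq hu hw),
    Summable.tsum_add (h.summable hu hv) (h.summable hu hw)]
  ring

lemma form_mul_right {T : ℝ} {a : Lat d → Fin d → Fin d → ℝ} (c : ℝ) (u v : Lat d → ℝ) :
    form T a u (fun x => c * v x) = c * form T a u v := by
  simp only [form, dgrad_const_mul, bil_smul_left]
  rw [tsum_mul_left]
  have : ∀ x, u x * (c * v x) = c * (u x * v x) := fun x => by ring
  simp only [this]
  rw [tsum_mul_left]
  ring

lemma gsq_le (u : Lat d → ℝ) (x : Lat d) :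
    gsq u x ≤ ∑ i, (2 * u (x + unitv d i) ^ 2 + 2 * u x ^ 2) := by
  refine Finset.sum_le_sum fun i _ => ?_
  simp only [dgrad]
  nlinarith [sq_nonneg (u (x + unitv d i) + u x)]

lemma tsum_shift (f : Lat d → ℝ) (e : Lat d) : ∑' x, f (x + e) = ∑' x, f x :=
  (Equiv.addRight e).tsum_eq f

lemma tsum_gsq_le {u : Lat d → ℝ} (hu : L2 u) :
    ∑' x, gsq u x ≤ 4 * d * ∑' x, u x ^ 2 := by
  have hs : ∀ i ∈ Finset.univ (α := Fin d),
      Summable fun x => 2 * u (x + unitv d i) ^ 2 + 2 * u x ^ 2 := fun i _ =>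
    (Summable.mul_left 2 (hu.shift (unitv d i))).add (Summable.mul_left 2 hu)
  refine (hu.gsq.tsum_le_tsum (gsq_le u) (summable_sum hs)).trans ?_
  rw [Summable.tsum_finsetSum hs]
  refine le_of_eq ?_
  have : ∀ i : Fin d, ∑' x, (2 * u (x + unitv d i) ^ 2 + 2 * u x ^ 2) = 4 * ∑' x, u x ^ 2 := by
    intro i
    rw [Summable.tsum_add (Summable.mul_left 2 (hu.shift (unitv d i))) (Summable.mul_left 2 hu),
      tsum_mul_left, tsum_mul_left, tsum_shift (fun x => u x ^ 2)]
    ring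
  simp only [this]
  simp
  ring

lemma abs_form_le {lam T : ℝ} (hT : 0 < T) {a : Lat d → Fin d → Fin d → ℝ} (h : Ell lam a)
    {u v : Lat d → ℝ} (hu : L2 u) (hv : L2 v) :
    |form T a u v| ≤ (1 / T + 4 * d) * √(∑' x, u x ^ 2) * √(∑' x, v x ^ 2) := by
  have h1 := abs_tsum_mul_le hu hv
  have hu' : Summable fun x => √(gsq u x) ^ 2 := by simpa [Real.sq_sqrt, gsq_nonneg] using hu.gsq
  have hv' : Summable fun x => √(gsq v x) ^ 2 := by simpa [Real.sq_sqrt, gsq_nonneg] using hv.gsq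
  have h2 : |∑' x, bil (a x) (dgrad v x) (dgrad u x)| ≤ √(∑' x, gsq v x) * √(∑' x, gsq u x) := by
    have hs := (h.summable hu hv).abs
    refine (norm_tsum_le_tsum_norm (f := fun x => bil (a x) (dgrad v x) (dgrad u x)) hs).trans ?_
    refine (hs.tsum_le_tsum (fun x => h.abs_bil_le u v x)
      (summable_mul_of_sq hv' hu')).trans ?_
    have := abs_tsum_mul_le hv' hu'
    simp only [Real.sq_sqrt, gsq_nonneg] at this
    exact (le_abs_self _).trans this
  have h3 : √(∑' x, gsq v x) * √(∑' x, gsq u x)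
      ≤ 4 * d * (√(∑' x, u x ^ 2) * √(∑' x, v x ^ 2)) := by
    have e1 := Real.sqrt_le_sqrt (tsum_gsq_le hu)
    have e2 := Real.sqrt_le_sqrt (tsum_gsq_le hv)
    rw [Real.sqrt_mul (by positivity)] at e1 e2
    refine (mul_le_mul e2 e1 (by positivity) (by positivity)).trans (le_of_eq ?_)
    have : √(4 * (d : ℝ)) * √(4 * d) = 4 * d := Real.mul_self_sqrt (by positivity)
    linear_combination (√(∑' x, u x ^ 2) * √(∑' x, v x ^ 2)) * this
  unfold form
  refine (abs_add_le _ _).trans ?_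
  rw [abs_mul, abs_of_pos (by positivity : 0 < 1 / T)]
  have := mul_le_mul_of_nonneg_left h1 (by positivity : 0 ≤ 1 / T)
  nlinarith

lemma le_form_self {lam T : ℝ} {a : Lat d → Fin d → Fin d → ℝ} (h : Ell lam a)
    {u : Lat d → ℝ} (hu : L2 u) :
    (1 / T) * ∑' x, u x ^ 2 + lam * ∑' x, gsq u x ≤ form T a u u := by
  unfold form
  have : ∑' x, u x * u x = ∑' x, u x ^ 2 := tsum_congr fun x => by ring
  rw [this, ← tsum_mul_left (a := lam)]
  have := (hu.gsq.mul_left lam).tsum_le_tsum (fun x => h.1 x (dgrad u x)) (h.summable hu hu)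
  exact add_le_add le_rfl this

/-- Existence for `1/T + ∇* a ∇` (Lax-Milgram in `ℓ²`). -/
lemma exists_solution {lam T : ℝ} (hlam : 0 < lam) (hT : 0 < T) {a : Lat d → Fin d → Fin d → ℝ}
    (h : Ell lam a) (ℓ : (Lat d → ℝ) →ₗ[ℝ] ℝ) (M : ℝ)
    (hM : ∀ φ, L2 φ → |ℓ φ| ≤ M * √(∑' x, φ x ^ 2)) :
    ∃ v, L2 v ∧ ∀ φ, L2 φ → form T a v φ = ℓ φ := by
  let V := lp (fun _ : Lat d => ℝ) 2
  have hmem : ∀ f : V, L2 (fun x => f x) := by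
    intro f
    have := (lp.memℓp f).summable (by norm_num)
    simpa [L2] using this
  have hnorm : ∀ f : V, ‖f‖ = √(∑' x, f x ^ 2) := by
    intro f
    rw [lp.norm_eq_tsum_rpow (by norm_num), Real.sqrt_eq_rpow]
    simp
  have hT' : Ell lam (transp a) := h.transp
  let B0 : V →ₗ[ℝ] V →ₗ[ℝ] ℝ := LinearMap.mk₂ ℝ (fun u v => form T a (fun x => u x) (fun x => v x))
    (fun u v w => by
      have := form_add_right (T := T) hT' (hmem w) (hmem u) (hmem v)
      rw [form_transp, form_transp, form_transp] at this
      exact this)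
    (fun c u w => by
      have := form_mul_right (T := T) (a := transp a) c (fun x => w x) (fun x => u x)
      rw [form_transp, form_transp] at this
      exact this)
    (fun u v w => form_add_right h (hmem u) (hmem v) (hmem w))
    (fun c u w => form_mul_right c (fun x => u x) (fun x => w x))
  let B : V →L[ℝ] V →L[ℝ] ℝ := LinearMap.mkContinuous₂ B0 (1 / T + 4 * d) (fun u v => by
    rw [hnorm, hnorm]
    exact abs_form_le hT h (hmem u) (hmem v))
  have hco : IsCoercive B := by
    refine ⟨1 / T, by positivity, fun u => ?_⟩
    have h1 := le_form_self (T := T) h (hmem u)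
    have h2 : 0 ≤ ∑' x, gsq (fun x => u x) x := tsum_nonneg fun x => gsq_nonneg _ _
    have h3 : ‖u‖ * ‖u‖ = ∑' x, u x ^ 2 := by
      rw [hnorm, Real.mul_self_sqrt (tsum_nonneg fun x => sq_nonneg _)]
    rw [mul_assoc, h3]
    exact le_trans (by nlinarith) h1
  let L0 : V →ₗ[ℝ] ℝ :=
    { toFun := fun u => ℓ (fun x => u x)
      map_add' := fun u v => ℓ.map_add (fun x => u x) (fun x => v x)
      map_smul' := fun c u => ℓ.map_smul c (fun x => u x) }
  let Lc : V →L[ℝ] ℝ := L0.mkContinuous M (fun u => by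
    rw [hnorm]; exact hM _ (hmem u))
  let f := (InnerProductSpace.toDual ℝ V).symm Lc
  let v := hco.continuousLinearEquivOfBilin.symm f
  refine ⟨fun x => v x, hmem v, fun φ hφ => ?_⟩
  have hφ' : Memℓp φ 2 := by
    rw [memℓp_gen_iff (by norm_num)]
    simpa [L2] using hφ
  let w : V := ⟨φ, hφ'⟩
  have e1 := hco.continuousLinearEquivOfBilin_apply v w
  rw [ContinuousLinearEquiv.apply_symm_apply, InnerProductSpace.toDual_symm_apply] at e1
  exact e1.symm

lemma abs_eval_le {u : Lat d → ℝ} (hu : L2 u) (y : Lat d) : |u y| ≤ √(∑' x, u x ^ 2) := by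
  apply Real.abs_le_sqrt
  exact hu.le_tsum y fun _ _ => sq_nonneg _

/-- The pointwise equation implies the weak formulation against every `ℓ²` test function. -/
lemma IsGreen.form_eq {lam T : ℝ} {a : Lat d → Fin d → Fin d → ℝ} (h : Ell lam a)
    {G : Lat d → ℝ} (hG : IsGreen d T a 0 G) {φ : Lat d → ℝ} (hφ : L2 φ) :
    form T a G φ = φ 0 := by
  obtain ⟨hG2, heq⟩ := hG
  have hG2 : L2 G := hG2
  set F : Lat d → Fin d → ℝ := fun z => mulVec' (a z) (dgrad G z) with hF
  have hF2 : ∀ i, L2 fun x => F x i := by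
    intro i
    refine Summable.of_nonneg_of_le (fun _ => sq_nonneg _) (fun x => ?_) hG2.gsq
    have h1 := h.2 x (Pi.single i 1) (dgrad G x)
    have h2 : bil (a x) (Pi.single i 1) (dgrad G x) = F x i := by
      simp [bil, hF, Pi.single_apply]
    have h3 : ∑ j, (Pi.single i (1 : ℝ) : Fin d → ℝ) j ^ 2 = 1 := by
      simp [Pi.single_apply]
    rw [h2, h3, Real.sqrt_one, one_mul] at h1
    have := sq_le_sq' (by linarith [abs_le.1 h1]) (abs_le.1 h1).2
    exact this.trans (le_of_eq (Real.sq_sqrt (gsq_nonneg G x)))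
  have hs0 : Summable fun x => G x * φ x := summable_mul_of_sq hG2 hφ
  have hsA : ∀ i ∈ Finset.univ (α := Fin d), Summable fun x => F (x - unitv d i) i * φ x :=
    fun i _ => summable_mul_of_sq (u := fun x => F (x - unitv d i) i)
      (by simpa [sub_eq_add_neg, L2] using (hF2 i).shift (-unitv d i)) hφ
  have hsB : ∀ i ∈ Finset.univ (α := Fin d), Summable fun x => F x i * φ x :=
    fun i _ => summable_mul_of_sq (hF2 i) hφ
  have hsC : ∀ i ∈ Finset.univ (α := Fin d), Summable fun x => F x i * φ (x + unitv d i) :=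
    fun i _ => summable_mul_of_sq (hF2 i) (hφ.shift (unitv d i))
  have key : ∑' x, ddiv F x * φ x = ∑' x, bil (a x) (dgrad φ x) (dgrad G x) := by
    have e1 : ∀ x, ddiv F x * φ x = ∑ i, F (x - unitv d i) i * φ x - ∑ i, F x i * φ x := by
      intro x; simp only [ddiv, Finset.sum_mul, ← Finset.sum_sub_distrib, sub_mul]
    have e2 : ∀ x, bil (a x) (dgrad φ x) (dgrad G x)
        = ∑ i, F x i * φ (x + unitv d i) - ∑ i, F x i * φ x := by
      intro x
      simp only [bil, ← Finset.sum_sub_distrib, hF]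
      exact Finset.sum_congr rfl fun i _ => by simp only [dgrad]; ring
    simp only [e1, e2]
    rw [Summable.tsum_sub (summable_sum hsA) (summable_sum hsB),
      Summable.tsum_sub (summable_sum hsC) (summable_sum hsB),
      Summable.tsum_finsetSum hsA, Summable.tsum_finsetSum hsC]
    congr 1
    refine Finset.sum_congr rfl fun i _ => ?_
    rw [← tsum_shift (fun x => F (x - unitv d i) i * φ x) (unitv d i)]
    exact tsum_congr fun x => by simp
  have hsD : Summable fun x => ddiv F x * φ x := by
    have e1 : ∀ x, ddiv F x * φ x = ∑ i, F (x - unitv d i) i * φ x - ∑ i, F x i * φ x := by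
      intro x; simp only [ddiv, Finset.sum_mul, ← Finset.sum_sub_distrib, sub_mul]
    simp only [e1]
    exact (summable_sum hsA).sub (summable_sum hsB)
  unfold form
  rw [← key, ← tsum_mul_left, ← Summable.tsum_add (hs0.mul_left _) hsD]
  have : ∀ x, 1 / T * (G x * φ x) + ddiv F x * φ x = if x = 0 then φ 0 else 0 := by
    intro x
    have := heq x
    rw [← mul_assoc, ← add_mul, this]
    split_ifs with hx <;> simp [hx]
  simp only [this, tsum_ite_eq]

end

/-! ### Dimension at least three: a Hardy inequality and a weighted energy estimate -/

/-- The regularised squared length `A + |x|²`. -/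
def Pw {d : ℕ} (A : ℝ) (x : Lat d) : ℝ := A + ∑ i, (x i : ℝ) ^ 2

lemma Pw_add_unitv {d : ℕ} (A : ℝ) (x : Lat d) (i : Fin d) :
    Pw A (x + unitv d i) = Pw A x + 2 * x i + 1 := by
  have h : ∀ j, ((x + unitv d i) j : ℝ) ^ 2
      = (x j : ℝ) ^ 2 + if j = i then 2 * (x i : ℝ) + 1 else 0 := by
    intro j
    simp only [Pi.add_apply, unitv]
    split_ifs with hj
    · subst hj; push_cast; ring
    · simp
  unfold Pw
  rw [Finset.sum_congr rfl fun j _ => h j, Finset.sum_add_distrib]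
  simp; ring

lemma sq_le_Pw {d : ℕ} (A : ℝ) (x : Lat d) (i : Fin d) : A + (x i : ℝ) ^ 2 ≤ Pw A x := by
  have := Finset.single_le_sum (f := fun j => (x j : ℝ) ^ 2) (fun j _ => sq_nonneg _)
    (Finset.mem_univ i)
  unfold Pw; simpa using this

lemma le_Pw {d : ℕ} (A : ℝ) (x : Lat d) : A ≤ Pw A x := by
  have : 0 ≤ ∑ i, (x i : ℝ) ^ 2 := Finset.sum_nonneg fun j _ => sq_nonneg _
  unfold Pw; linarith

lemma abs_step_le {d : ℕ} {A : ℝ} (hA : 16 ≤ A) (x : Lat d) (i : Fin d) :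
    |2 * (x i : ℝ) + 1| ≤ Pw A x / 2 := by
  have := sq_le_Pw A x i
  rw [abs_le]
  constructor <;> nlinarith [sq_nonneg ((x i : ℝ) - 4), sq_nonneg ((x i : ℝ) + 4)]

lemma abs_step_le_sqrt {d : ℕ} {A : ℝ} (hA : 16 ≤ A) (x : Lat d) (i : Fin d) :
    |2 * (x i : ℝ) + 1| ≤ 3 * √(Pw A x) := by
  have h := sq_le_Pw A x i
  have h0 := le_Pw A x
  have hx : |(x i : ℝ)| ≤ √(Pw A x) := Real.abs_le_sqrt (by linarith)
  have h1 : 1 ≤ √(Pw A x) := Real.one_le_sqrt.2 (by linarith)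
  have := abs_le.1 hx
  rw [abs_le]
  constructor <;> linarith

lemma Pw_step_lower {d : ℕ} {A : ℝ} (hA : 16 ≤ A) (x : Lat d) (i : Fin d) :
    Pw A x / 2 ≤ Pw A (x + unitv d i) := by
  have := abs_le.1 (abs_step_le hA x i)
  rw [Pw_add_unitv]; linarith

lemma Pw_step_upper {d : ℕ} {A : ℝ} (hA : 16 ≤ A) (x : Lat d) (i : Fin d) :
    Pw A (x + unitv d i) ≤ 2 * Pw A x := by
  have := abs_le.1 (abs_step_le hA x i)
  rw [Pw_add_unitv]; linarith [le_Pw A x]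

/-- One summand of the discrete divergence of `x / (A + |x|²)`, compared with its continuum value. -/
lemma div_term_lower {P x B : ℝ} (hB : 1 ≤ B) (hP : 4 * B ^ 2 + B + 16 + x ^ 2 ≤ P) :
    (P - 2 * x ^ 2) / P ^ 2 - 6 / (B * P) ≤ x / P - (x - 1) / (P - 2 * x + 1) := by
  have hP0 : 0 < P := by nlinarith [sq_nonneg x]
  have hPi : P / 2 ≤ P - 2 * x + 1 := by nlinarith [sq_nonneg (x - 2)]
  have hPi0 : 0 < P - 2 * x + 1 := by linarith
  have e : x / P - (x - 1) / (P - 2 * x + 1) - (P - 2 * x ^ 2) / P ^ 2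
      = (x * P + (P - 2 * x ^ 2) * (2 * x - 1)) / (P ^ 2 * (P - 2 * x + 1)) := by
    have hne := hPi0.ne'
    have hne' := hP0.ne'
    rw [div_sub_div _ _ hne' hne, div_sub_div _ _ (mul_ne_zero hne' hne) (pow_ne_zero 2 hne'),
      div_eq_div_iff (by positivity) (by positivity)]
    ring
  have hax : B * (3 * |x| + 1) ≤ 3 * P := by
    nlinarith [sq_nonneg (|x| - B), sq_abs x, abs_nonneg x]
  have hnum : |x * P + (P - 2 * x ^ 2) * (2 * x - 1)| ≤ P * (3 * |x| + 1) := by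
    refine (abs_add_le _ _).trans ?_
    rw [abs_mul, abs_mul, abs_of_pos hP0]
    have h1 : |P - 2 * x ^ 2| ≤ P := abs_le.2 ⟨by nlinarith, by nlinarith⟩
    have h2 : |2 * x - 1| ≤ 2 * |x| + 1 := by
      refine (abs_sub _ _).trans ?_
      rw [abs_mul]; norm_num
    nlinarith [mul_le_mul h1 h2 (abs_nonneg _) hP0.le]
  have hfin : |(x * P + (P - 2 * x ^ 2) * (2 * x - 1)) / (P ^ 2 * (P - 2 * x + 1))|
      ≤ 6 / (B * P) := by
    rw [abs_div, abs_of_pos (by positivity : 0 < P ^ 2 * (P - 2 * x + 1)),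
      div_le_div_iff₀ (by positivity) (by positivity)]
    calc _ ≤ P * (3 * |x| + 1) * (B * P) := by gcongr
      _ = P ^ 2 * (B * (3 * |x| + 1)) := by ring
      _ ≤ P ^ 2 * (3 * P) := by gcongr
      _ ≤ 6 * (P ^ 2 * (P - 2 * x + 1)) := by nlinarith [sq_nonneg P]
  have := (abs_le.1 hfin).1
  linarith

/-- The regularisation parameter of the Hardy weight. -/
def A0 (d : ℕ) : ℝ := 4 * (24 * (d : ℝ)) ^ 2 + 24 * d + 16

lemma A0_ge (d : ℕ) : 16 ≤ A0 d := by unfold A0; nlinarith [sq_nonneg (24 * (d : ℝ)), Nat.cast_nonneg (α := ℝ) d]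

lemma div_lower {d : ℕ} (hd : 3 ≤ d) (x : Lat d) :
    3 / 4 / Pw (A0 d) x ≤ ∑ i, ((x i : ℝ) / Pw (A0 d) x
      - ((x i : ℝ) - 1) / Pw (A0 d) (x - unitv d i)) := by
  have hd' : (3 : ℝ) ≤ d := by exact_mod_cast hd
  set P := Pw (A0 d) x with hPdef
  have hP0 : 0 < P := by have := le_Pw (A0 d) x; have := A0_ge d; linarith
  have h1 : ∀ i, Pw (A0 d) (x - unitv d i) = P - 2 * x i + 1 := by
    intro i
    have := Pw_add_unitv (A0 d) (x - unitv d i) i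
    rw [sub_add_cancel] at this
    simp only [Pi.sub_apply, unitv, if_true] at this
    push_cast at this
    linarith
  have h2 : ∀ i, (P - 2 * (x i : ℝ) ^ 2) / P ^ 2 - 6 / ((24 * d) * P)
      ≤ (x i : ℝ) / P - ((x i : ℝ) - 1) / (P - 2 * x i + 1) := by
    intro i
    apply div_term_lower (by linarith)
    have := sq_le_Pw (A0 d) x i
    rw [← hPdef] at this
    have hA0 : A0 d = 4 * (24 * (d : ℝ)) ^ 2 + 24 * d + 16 := rfl
    linarith
  simp only [h1]
  refine le_trans ?_ (Finset.sum_le_sum fun i _ => h2 i)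
  rw [Finset.sum_sub_distrib, ← Finset.sum_div, Finset.sum_sub_distrib, ← Finset.mul_sum]
  simp only [Finset.sum_const, Finset.card_univ, Fintype.card_fin, nsmul_eq_mul]
  have hs : ∑ i, (x i : ℝ) ^ 2 ≤ P := by
    have := A0_ge d
    rw [hPdef]; unfold Pw; linarith
  have e1 : (d : ℝ) * (6 / (24 * d * P)) = 1 / 4 / P := by field_simp; norm_num
  rw [e1]
  have e2 : 1 / P ≤ (d * P - 2 * ∑ i, (x i : ℝ) ^ 2) / P ^ 2 := by
    rw [div_le_div_iff₀ hP0 (by positivity)]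
    nlinarith
  have e3 : 3 / 4 / P + 1 / 4 / P = 1 / P := by field_simp; norm_num
  linarith

/-- Discrete Hardy inequality, obtained by integrating `u²` against the divergence of the vector
field `x / (A + |x|²)`. -/
lemma hardy {d : ℕ} (hd : 3 ≤ d) {u : Lat d → ℝ} (hu : L2 u) :
    ∑' x, u x ^ 2 / Pw (A0 d) x ≤ 12 * d * ∑' x, gsq u x := by
  have hd' : (3 : ℝ) ≤ d := by exact_mod_cast hd
  have hA := A0_ge d
  have hPpos : ∀ x : Lat d, 0 < Pw (A0 d) x := fun x => by have := le_Pw (A0 d) x; linarith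
  have hP1 : ∀ x : Lat d, 1 ≤ Pw (A0 d) x := fun x => by have := le_Pw (A0 d) x; linarith
  set F : Fin d → Lat d → ℝ := fun i x => (x i : ℝ) / Pw (A0 d) x with hF
  have hFsq : ∀ i x, F i x ^ 2 ≤ 1 / Pw (A0 d) x := by
    intro i x
    rw [hF]; simp only
    rw [div_pow, div_le_div_iff₀ (by have := hPpos x; positivity) (hPpos x)]
    have := sq_le_Pw (A0 d) x i
    nlinarith [hPpos x]
  have hF1 : ∀ i x, |F i x| ≤ 1 := by
    intro i x
    rw [← sq_le_one_iff_abs_le_one]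
    refine (hFsq i x).trans ?_
    rw [div_le_one (hPpos x)]; exact hP1 x
  have hsW : Summable fun x => u x ^ 2 / Pw (A0 d) x := by
    refine Summable.of_nonneg_of_le (fun x => div_nonneg (sq_nonneg _) (hPpos x).le)
      (fun x => div_le_self (sq_nonneg _) (hP1 x)) hu
  have hFs : ∀ (i : Fin d) (w : Lat d → ℝ), L2 w → ∀ k : Lat d → Lat d,
      Summable fun x => F i (k x) * w x ^ 2 := by
    intro i w hw k
    refine Summable.of_norm_bounded hw fun x => ?_
    rw [Real.norm_eq_abs, abs_mul, abs_of_nonneg (sq_nonneg (w x))]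
    exact mul_le_of_le_one_left (sq_nonneg _) (hF1 i _)
  have hus : ∀ i : Fin d, L2 fun x => u (x + unitv d i) := fun i => hu.shift _
  have hWshift : ∀ i : Fin d, ∑' x, u (x + unitv d i) ^ 2 / Pw (A0 d) (x + unitv d i)
      = ∑' x, u x ^ 2 / Pw (A0 d) x := fun i =>
    tsum_shift (fun x => u x ^ 2 / Pw (A0 d) x) (unitv d i)
  have hsWshift : ∀ i : Fin d,
      Summable fun x => u (x + unitv d i) ^ 2 / Pw (A0 d) (x + unitv d i) := fun i =>
    (Equiv.summable_iff (f := fun x => u x ^ 2 / Pw (A0 d) x) (Equiv.addRight (unitv d i))).2 hsW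
  set W := ∑' x, u x ^ 2 / Pw (A0 d) x with hW
  -- integration by parts for one component
  have hparts : ∀ i, ∑' x, (F i x - F i (x - unitv d i)) * u x ^ 2
      = ∑' x, F i x * (u x ^ 2 - u (x + unitv d i) ^ 2) := by
    intro i
    simp only [sub_mul, mul_sub]
    have h0 : Summable fun x => F i x * u x ^ 2 := hFs i u hu id
    have h1 : Summable fun x => F i x * u (x + unitv d i) ^ 2 := hFs i _ (hus i) id
    rw [Summable.tsum_sub h0 (hFs i u hu fun x => x - unitv d i), Summable.tsum_sub h0 h1]
    congr 1
    rw [← tsum_shift (fun x => F i (x - unitv d i) * u x ^ 2) (unitv d i)]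
    simp
  have hsdiff : ∀ i ∈ Finset.univ (α := Fin d),
      Summable fun x => (F i x - F i (x - unitv d i)) * u x ^ 2 := by
    intro i _
    simp only [sub_mul]
    exact (hFs i u hu id).sub (hFs i u hu fun x => x - unitv d i)
  have hlow : 3 / 4 * W ≤ ∑ i, ∑' x, (F i x - F i (x - unitv d i)) * u x ^ 2 := by
    rw [← Summable.tsum_finsetSum hsdiff, hW, ← tsum_mul_left]
    refine (hsW.mul_left _).tsum_le_tsum (fun x => ?_) (summable_sum hsdiff)
    rw [← Finset.sum_mul]
    have := div_lower hd x
    have e : ∑ i, (F i x - F i (x - unitv d i)) = ∑ i, ((x i : ℝ) / Pw (A0 d) x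
      - ((x i : ℝ) - 1) / Pw (A0 d) (x - unitv d i)) := by
      refine Finset.sum_congr rfl fun i _ => ?_
      simp [hF, unitv]
    rw [e]
    calc _ = 3 / 4 / Pw (A0 d) x * u x ^ 2 := by ring
      _ ≤ _ := by gcongr
  have hup : ∀ i, ∑' x, F i x * (u x ^ 2 - u (x + unitv d i) ^ 2)
      ≤ 1 / (12 * d) * W + 1 / (6 * d) * W + 6 * d * ∑' x, dgrad u x i ^ 2 := by
    intro i
    have hs1 : Summable fun x => F i x * (u x ^ 2 - u (x + unitv d i) ^ 2) := by
      simp only [mul_sub]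
      exact (hFs i u hu id).sub (hFs i _ (hus i) id)
    have hs2 := (hsW.mul_left (1 / (12 * (d : ℝ)))).add ((hsWshift i).mul_left (1 / (6 * (d : ℝ))))
    have hs3 := hs2.add (Summable.mul_left (6 * (d : ℝ)) (hu.dgrad i))
    rw [show 1 / (6 * (d : ℝ)) * W = 1 / (6 * (d : ℝ)) * _ from congrArg _ (hWshift i).symm, hW,
      ← tsum_mul_left, ← tsum_mul_left, ← tsum_mul_left,
      ← Summable.tsum_add (hsW.mul_left (1 / (12 * (d : ℝ)))) ((hsWshift i).mul_left _),
      ← Summable.tsum_add hs2 (Summable.mul_left _ (hu.dgrad i))]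
    refine hs1.tsum_le_tsum (fun x => ?_) hs3
    simp only [dgrad]
    set p := u x
    set p' := u (x + unitv d i)
    set f := F i x with hf
    have hf2 := hFsq i x
    have hstep := Pw_step_upper hA x i
    have hPP : 1 / Pw (A0 d) x ≤ 2 / Pw (A0 d) (x + unitv d i) := by
      rw [div_le_div_iff₀ (hPpos _) (hPpos _)]; linarith
    have e1 : f * (p ^ 2 - p' ^ 2) ≤ 1 / (24 * d) * (f ^ 2 * (p + p') ^ 2) + 6 * d * (p' - p) ^ 2 := by
      have hd0 : (d : ℝ) ≠ 0 := by linarith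
      have h0 : 0 ≤ 1 / (24 * (d : ℝ)) * (f * (p + p') + 12 * d * (p' - p)) ^ 2 := by positivity
      have e : 1 / (24 * (d : ℝ)) * (f * (p + p') + 12 * d * (p' - p)) ^ 2
        = 1 / (24 * d) * (f ^ 2 * (p + p') ^ 2) + 6 * d * (p' - p) ^ 2 - f * (p ^ 2 - p' ^ 2) := by
        field_simp; ring
      linarith
    have e2 : f ^ 2 * (p + p') ^ 2
        ≤ 2 * (p ^ 2 / Pw (A0 d) x) + 4 * (p' ^ 2 / Pw (A0 d) (x + unitv d i)) := by
      calc f ^ 2 * (p + p') ^ 2 ≤ 1 / Pw (A0 d) x * (2 * p ^ 2 + 2 * p' ^ 2) := by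
            apply mul_le_mul hf2 _ (sq_nonneg _) (by have := hPpos x; positivity)
            nlinarith [sq_nonneg (p - p')]
        _ = 2 * (p ^ 2 / Pw (A0 d) x) + 1 / Pw (A0 d) x * (2 * p' ^ 2) := by ring
        _ ≤ 2 * (p ^ 2 / Pw (A0 d) x) + 2 / Pw (A0 d) (x + unitv d i) * (2 * p' ^ 2) := by gcongr
        _ = _ := by ring
    have e3 := mul_le_mul_of_nonneg_left e2 (by positivity : 0 ≤ 1 / (24 * (d : ℝ)))
    refine e1.trans ?_
    have e4 : 1 / (24 * (d : ℝ)) * (2 * (p ^ 2 / Pw (A0 d) x)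
        + 4 * (p' ^ 2 / Pw (A0 d) (x + unitv d i)))
        = 1 / (12 * d) * (p ^ 2 / Pw (A0 d) x)
          + 1 / (6 * d) * (p' ^ 2 / Pw (A0 d) (x + unitv d i)) := by
      field_simp; ring
    linarith
  have hsum := Finset.sum_le_sum fun i (_ : i ∈ Finset.univ) => hup i
  have hD : ∑ i, ∑' x, dgrad u x i ^ 2 = ∑' x, gsq u x :=
    (Summable.tsum_finsetSum fun i _ => hu.dgrad i).symm
  rw [Finset.sum_add_distrib, ← Finset.mul_sum, hD] at hsum
  simp only [hparts] at hlow
  simp only [Finset.sum_const, Finset.card_univ, Fintype.card_fin, nsmul_eq_mul] at hsum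
  have e5 : (d : ℝ) * (1 / (12 * d) * W + 1 / (6 * d) * W) = 1 / 4 * W := by
    field_simp; ring
  rw [e5] at hsum
  linarith

/-- Energy estimate with a slowly varying weight `g`: the commutator terms are absorbed by means of
the Hardy inequality. -/
lemma weighted_energy {d : ℕ} (hd : 3 ≤ d) {lam T η M : ℝ} (hlam0 : 0 < lam) (hlam1 : lam ≤ 1)
    (hT : 0 < T) {a : Lat d → Fin d → Fin d → ℝ} (h : Ell lam a) {G : Lat d → ℝ} (hG2 : L2 G)
    (hG : ∀ φ, L2 φ → form T a G φ = φ 0) {g : Lat d → ℝ} (hg0 : ∀ x, 0 < g x)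
    (hgM : ∀ x, g x ≤ M) (hη0 : 0 ≤ η) (hη : η * (2000 * d ^ 2) ≤ lam)
    (hstep : ∀ x i, |g (x + unitv d i) - g x| ≤ η * (g x / √(Pw (A0 d) x))) :
    lam / 2 * ∑' x, g x ^ 2 * gsq G x ≤ g 0 ^ 2 * G 0 := by
  have hd' : (3 : ℝ) ≤ d := by exact_mod_cast hd
  have hA := A0_ge d
  have hP16 : ∀ x : Lat d, 16 ≤ Pw (A0 d) x := fun x => by have := le_Pw (A0 d) x; linarith
  have hPpos : ∀ x : Lat d, 0 < Pw (A0 d) x := fun x => by have := hP16 x; linarith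
  have hsq4 : ∀ x : Lat d, 4 ≤ √(Pw (A0 d) x) := fun x => by
    apply Real.le_sqrt_of_sq_le; have := hP16 x; linarith
  have hη1 : η ≤ 1 := by nlinarith
  -- consecutive values of the weight are comparable
  have hcmp : ∀ x i, |g (x + unitv d i) - g x| ≤ g x / 4 := by
    intro x i
    refine (hstep x i).trans ?_
    have h1 : g x / √(Pw (A0 d) x) ≤ g x / 4 :=
      div_le_div_of_nonneg_left (hg0 x).le (by norm_num) (hsq4 x)
    have := hg0 x
    calc η * (g x / √(Pw (A0 d) x)) ≤ 1 * (g x / 4) :=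
          mul_le_mul hη1 h1 (by positivity) (by norm_num)
      _ = _ := one_mul _
  have hgabs : ∀ x, |g x| ≤ M := fun x => by rw [abs_of_pos (hg0 x)]; exact hgM x
  have hgG : L2 fun x => g x * G x := hG2.mul_bdd hgabs
  have hφ : L2 fun x => g x * (g x * G x) := hgG.mul_bdd hgabs
  set H := ∑' x, (g x * G x) ^ 2 / Pw (A0 d) x with hH
  set X := ∑' x, g x ^ 2 * gsq G x with hX
  have hsX : Summable fun x => g x ^ 2 * gsq G x := by
    refine Summable.of_nonneg_of_le (fun x => mul_nonneg (sq_nonneg _) (gsq_nonneg _ _)) (fun x => ?_)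
      (hG2.gsq.mul_left (M ^ 2))
    have := gsq_nonneg G x
    have := hg0 x
    have := hgM x
    gcongr
  have hsH : Summable fun x => (g x * G x) ^ 2 / Pw (A0 d) x :=
    Summable.of_nonneg_of_le (fun x => div_nonneg (sq_nonneg _) (hPpos x).le)
      (fun x => div_le_self (sq_nonneg _) (by linarith [hP16 x])) hgG
  set R : Lat d → ℝ := fun x => ∑ i, g x ^ 2 * (G (x + unitv d i) ^ 2 / Pw (A0 d) x) with hR
  have hR0 : ∀ x, 0 ≤ R x := fun x => Finset.sum_nonneg fun i _ =>
    mul_nonneg (sq_nonneg _) (div_nonneg (sq_nonneg _) (hPpos x).le)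
  have hRle : ∀ x, R x ≤ ∑ i, 8 * ((g (x + unitv d i) * G (x + unitv d i)) ^ 2
      / Pw (A0 d) (x + unitv d i)) := by
    intro x
    refine Finset.sum_le_sum fun i _ => ?_
    have h1 := abs_le.1 (hcmp x i)
    have h2 := Pw_step_upper hA x i
    have h3 : g x ^ 2 ≤ 4 * g (x + unitv d i) ^ 2 := by nlinarith [hg0 x, hg0 (x + unitv d i)]
    have h4 : 1 / Pw (A0 d) x ≤ 2 / Pw (A0 d) (x + unitv d i) := by
      rw [div_le_div_iff₀ (hPpos _) (hPpos _)]; linarith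
    calc _ = g x ^ 2 * G (x + unitv d i) ^ 2 * (1 / Pw (A0 d) x) := by ring
      _ ≤ 4 * g (x + unitv d i) ^ 2 * G (x + unitv d i) ^ 2 * (2 / Pw (A0 d) (x + unitv d i)) := by
        have := hPpos x
        gcongr
      _ = _ := by ring
  have hsS : ∀ i ∈ Finset.univ (α := Fin d), Summable fun x =>
      8 * ((g (x + unitv d i) * G (x + unitv d i)) ^ 2 / Pw (A0 d) (x + unitv d i)) := fun i _ =>
    Summable.mul_left 8 ((Equiv.summable_iff (f := fun x => (g x * G x) ^ 2 / Pw (A0 d) x)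
      (Equiv.addRight (unitv d i))).2 hsH)
  have hsR : Summable R := Summable.of_nonneg_of_le hR0 hRle (summable_sum hsS)
  have hRH : ∑' x, R x ≤ 8 * d * H := by
    refine (hsR.tsum_le_tsum hRle (summable_sum hsS)).trans (le_of_eq ?_)
    rw [Summable.tsum_finsetSum hsS]
    have : ∀ i : Fin d, ∑' x, 8 * ((g (x + unitv d i) * G (x + unitv d i)) ^ 2
        / Pw (A0 d) (x + unitv d i)) = 8 * H := fun i => by
      rw [tsum_mul_left, tsum_shift (fun x => (g x * G x) ^ 2 / Pw (A0 d) x)]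
    simp only [this]; simp; ring
  have hHX : H ≤ 48 * d * X := by
    have h1 := hardy hd hgG
    have h2 : ∀ x, gsq (fun x => g x * G x) x ≤ 2 * (g x ^ 2 * gsq G x) + 2 * η ^ 2 * R x := by
      intro x
      simp only [gsq, hR, Finset.mul_sum, ← Finset.sum_add_distrib]
      refine Finset.sum_le_sum fun i _ => ?_
      simp only [dgrad]
      set G' := G (x + unitv d i)
      set g' := g (x + unitv d i) with hg'
      have h3 : (g' - g x) ^ 2 ≤ η ^ 2 * (g x ^ 2 / Pw (A0 d) x) := by
        have := sq_le_sq' (abs_le.1 (hstep x i)).1 (abs_le.1 (hstep x i)).2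
        rw [mul_pow, div_pow, Real.sq_sqrt (hPpos x).le] at this
        exact this
      calc (g' * G' - g x * G x) ^ 2
          = (g x * (G' - G x) + (g' - g x) * G') ^ 2 := by ring
        _ ≤ 2 * (g x * (G' - G x)) ^ 2 + 2 * ((g' - g x) * G') ^ 2 := by
            nlinarith [sq_nonneg (g x * (G' - G x) - (g' - g x) * G')]
        _ = 2 * (g x ^ 2 * (G' - G x) ^ 2) + 2 * ((g' - g x) ^ 2 * G' ^ 2) := by ring
        _ ≤ 2 * (g x ^ 2 * (G' - G x) ^ 2) + 2 * (η ^ 2 * (g x ^ 2 / Pw (A0 d) x) * G' ^ 2) := by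
            gcongr
        _ = _ := by ring
    have h3 := hgG.gsq.tsum_le_tsum h2 ((hsX.mul_left 2).add (hsR.mul_left (2 * η ^ 2)))
    rw [Summable.tsum_add (hsX.mul_left 2) (hsR.mul_left (2 * η ^ 2)), tsum_mul_left,
      tsum_mul_left] at h3
    have hH0 : 0 ≤ H := tsum_nonneg fun x => div_nonneg (sq_nonneg _) (hPpos x).le
    have h4 : 12 * (d : ℝ) * (2 * η ^ 2 * (8 * d * H)) ≤ 1 / 2 * H := by
      have h5 : η * (d : ℝ) ^ 2 ≤ 1 / 2000 := by linarith
      have h6 : (η * d) ^ 2 ≤ 1 / 2000 := by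
        have : (η * d) ^ 2 = η * (η * d ^ 2) := by ring
        rw [this]
        calc η * (η * d ^ 2) ≤ 1 * (1 / 2000) := mul_le_mul hη1 h5 (by positivity) (by norm_num)
          _ = _ := one_mul _
      have : 12 * (d : ℝ) * (2 * η ^ 2 * (8 * d * H)) = 192 * (η * d) ^ 2 * H := by ring
      rw [this]
      nlinarith
    have h5 : 12 * (d : ℝ) * ∑' x, gsq (fun x => g x * G x) x
        ≤ 12 * d * (2 * X + 2 * η ^ 2 * (8 * d * H)) := by
      gcongr
      exact h3.trans (by gcongr)
    nlinarith
  -- testing with `g² G`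
  have htest := hG _ hφ
  have hmass : 0 ≤ (1 / T) * ∑' x, G x * (g x * (g x * G x)) := by
    refine mul_nonneg (by positivity) (tsum_nonneg fun x => ?_)
    have : G x * (g x * (g x * G x)) = (g x * G x) ^ 2 := by ring
    rw [this]; positivity
  have hpt : ∀ x, (lam - 3 * η / 2) * (g x ^ 2 * gsq G x) - 3 * η / 2 * R x
      ≤ bil (a x) (dgrad (fun x => g x * (g x * G x)) x) (dgrad G x) := by
    intro x
    set ζ : Fin d → ℝ := fun i => G (x + unitv d i) * (g (x + unitv d i) ^ 2 - g x ^ 2) with hζ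
    have e1 : dgrad (fun x => g x * (g x * G x)) x = fun i => g x ^ 2 * dgrad G x i + ζ i := by
      funext i; simp only [dgrad, hζ]; ring
    rw [e1, bil_add_left, bil_smul_left]
    have h1 := mul_le_mul_of_nonneg_left (h.1 x (dgrad G x)) (sq_nonneg (g x))
    have h2 := h.2 x ζ (dgrad G x)
    have h3 : ∑ i, ζ i ^ 2 ≤ (3 * η * g x) ^ 2 * R x := by
      simp only [hR, hζ, Finset.mul_sum]
      refine Finset.sum_le_sum fun i _ => ?_
      set G' := G (x + unitv d i)
      set g' := g (x + unitv d i) with hg'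
      have k1 := abs_le.1 (hcmp x i)
      have k2 : (g' - g x) ^ 2 ≤ η ^ 2 * (g x ^ 2 / Pw (A0 d) x) := by
        have := sq_le_sq' (abs_le.1 (hstep x i)).1 (abs_le.1 (hstep x i)).2
        rw [mul_pow, div_pow, Real.sq_sqrt (hPpos x).le] at this
        exact this
      have k3 : (g' + g x) ^ 2 ≤ (3 * g x) ^ 2 := by
        have := hg0 x; have := hg0 (x + unitv d i)
        apply pow_le_pow_left₀ (by linarith)
        linarith
      calc (G' * (g' ^ 2 - g x ^ 2)) ^ 2 = G' ^ 2 * ((g' - g x) ^ 2 * (g' + g x) ^ 2) := by ring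
        _ ≤ G' ^ 2 * (η ^ 2 * (g x ^ 2 / Pw (A0 d) x) * (3 * g x) ^ 2) := by
          have := hPpos x
          gcongr
        _ = _ := by ring
    have h4 : √(∑ i, ζ i ^ 2) ≤ 3 * η * g x * √(R x) := by
      have hg := hg0 x
      calc √(∑ i, ζ i ^ 2) ≤ √((3 * η * g x) ^ 2 * R x) := Real.sqrt_le_sqrt h3
        _ = _ := by rw [Real.sqrt_mul (sq_nonneg _), Real.sqrt_sq (by positivity)]
    have h5 : √(∑ i, ζ i ^ 2) * √(∑ i, dgrad G x i ^ 2)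
        ≤ 3 * η / 2 * R x + 3 * η / 2 * (g x ^ 2 * gsq G x) := by
      have hg := hg0 x
      have k1 := Real.sq_sqrt (hR0 x)
      have k2 := Real.sq_sqrt (gsq_nonneg G x)
      calc _ ≤ 3 * η * g x * √(R x) * √(gsq G x) := by
            apply mul_le_mul_of_nonneg_right h4 (Real.sqrt_nonneg _)
        _ = 3 * η / 2 * (2 * √(R x) * (g x * √(gsq G x))) := by ring
        _ ≤ 3 * η / 2 * (√(R x) ^ 2 + (g x * √(gsq G x)) ^ 2) := by
            gcongr; exact two_mul_le_add_sq _ _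
        _ = _ := by rw [mul_pow, k1, k2]; ring
    have h6 := (abs_le.1 h2).1
    have h7 : g x ^ 2 * (lam * ∑ i, dgrad G x i ^ 2) = lam * (g x ^ 2 * gsq G x) := by
      unfold gsq; ring
    rw [h7] at h1
    linarith
  have hTest := ((hsX.mul_left (lam - 3 * η / 2)).sub (hsR.mul_left (3 * η / 2))).tsum_le_tsum hpt
    (h.summable hG2 hφ)
  rw [Summable.tsum_sub (hsX.mul_left (lam - 3 * η / 2)) (hsR.mul_left (3 * η / 2)), tsum_mul_left,
    tsum_mul_left] at hTest
  unfold form at htest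
  have hX0 : 0 ≤ X := tsum_nonneg fun x => mul_nonneg (sq_nonneg _) (gsq_nonneg _ _)
  have hfin : 3 * η / 2 * ∑' x, R x ≤ 3 * η / 2 * (8 * d * (48 * d * X)) := by
    gcongr
    exact hRH.trans (by gcongr)
  have hc : 3 * η / 2 * X + 3 * η / 2 * (8 * d * (48 * d * X)) ≤ lam / 2 * X := by
    have : 3 * η / 2 * X + 3 * η / 2 * (8 * d * (48 * d * X)) = (3 / 2 * η + 576 * (η * d ^ 2)) * X := by
      ring
    rw [this]
    gcongr
    have : 0 ≤ η * ((d : ℝ) ^ 2 - 1) := mul_nonneg hη0 (by nlinarith)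
    linarith
  have e0 : g 0 ^ 2 * G 0 = g 0 * (g 0 * G 0) := by ring
  rw [e0, ← htest]
  linarith

/-- Bernoulli's inequality for the truncated power weight `(P / (1 + κ P)) ^ ε`. -/
lemma trunc_step {P P' κ ε : ℝ} (hP : 0 < P) (hP' : P / 2 ≤ P') (hκ : 0 < κ) (hε0 : 0 ≤ ε)
    (hε1 : ε ≤ 1) (hd : |P' - P| ≤ 3 * √P) :
    |(P' / (1 + κ * P')) ^ ε - (P / (1 + κ * P)) ^ ε| ≤ 6 * ε * ((P / (1 + κ * P)) ^ ε / √P) := by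
  have hP'0 : 0 < P' := by linarith
  have hs : 0 < √P := Real.sqrt_pos.2 hP
  have hss : √P * √P = P := Real.mul_self_sqrt hP.le
  have h1 : 0 < 1 + κ * P := by positivity
  have h1' : 0 < 1 + κ * P' := by positivity
  have key : ∀ Q Q' : ℝ, 0 < Q → 0 < Q' → Q ≤ Q' → P / 2 ≤ Q → |Q' - Q| ≤ 3 * √P →
      0 ≤ (Q' / (1 + κ * Q')) ^ ε - (Q / (1 + κ * Q)) ^ ε ∧
      (Q' / (1 + κ * Q')) ^ ε - (Q / (1 + κ * Q)) ^ ε ≤ 6 * ε * ((Q / (1 + κ * Q)) ^ ε / √P) := by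
    intro Q Q' hQ hQ' hle hPQ hdiff
    have k1 : 0 < 1 + κ * Q := by positivity
    have k1' : 0 < 1 + κ * Q' := by positivity
    have hmono : Q / (1 + κ * Q) ≤ Q' / (1 + κ * Q') := by
      rw [div_le_div_iff₀ k1 k1']; nlinarith
    have hq : 0 < Q / (1 + κ * Q) := by positivity
    refine ⟨sub_nonneg.2 (Real.rpow_le_rpow hq.le hmono hε0), ?_⟩
    have hr : Q' / (1 + κ * Q') ≤ Q / (1 + κ * Q) * (1 + 6 / √P) := by
      have e1 : Q' / (1 + κ * Q') - Q / (1 + κ * Q)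
          = (Q' - Q) / ((1 + κ * Q) * (1 + κ * Q')) := by field_simp; ring
      have e2 : (Q' - Q) / ((1 + κ * Q) * (1 + κ * Q')) ≤ (Q' - Q) / (1 + κ * Q) := by
        apply div_le_div_of_nonneg_left (by linarith) k1
        nlinarith [mul_pos hκ hQ']
      have e3 : Q' - Q ≤ Q * (6 / √P) := by
        have := (abs_le.1 hdiff).2
        rw [mul_div_assoc', le_div_iff₀ hs]
        nlinarith
      have e4 : (Q' - Q) / (1 + κ * Q) ≤ Q * (6 / √P) / (1 + κ * Q) := by gcongr
      have e5 : Q * (6 / √P) / (1 + κ * Q) = Q / (1 + κ * Q) * (6 / √P) := by ring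
      rw [mul_add, mul_one]
      linarith
    have hb := rpow_one_add_le_one_add_mul_self (s := 6 / √P) (by
      have : 0 ≤ 6 / √P := by positivity
      linarith) hε0 hε1
    have h3 : (Q' / (1 + κ * Q')) ^ ε ≤ (Q / (1 + κ * Q)) ^ ε * (1 + ε * (6 / √P)) := by
      calc (Q' / (1 + κ * Q')) ^ ε ≤ (Q / (1 + κ * Q) * (1 + 6 / √P)) ^ ε :=
            Real.rpow_le_rpow (by positivity) hr hε0
        _ = (Q / (1 + κ * Q)) ^ ε * (1 + 6 / √P) ^ ε :=
            Real.mul_rpow hq.le (by positivity)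
        _ ≤ _ := by gcongr
    calc _ ≤ (Q / (1 + κ * Q)) ^ ε * (1 + ε * (6 / √P)) - (Q / (1 + κ * Q)) ^ ε := by gcongr
      _ = _ := by ring
  rcases le_total P P' with hle | hle
  · obtain ⟨k0, k1⟩ := key P P' hP hP'0 hle (by linarith) hd
    rw [abs_of_nonneg k0]; exact k1
  · obtain ⟨k0, k1⟩ := key P' P hP'0 hP hle hP' (by rwa [abs_sub_comm])
    rw [abs_sub_comm, abs_of_nonneg k0]
    refine k1.trans ?_
    gcongr 6 * ε * (?_ / √P)
    linarith

lemma sq_div_pow_of_le {G K A lam : ℝ} (hlam : 0 < lam) (h : G ^ 2 / A ≤ K * (G / lam))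
    (hA : 0 < A) (hK : 0 ≤ K) : G ≤ K * A / lam := by
  rw [div_le_iff₀ hA] at h
  by_contra hc
  push Not at hc
  rw [div_lt_iff₀ hlam] at hc
  have e : K * (G / lam) * A = K * A * G / lam := by ring
  rw [e, le_div_iff₀ hlam] at h
  have hG : 0 ≤ K * A := by positivity
  by_cases hG0 : 0 < G
  · nlinarith
  · nlinarith

/-! ### The estimate in dimensions at least three -/

lemma vnorm_rpow {d : ℕ} (G : Lat d → ℝ) (x : Lat d) (q : ℝ) :
    vnorm (dgrad G x) ^ (2 * q) = gsq G x ^ q := by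
  have h : vnorm (dgrad G x) = √(gsq G x) := rfl
  rw [h, Real.rpow_mul (Real.sqrt_nonneg _), Real.rpow_two, Real.sq_sqrt (gsq_nonneg _ _)]

/-- Energy bound for the Green's function by its value at the pole. -/
lemma green_energy {d : ℕ} {lam T : ℝ} (hlam0 : 0 < lam) (hT : 0 < T)
    {a : Lat d → Fin d → Fin d → ℝ} (h : Ell lam a) {G : Lat d → ℝ} (hG2 : L2 G)
    (hG : ∀ φ, L2 φ → form T a G φ = φ 0) : ∑' x, gsq G x ≤ G 0 / lam := by
  have h1 := le_form_self (T := T) h hG2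
  rw [hG G hG2] at h1
  have h2 : 0 ≤ 1 / T * ∑' x, G x ^ 2 := mul_nonneg (by positivity) (tsum_nonneg fun _ => sq_nonneg _)
  rw [le_div_iff₀ hlam0]
  linarith

lemma rpow_le_mul_self {y M q : ℝ} (hy : 0 ≤ y) (hyM : y ≤ M) (hM : 1 ≤ M) (hq1 : 1 ≤ q)
    (hq2 : q ≤ 2) : y ^ q ≤ M * y := by
  have e : q = (q - 1) + 1 := by ring
  rw [e, Real.rpow_add_one' hy (by linarith)]
  gcongr
  calc y ^ (q - 1) ≤ M ^ (q - 1) := Real.rpow_le_rpow hy hyM (by linarith)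
    _ ≤ M ^ (1 : ℝ) := Real.rpow_le_rpow_of_exponent_le hM (by linarith)
    _ = M := Real.rpow_one M

set_option maxHeartbeats 1000000 in
/-- The weighted estimate in dimensions at least three. -/
theorem case_three_le {d : ℕ} (hd : 3 ≤ d) {lam : ℝ} (hlam0 : 0 < lam) (hlam1 : lam ≤ 1) :
    ∃ q0 : ℝ, 1 < q0 ∧ ∃ C : ℝ, 0 < C ∧ ∀ q : ℝ, 1 ≤ q → q ≤ q0 → ∀ T : ℝ, 0 < T →
      ∀ a : Lat d → Fin d → Fin d → ℝ, Ell lam a → ∀ G : Lat d → ℝ, L2 G →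
      (∀ φ, L2 φ → form T a G φ = φ 0) → ∀ s : Finset (Lat d),
        ∑ x ∈ s, vnorm (dgrad G x) ^ (2 * q) * (latnorm x + 1) ^ (2 * (d : ℝ) * (q - 1)) ≤ C := by
  have hd' : (3 : ℝ) ≤ d := by exact_mod_cast hd
  have hA := A0_ge d
  set A := A0 d with hAdef
  set ε : ℝ := lam / (12000 * d ^ 2) with hε
  have hε0 : 0 < ε := by positivity
  have hε1 : ε ≤ 1 := by
    rw [hε, div_le_one (by positivity)]; nlinarith
  set Mg : ℝ := 12 * d * A / lam with hMg
  have hMg0 : 0 < Mg := by have : 0 < A := by linarith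
                           positivity
  set Mf : ℝ := 1 + Mg / lam with hMf
  have hMf1 : 1 ≤ Mf := by rw [hMf]; have : 0 < Mg / lam := by positivity
                           linarith
  refine ⟨1 + 2 * ε / d, by have : 0 < 2 * ε / d := by positivity
                            linarith, Mf * (16 * (2 / lam * (A ^ 2 * Mg))), by positivity, ?_⟩
  intro q hq1 hq2 T hT a h G hG2 hG s
  have hP16 : ∀ x : Lat d, 16 ≤ Pw A x := fun x => by have := le_Pw A x; linarith
  have hPpos : ∀ x : Lat d, 0 < Pw A x := fun x => by have := hP16 x; linarith
  have hq22 : q ≤ 2 := by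
    have : 2 * ε / d ≤ 1 := by rw [div_le_one (by positivity)]; linarith
    linarith
  have hen := green_energy hlam0 hT h hG2 hG
  have hG0 : G 0 ≤ Mg := by
    have h1 := hardy hd hG2
    have h2 : G 0 ^ 2 / A ≤ ∑' x, G x ^ 2 / Pw A x := by
      have hs : Summable fun x => G x ^ 2 / Pw A x :=
        Summable.of_nonneg_of_le (fun x => div_nonneg (sq_nonneg _) (hPpos x).le)
          (fun x => div_le_self (sq_nonneg _) (by linarith [hP16 x])) hG2
      have := hs.le_tsum 0 fun x _ => div_nonneg (sq_nonneg _) (hPpos x).le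
      have e : Pw A (0 : Lat d) = A := by simp [Pw]
      rwa [e] at this
    refine sq_div_pow_of_le hlam0 (h2.trans (h1.trans ?_)) (by linarith) (by positivity)
    gcongr
  have hgsq : ∀ x, gsq G x ≤ Mf := by
    intro x
    have h1 := hG2.gsq.le_tsum x fun y _ => gsq_nonneg G y
    have h2 : G 0 / lam ≤ Mg / lam := by gcongr
    linarith
  -- truncation parameter adapted to the finite set `s`
  set κ : ℝ := 1 / (1 + ∑ x ∈ s, Pw A x) with hκ
  have hsum0 : 0 ≤ ∑ x ∈ s, Pw A x := Finset.sum_nonneg fun x _ => (hPpos x).le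
  have hκ0 : 0 < κ := by positivity
  have hκs : ∀ x ∈ s, κ * Pw A x ≤ 1 := by
    intro x hx
    have := Finset.single_le_sum (f := fun x => Pw A x) (fun y _ => (hPpos y).le) hx
    rw [hκ, one_div_mul_eq_div, div_le_one (by positivity)]
    linarith
  set g : Lat d → ℝ := fun x => (Pw A x / (1 + κ * Pw A x)) ^ ε with hg
  have hh0 : ∀ x, 0 < Pw A x / (1 + κ * Pw A x) := fun x => by
    have := hPpos x; positivity
  have hg0 : ∀ x, 0 < g x := fun x => Real.rpow_pos_of_pos (hh0 x) _
  have hgM : ∀ x, g x ≤ (1 / κ) ^ ε := by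
    intro x
    apply Real.rpow_le_rpow (hh0 x).le _ hε0.le
    have := hPpos x
    rw [div_le_div_iff₀ (by positivity) hκ0]
    linarith
  have hstep : ∀ x i, |g (x + unitv d i) - g x| ≤ 6 * ε * (g x / √(Pw A x)) := by
    intro x i
    refine trunc_step (hPpos x) (Pw_step_lower hA x i) hκ0 hε0.le hε1 ?_
    rw [Pw_add_unitv]
    have := abs_step_le_sqrt hA x i
    convert this using 2; ring
  have hX := weighted_energy hd hlam0 hlam1 hT h hG2 hG hg0 hgM (η := 6 * ε) (by positivity)
    (by rw [hε]; apply le_of_eq; field_simp; norm_num) hstep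
  have hg00 : g 0 ≤ A := by
    have e : Pw A (0 : Lat d) = A := by simp [Pw]
    have h1 : Pw A (0 : Lat d) / (1 + κ * Pw A (0 : Lat d)) ≤ A := by
      rw [e]; apply div_le_self (by linarith); nlinarith
    calc g 0 ≤ A ^ ε := Real.rpow_le_rpow (hh0 0).le h1 hε0.le
      _ ≤ A ^ (1 : ℝ) := Real.rpow_le_rpow_of_exponent_le (by linarith) hε1
      _ = A := Real.rpow_one A
  have hXle : ∑' x, g x ^ 2 * gsq G x ≤ 2 / lam * (A ^ 2 * Mg) := by
    have h1 : g 0 ^ 2 * G 0 ≤ A ^ 2 * Mg := by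
      calc g 0 ^ 2 * G 0 ≤ g 0 ^ 2 * Mg := by gcongr
        _ ≤ _ := by have := hg0 0; gcongr
    calc _ = 2 / lam * (lam / 2 * ∑' x, g x ^ 2 * gsq G x) := by field_simp
      _ ≤ _ := mul_le_mul_of_nonneg_left (hX.trans h1) (by positivity)
  have hsX : Summable fun x => g x ^ 2 * gsq G x := by
    refine Summable.of_nonneg_of_le (fun x => mul_nonneg (sq_nonneg _) (gsq_nonneg _ _)) (fun x => ?_)
      (hG2.gsq.mul_left (((1 / κ) ^ ε) ^ 2))
    have := gsq_nonneg G x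
    have := hg0 x
    have := hgM x
    gcongr
  have hterm : ∀ x ∈ s, vnorm (dgrad G x) ^ (2 * q) * (latnorm x + 1) ^ (2 * (d : ℝ) * (q - 1))
      ≤ Mf * (16 * (g x ^ 2 * gsq G x)) := by
    intro x hx
    rw [vnorm_rpow]
    have h1 := rpow_le_mul_self (gsq_nonneg G x) (hgsq x) hMf1 hq1 hq22
    have hL : 0 ≤ latnorm x := Real.sqrt_nonneg _
    have hL2 : latnorm x ^ 2 = ∑ i, (x i : ℝ) ^ 2 :=
      Real.sq_sqrt (Finset.sum_nonneg fun i _ => sq_nonneg _)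
    have h2 : (latnorm x + 1) ^ (2 : ℕ) ≤ 2 * Pw A x := by
      unfold Pw; rw [← hL2]; nlinarith [sq_nonneg (latnorm x - 1)]
    have h3 : (latnorm x + 1) ^ (2 * (d : ℝ) * (q - 1)) ≤ 16 * g x ^ 2 := by
      have hP := hP16 x
      have e1 : (latnorm x + 1) ^ (2 * (d : ℝ) * (q - 1))
          = ((latnorm x + 1) ^ (2 : ℕ)) ^ ((d : ℝ) * (q - 1)) := by
        rw [← Real.rpow_natCast, ← Real.rpow_mul (by positivity)]
        congr 1; push_cast; ring
      have e2 : (d : ℝ) * (q - 1) ≤ 2 * ε := by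
        have : q - 1 ≤ 2 * ε / d := by linarith
        rw [le_div_iff₀ (by positivity)] at this
        linarith
      have e3 : 2 * Pw A x ≤ 4 * (Pw A x / (1 + κ * Pw A x)) := by
        have := hκs x hx
        have := hPpos x
        rw [mul_div_assoc', le_div_iff₀ (by positivity)]
        nlinarith
      rw [e1]
      calc ((latnorm x + 1) ^ (2 : ℕ)) ^ ((d : ℝ) * (q - 1))
          ≤ (2 * Pw A x) ^ ((d : ℝ) * (q - 1)) :=
            Real.rpow_le_rpow (by positivity) h2 (mul_nonneg (by positivity) (by linarith))
        _ ≤ (2 * Pw A x) ^ (2 * ε) := Real.rpow_le_rpow_of_exponent_le (by linarith) e2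
        _ ≤ (4 * (Pw A x / (1 + κ * Pw A x))) ^ (2 * ε) :=
            Real.rpow_le_rpow (by linarith) e3 (by positivity)
        _ = 4 ^ (2 * ε) * g x ^ 2 := by
            rw [Real.mul_rpow (by norm_num) (hh0 x).le, mul_comm 2 ε, Real.rpow_mul (hh0 x).le,
              Real.rpow_two]
        _ ≤ 16 * g x ^ 2 := by
            gcongr
            calc (4 : ℝ) ^ (2 * ε) ≤ 4 ^ (2 : ℝ) :=
                  Real.rpow_le_rpow_of_exponent_le (by norm_num) (by linarith)
              _ = 16 := by norm_num
    calc _ ≤ Mf * gsq G x * (16 * g x ^ 2) := by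
          apply mul_le_mul h1 h3 (by positivity)
          exact mul_nonneg (by linarith) (gsq_nonneg _ _)
      _ = _ := by ring
  refine (Finset.sum_le_sum hterm).trans ?_
  rw [← Finset.mul_sum, ← Finset.mul_sum]
  gcongr
  exact (hsX.sum_le_tsum s fun x _ => mul_nonneg (sq_nonneg _) (gsq_nonneg _ _)).trans hXle

/-! ### Squares in the plane and the Sobolev-Poincaré inequality -/

/-- The supremum norm of a point of the planar lattice. -/
def nrm (x : Lat 2) : ℕ := max (x 0).natAbs (x 1).natAbs

/-- The square of radius `r` around `x`. -/
def Bx (x : Lat 2) (r : ℕ) : Finset (Lat 2) :=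
  Finset.Icc (fun i => x i - r) (fun i => x i + r)

lemma mem_Bx' {x y : Lat 2} {r : ℕ} : y ∈ Bx x r ↔
    (x 0 - r ≤ y 0 ∧ x 1 - r ≤ y 1) ∧ (y 0 ≤ x 0 + r ∧ y 1 ≤ x 1 + r) := by
  simp [Bx, Finset.mem_Icc, Pi.le_def, Fin.forall_fin_two]

lemma mem_Bx {x y : Lat 2} {r : ℕ} : y ∈ Bx x r ↔ nrm (y - x) ≤ r := by
  rw [mem_Bx', nrm]; simp only [Pi.sub_apply]; omega

lemma nrm_step (x : Lat 2) (i : Fin 2) :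
    nrm (x + unitv 2 i) ≤ nrm x + 1 ∧ nrm x ≤ nrm (x + unitv 2 i) + 1 := by
  fin_cases i <;> simp [nrm, unitv] <;> omega

lemma nrm_add_le (x y : Lat 2) : nrm (x + y) ≤ nrm x + nrm y := by
  simp only [nrm, Pi.add_apply]; omega

lemma nrm_neg (x : Lat 2) : nrm (-x) = nrm x := by
  simp [nrm]

lemma nrm_sub_comm (x y : Lat 2) : nrm (x - y) = nrm (y - x) := by
  rw [← nrm_neg, neg_sub]

lemma nrm_zero : nrm 0 = 0 := by simp [nrm]

lemma card_Bx (x : Lat 2) (r : ℕ) : (Bx x r).card = (2 * r + 1) ^ 2 := by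
  rw [Bx, Pi.card_Icc, Fin.prod_univ_two]
  simp only [Int.card_Icc]
  have h : ∀ z : ℤ, (z + r + 1 - (z - r)).toNat = 2 * r + 1 := fun z => by omega
  rw [h, h]; ring

lemma card_Bx_real (x : Lat 2) (r : ℕ) : ((Bx x r).card : ℝ) = (2 * r + 1) ^ 2 := by
  rw [card_Bx]; push_cast; ring

lemma self_mem_Bx (x : Lat 2) (r : ℕ) : x ∈ Bx x r := by
  rw [mem_Bx, sub_self, nrm_zero]; exact Nat.zero_le _

lemma Bx_mono (x : Lat 2) {r s : ℕ} (h : r ≤ s) : Bx x r ⊆ Bx x s := fun y hy => by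
  rw [mem_Bx] at *; omega

lemma Bx_zero (x : Lat 2) : Bx x 0 = {x} := by
  ext y; rw [mem_Bx', Finset.mem_singleton, funext_iff, Fin.forall_fin_two]; push_cast; omega

lemma sum_Bx (F : Lat 2 → ℝ) (x : Lat 2) (r : ℕ) :
    ∑ z ∈ Bx x r, F z
      = ∑ s ∈ Finset.Icc (x 0 - r) (x 0 + r), ∑ t ∈ Finset.Icc (x 1 - r) (x 1 + r), F ![s, t] := by
  rw [← Finset.sum_product']
  refine Finset.sum_bij' (fun z _ => (z 0, z 1)) (fun p _ => ![p.1, p.2]) ?_ ?_ ?_ ?_ ?_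
  · intro z hz
    rw [mem_Bx'] at hz
    simp only [Finset.mem_product, Finset.mem_Icc]; omega
  · intro p hp
    simp only [Finset.mem_product, Finset.mem_Icc] at hp
    rw [mem_Bx']; simp; omega
  · intro z _; ext i; fin_cases i <;> rfl
  · intro p _; rfl
  · intro z _; congr 1; ext i; fin_cases i <;> rfl

/-- One-dimensional oscillation bound by the total variation. -/
lemma osc_le_sum (f : ℤ → ℝ) {p q s s' : ℤ} (hs : s ∈ Finset.Icc p q) (hs' : s' ∈ Finset.Icc p q) :
    |f s - f s'| ≤ ∑ k ∈ Finset.Icc p q, |f (k + 1) - f k| := by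
  have key : ∀ n : ℕ, ∀ s : ℤ, p ≤ s → s + n ≤ q →
      |f (s + n) - f s| ≤ ∑ k ∈ Finset.Ico s (s + n), |f (k + 1) - f k| := by
    intro n
    induction n with
    | zero => intro s _ _; simp
    | succ n ih =>
      intro s h1 h2
      push_cast at h2
      have h3 := ih s h1 (by omega)
      have e : Finset.Ico s (s + ((n + 1 : ℕ) : ℤ)) = insert (s + (n : ℤ)) (Finset.Ico s (s + n)) := by
        ext k; simp only [Finset.mem_Ico, Finset.mem_insert]; push_cast; omega
      rw [e, Finset.sum_insert (by simp)]
      have e2 : f (s + ((n + 1 : ℕ) : ℤ)) - f s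
          = (f (s + n + 1) - f (s + n)) + (f (s + n) - f s) := by
        push_cast; rw [← add_assoc]; ring
      rw [e2]
      exact (abs_add_le _ _).trans (by linarith)
  rw [Finset.mem_Icc] at hs hs'
  have main : ∀ s s' : ℤ, p ≤ s → s ≤ s' → s' ≤ q →
      |f s' - f s| ≤ ∑ k ∈ Finset.Icc p q, |f (k + 1) - f k| := by
    intro s s' h1 h2 h3
    obtain ⟨n, rfl⟩ := Int.le.dest h2
    refine (key n s h1 h3).trans (Finset.sum_le_sum_of_subset_of_nonneg ?_ fun _ _ _ => abs_nonneg _)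
    intro k; simp only [Finset.mem_Ico, Finset.mem_Icc]; omega
  rcases le_total s s' with h | h
  · rw [abs_sub_comm]; exact main s s' hs.1 h hs'.2
  · exact main s' s hs'.1 h hs.2

/-- The average of `u` over a finite set. -/
def avg (Q : Finset (Lat 2)) (u : Lat 2 → ℝ) : ℝ := (∑ z ∈ Q, u z) / Q.card

lemma sq_sub_avg_le {Q : Finset (Lat 2)} (hQ : Q.Nonempty) (u : Lat 2 → ℝ) (c : ℝ) :
    (c - avg Q u) ^ 2 ≤ (∑ z ∈ Q, (c - u z) ^ 2) / Q.card := by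
  have hc : (0 : ℝ) < Q.card := by exact_mod_cast hQ.card_pos
  have e : c - avg Q u = (∑ z ∈ Q, (c - u z)) / Q.card := by
    rw [avg, Finset.sum_sub_distrib]; simp; field_simp
  rw [e, div_pow, div_le_div_iff₀ (by positivity) hc]
  have := sq_sum_le_card_mul_sum_sq (s := Q) (f := fun z => c - u z)
  nlinarith

lemma abs_dgrad_le (u : Lat 2 → ℝ) (z : Lat 2) (i : Fin 2) : |dgrad u z i| ≤ √(gsq u z) := by
  apply Real.abs_le_sqrt
  exact Finset.single_le_sum (f := fun j => dgrad u z j ^ 2) (fun _ _ => sq_nonneg _)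
    (Finset.mem_univ i)

lemma unitv_zero_add (s t : ℤ) : (![s, t] : Lat 2) + unitv 2 0 = ![s + 1, t] := by
  ext i; fin_cases i <;> simp [unitv]

lemma unitv_one_add (s t : ℤ) : (![s, t] : Lat 2) + unitv 2 1 = ![s, t + 1] := by
  ext i; fin_cases i <;> simp [unitv]

/-- The planar Sobolev-Poincaré inequality in double-sum form. -/
lemma double_sum_le (u : Lat 2 → ℝ) (x : Lat 2) (r : ℕ) :
    ∑ z ∈ Bx x r, ∑ z' ∈ Bx x r, (u z - u z') ^ 2
      ≤ (2 * r + 1) ^ 2 * (2 * ∑ z ∈ Bx x r, √(gsq u z)) ^ 2 := by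
  set I := Finset.Icc (x 0 - r) (x 0 + r) with hI
  set J := Finset.Icc (x 1 - r) (x 1 + r) with hJ
  have cI : (I.card : ℝ) = 2 * r + 1 := by
    rw [hI, Int.card_Icc]
    have : (x 0 + r + 1 - (x 0 - r)).toNat = 2 * r + 1 := by omega
    rw [this]; push_cast; ring
  have cJ : (J.card : ℝ) = 2 * r + 1 := by
    rw [hJ, Int.card_Icc]
    have : (x 1 + r + 1 - (x 1 - r)).toNat = 2 * r + 1 := by omega
    rw [this]; push_cast; ring
  set p : ℤ → ℝ := fun t => ∑ s ∈ I, |u ![s + 1, t] - u ![s, t]| with hp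
  set q : ℤ → ℝ := fun s => ∑ t ∈ J, |u ![s, t + 1] - u ![s, t]| with hq
  have hp0 : ∀ t, 0 ≤ p t := fun t => Finset.sum_nonneg fun _ _ => abs_nonneg _
  have hq0 : ∀ t, 0 ≤ q t := fun t => Finset.sum_nonneg fun _ _ => abs_nonneg _
  have hpt : ∀ s ∈ I, ∀ t ∈ J, ∀ s' ∈ I, ∀ t' ∈ J,
      (u ![s, t] - u ![s', t']) ^ 2 ≤ (p t + q s') * (q s + p t') := by
    intro s hs t ht s' hs' t' ht'
    have a1 := osc_le_sum (fun k => u ![k, t]) hs hs'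
    have a2 := osc_le_sum (fun k => u ![s', k]) ht ht'
    have a3 := osc_le_sum (fun k => u ![s, k]) ht ht'
    have a4 := osc_le_sum (fun k => u ![k, t']) hs hs'
    have b1 : |u ![s, t] - u ![s', t']| ≤ p t + q s' := by
      refine (abs_sub_le _ (u ![s', t]) _).trans (add_le_add a1 a2)
    have b2 : |u ![s, t] - u ![s', t']| ≤ q s + p t' := by
      refine (abs_sub_le _ (u ![s, t']) _).trans (add_le_add a3 a4)
    rw [← sq_abs, sq]
    exact mul_le_mul b1 b2 (abs_nonneg _) (add_nonneg (hp0 _) (hq0 _))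
  set S1 := ∑ t ∈ J, p t with hS1
  set S2 := ∑ s ∈ I, q s with hS2
  have h1 : S1 ≤ ∑ z ∈ Bx x r, √(gsq u z) := by
    rw [sum_Bx, ← hI, ← hJ, hS1, hp, Finset.sum_comm]
    refine Finset.sum_le_sum fun s _ => Finset.sum_le_sum fun t _ => ?_
    have := abs_dgrad_le u ![s, t] 0
    rwa [dgrad, unitv_zero_add] at this
  have h2 : S2 ≤ ∑ z ∈ Bx x r, √(gsq u z) := by
    rw [sum_Bx, ← hI, ← hJ, hS2, hq]
    refine Finset.sum_le_sum fun s _ => Finset.sum_le_sum fun t _ => ?_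
    have := abs_dgrad_le u ![s, t] 1
    rwa [dgrad, unitv_one_add] at this
  have hS10 : 0 ≤ S1 := Finset.sum_nonneg fun t _ => hp0 t
  have hS20 : 0 ≤ S2 := Finset.sum_nonneg fun t _ => hq0 t
  have key : ∑ z ∈ Bx x r, ∑ z' ∈ Bx x r, (u z - u z') ^ 2
      ≤ ∑ s ∈ I, ∑ t ∈ J, ∑ s' ∈ I, ∑ t' ∈ J, (p t + q s') * (q s + p t') := by
    simp only [sum_Bx, ← hI, ← hJ]
    refine Finset.sum_le_sum fun s hs => Finset.sum_le_sum fun t ht => Finset.sum_le_sum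
      fun s' hs' => Finset.sum_le_sum fun t' ht' => hpt s hs t ht s' hs' t' ht'
  have ev : ∑ s ∈ I, ∑ t ∈ J, ∑ s' ∈ I, ∑ t' ∈ J, (p t + q s') * (q s + p t')
      = (2 * r + 1) ^ 2 * (S1 + S2) ^ 2 := by
    have e1 : ∀ s t s', ∑ t' ∈ J, (p t + q s') * (q s + p t')
        = (p t + q s') * ((2 * r + 1) * q s + S1) := by
      intro s t s'
      rw [← Finset.mul_sum, Finset.sum_add_distrib]; simp [cJ, hS1]
    have e2 : ∀ s t, ∑ s' ∈ I, (p t + q s') * ((2 * r + 1) * q s + S1)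
        = ((2 * r + 1) * p t + S2) * ((2 * r + 1) * q s + S1) := by
      intro s t
      rw [← Finset.sum_mul, Finset.sum_add_distrib]; simp [cI, hS2]
    have e3 : ∀ s, ∑ t ∈ J, ((2 * r + 1) * p t + S2) * ((2 * r + 1) * q s + S1)
        = ((2 * r + 1) * S1 + (2 * r + 1) * S2) * ((2 * r + 1) * q s + S1) := by
      intro s
      rw [← Finset.sum_mul, Finset.sum_add_distrib, ← Finset.mul_sum]; simp [cJ, hS1]
    simp only [e1, e2, e3]
    rw [← Finset.mul_sum, Finset.sum_add_distrib, ← Finset.mul_sum]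
    simp only [Finset.sum_const, nsmul_eq_mul, cI]
    rw [← hS2]; ring
  rw [ev] at key
  refine key.trans ?_
  gcongr
  linarith

/-- The planar Sobolev-Poincaré inequality: the `ℓ²` oscillation is controlled by the `ℓ¹` norm
of the gradient. -/
lemma sobolev_poincare (u : Lat 2 → ℝ) (x : Lat 2) (r : ℕ) :
    ∑ z ∈ Bx x r, (u z - avg (Bx x r) u) ^ 2 ≤ 4 * (∑ z ∈ Bx x r, √(gsq u z)) ^ 2 := by
  have hne : (Bx x r).Nonempty := ⟨x, self_mem_Bx x r⟩
  have h1 := Finset.sum_le_sum fun z (_ : z ∈ Bx x r) =>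
    sq_sub_avg_le hne u (u z)
  rw [← Finset.sum_div] at h1
  refine h1.trans ?_
  rw [card_Bx_real, div_le_iff₀ (by positivity)]
  refine (double_sum_le u x r).trans (le_of_eq (by ring))

lemma sq_sum_sqrt_gsq_le (u : Lat 2 → ℝ) (Q : Finset (Lat 2)) :
    (∑ z ∈ Q, √(gsq u z)) ^ 2 ≤ Q.card * ∑ z ∈ Q, gsq u z := by
  have := sq_sum_le_card_mul_sum_sq (s := Q) (f := fun z => √(gsq u z))
  simpa [Real.sq_sqrt, gsq_nonneg] using this

/-- Averages over a square and a sizeable subset differ by at most the Dirichlet norm. -/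
lemma avg_diff (u : Lat 2 → ℝ) (x : Lat 2) (r : ℕ) {Q : Finset (Lat 2)} (hQ : Q.Nonempty)
    (hQB : Q ⊆ Bx x r) {k : ℝ} (hk : (2 * (r : ℝ) + 1) ^ 2 ≤ k * Q.card) :
    (avg (Bx x r) u - avg Q u) ^ 2 ≤ 4 * k * ∑ z ∈ Bx x r, gsq u z := by
  have hc : (0 : ℝ) < Q.card := by exact_mod_cast hQ.card_pos
  refine (sq_sub_avg_le hQ u _).trans ?_
  rw [div_le_iff₀ hc]
  have h1 : ∑ z ∈ Q, (avg (Bx x r) u - u z) ^ 2 ≤ ∑ z ∈ Bx x r, (u z - avg (Bx x r) u) ^ 2 := by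
    simp only [sub_sq_comm (avg (Bx x r) u)]
    exact Finset.sum_le_sum_of_subset_of_nonneg hQB fun _ _ _ => sq_nonneg _
  have h2 := sq_sum_sqrt_gsq_le u (Bx x r)
  rw [card_Bx_real] at h2
  have h3 : 0 ≤ ∑ z ∈ Bx x r, gsq u z := Finset.sum_nonneg fun z _ => gsq_nonneg u z
  have h4 := mul_le_mul_of_nonneg_right hk h3
  have := sobolev_poincare u x r
  nlinarith

/-! ### Caccioppoli's inequality and the reverse Hölder inequality -/

/-- `v` solves the homogeneous equation in `U`, in the weak sense. -/
def Harm (T : ℝ) (a : Lat 2 → Fin 2 → Fin 2 → ℝ) (v : Lat 2 → ℝ) (U : Set (Lat 2)) : Prop :=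
  ∀ φ, L2 φ → (∀ y, y ∉ U → φ y = 0) → form T a v φ = 0

lemma Harm.mono {T : ℝ} {a : Lat 2 → Fin 2 → Fin 2 → ℝ} {v : Lat 2 → ℝ} {U V : Set (Lat 2)}
    (h : Harm T a v U) (hVU : V ⊆ U) : Harm T a v V :=
  fun φ h1 h2 => h φ h1 fun y hy => h2 y fun hV => hy (hVU hV)

/-- Cutoff function: one on the square of radius `r`, zero from distance `2 r` on. -/
def cut (x : Lat 2) (r : ℕ) (y : Lat 2) : ℝ :=
  max (min ((2 * r - nrm (y - x)) / r) 1) 0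

lemma cut_nonneg (x : Lat 2) (r : ℕ) (y : Lat 2) : 0 ≤ cut x r y := le_max_right _ _

lemma cut_le_one (x : Lat 2) (r : ℕ) (y : Lat 2) : cut x r y ≤ 1 :=
  max_le (min_le_right _ _) zero_le_one

lemma cut_eq_one {x : Lat 2} {r : ℕ} (hr : 1 ≤ r) {y : Lat 2} (h : y ∈ Bx x r) :
    cut x r y = 1 := by
  rw [mem_Bx] at h
  have h' : (nrm (y - x) : ℝ) ≤ r := by exact_mod_cast h
  have hr' : (0 : ℝ) < r := by exact_mod_cast hr
  have : (1 : ℝ) ≤ (2 * r - nrm (y - x)) / r := by rw [le_div_iff₀ hr']; linarith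
  rw [cut, min_eq_right this]; norm_num

lemma cut_eq_zero {x : Lat 2} {r : ℕ} {y : Lat 2} (h : 2 * r ≤ nrm (y - x)) :
    cut x r y = 0 := by
  have h' : 2 * (r : ℝ) ≤ nrm (y - x) := by exact_mod_cast h
  rw [cut]
  apply max_eq_right
  refine (min_le_left _ _).trans (div_nonpos_of_nonpos_of_nonneg (by linarith) (by positivity))

lemma abs_clamp_sub_le (p q : ℝ) : |max (min p 1) 0 - max (min q 1) 0| ≤ |p - q| :=
  (abs_max_sub_max_le_abs _ _ _).trans (abs_inf_sub_inf_le_abs p q 1)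

lemma abs_nrm_step (x y : Lat 2) (i : Fin 2) :
    |(nrm (y + unitv 2 i - x) : ℝ) - nrm (y - x)| ≤ 1 := by
  have h := nrm_step (y - x) i
  have e : y - x + unitv 2 i = y + unitv 2 i - x := by abel
  rw [e] at h
  have h1 : (nrm (y + unitv 2 i - x) : ℝ) ≤ nrm (y - x) + 1 := by exact_mod_cast h.1
  have h2 : (nrm (y - x) : ℝ) ≤ nrm (y + unitv 2 i - x) + 1 := by exact_mod_cast h.2
  rw [abs_le]; constructor <;> linarith

lemma abs_cut_step (x : Lat 2) {r : ℕ} (hr : 1 ≤ r) (y : Lat 2) (i : Fin 2) :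
    |cut x r (y + unitv 2 i) - cut x r y| ≤ 1 / r := by
  have hr' : (0 : ℝ) < r := by exact_mod_cast hr
  refine (abs_clamp_sub_le _ _).trans ?_
  rw [← sub_div, abs_div, abs_of_pos hr']
  gcongr
  have := abs_nrm_step x y i
  rw [abs_sub_comm] at this
  have e : ((2 * r : ℝ) - nrm (y + unitv 2 i - x)) - (2 * r - nrm (y - x))
      = nrm (y - x) - nrm (y + unitv 2 i - x) := by ring
  rw [e]; exact this

/-- The pointwise estimate behind Caccioppoli's inequality, for the test function `η² (v - c)` with
a cutoff `η` that varies by at most `ρ` per step. -/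
lemma cacc_pointwise {lam : ℝ} (hlam0 : 0 < lam) (hlam1 : lam ≤ 1)
    {a : Lat 2 → Fin 2 → Fin 2 → ℝ} (h : Ell lam a) {v w η : Lat 2 → ℝ} {c ρ : ℝ}
    (hw : ∀ y, w y = v y - c) (y : Lat 2) (hη0 : 0 ≤ η y) (hρ : 0 ≤ ρ)
    (hstep : ∀ i, |η (y + unitv 2 i) - η y| ≤ ρ) :
    lam / 2 * (η y ^ 2 * gsq v y)
      - 4 / lam * ρ ^ 2 * (w y ^ 2 + ∑ i, w (y + unitv 2 i) ^ 2)
      ≤ bil (a y) (dgrad (fun z => η z ^ 2 * w z) y) (dgrad v y) := by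
  set ζ : Fin 2 → ℝ := fun i => w (y + unitv 2 i) * (η (y + unitv 2 i) ^ 2 - η y ^ 2) with hζ
  have e1 : dgrad (fun z => η z ^ 2 * w z) y = fun i => η y ^ 2 * dgrad v y i + ζ i := by
    funext i; simp only [dgrad, hζ, hw]; ring
  rw [e1, bil_add_left, bil_smul_left]
  have h1 := mul_le_mul_of_nonneg_left (h.1 y (dgrad v y)) (sq_nonneg (η y))
  have h2 := h.2 y ζ (dgrad v y)
  set ω := √(∑ i, w (y + unitv 2 i) ^ 2) with hω
  have hω2 : ω ^ 2 = ∑ i, w (y + unitv 2 i) ^ 2 :=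
    Real.sq_sqrt (Finset.sum_nonneg fun i _ => sq_nonneg _)
  have hω0 : 0 ≤ ω := Real.sqrt_nonneg _
  set f := √(gsq v y) with hf
  have hf0 : 0 ≤ f := Real.sqrt_nonneg _
  have hf2 : f ^ 2 = gsq v y := Real.sq_sqrt (gsq_nonneg v y)
  have h3 : √(∑ i, ζ i ^ 2) ≤ ρ * (2 * η y + ρ) * ω := by
    have : ∑ i, ζ i ^ 2 ≤ (ρ * (2 * η y + ρ)) ^ 2 * ∑ i, w (y + unitv 2 i) ^ 2 := by
      rw [Finset.mul_sum]
      refine Finset.sum_le_sum fun i _ => ?_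
      have k := hstep i
      have k' := abs_le.1 k
      have k1 : |η (y + unitv 2 i) ^ 2 - η y ^ 2| ≤ ρ * (2 * η y + ρ) := by
        have : η (y + unitv 2 i) ^ 2 - η y ^ 2
            = (η (y + unitv 2 i) - η y) * (2 * η y + (η (y + unitv 2 i) - η y)) := by ring
        rw [this, abs_mul]
        apply mul_le_mul k _ (abs_nonneg _) hρ
        rw [abs_le]; constructor <;> linarith
      have k2 := sq_le_sq' (abs_le.1 k1).1 (abs_le.1 k1).2
      simp only [hζ]
      rw [mul_pow, mul_comm]
      gcongr
    calc √(∑ i, ζ i ^ 2) ≤ √((ρ * (2 * η y + ρ)) ^ 2 * ∑ i, w (y + unitv 2 i) ^ 2) :=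
          Real.sqrt_le_sqrt this
      _ = _ := by rw [Real.sqrt_mul (sq_nonneg _), Real.sqrt_sq (by positivity)]
  have h4 : f ^ 2 ≤ 2 * ω ^ 2 + 4 * w y ^ 2 := by
    rw [hf2, hω2, gsq, Fin.sum_univ_two, Fin.sum_univ_two]
    have : ∀ i, dgrad v y i = w (y + unitv 2 i) - w y := fun i => by simp only [dgrad, hw]; ring
    rw [this, this]
    nlinarith [sq_nonneg (w (y + unitv 2 0) + w y), sq_nonneg (w (y + unitv 2 1) + w y)]
  have h5 : √(∑ i, ζ i ^ 2) * √(∑ i, dgrad v y i ^ 2) ≤ ρ * (2 * η y + ρ) * ω * f :=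
    mul_le_mul_of_nonneg_right h3 hf0
  have h6 : ρ * (2 * η y) * ω * f ≤ lam / 2 * (η y ^ 2 * f ^ 2) + 2 / lam * ρ ^ 2 * ω ^ 2 := by
    have : 0 ≤ 1 / (2 * lam) * (lam * (η y * f) - 2 * (ρ * ω)) ^ 2 := by positivity
    have e : 1 / (2 * lam) * (lam * (η y * f) - 2 * (ρ * ω)) ^ 2
        = lam / 2 * (η y ^ 2 * f ^ 2) + 2 / lam * ρ ^ 2 * ω ^ 2 - ρ * (2 * η y) * ω * f := by
      field_simp; ring
    linarith
  have h7 : ρ * ρ * ω * f ≤ ρ ^ 2 * (3 / 2 * ω ^ 2 + 2 * w y ^ 2) := by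
    have : ω * f ≤ 3 / 2 * ω ^ 2 + 2 * w y ^ 2 := by nlinarith [sq_nonneg (ω - f)]
    have := mul_le_mul_of_nonneg_left this (sq_nonneg ρ)
    nlinarith
  have h8 : ρ ^ 2 * (3 / 2 * ω ^ 2 + 2 * w y ^ 2) + 2 / lam * ρ ^ 2 * ω ^ 2
      ≤ 4 / lam * ρ ^ 2 * (w y ^ 2 + ω ^ 2) := by
    have k : 1 ≤ 1 / lam := by rw [le_div_iff₀ hlam0]; linarith
    have e2 : 2 / lam = 2 * (1 / lam) := by ring
    have e4 : 4 / lam = 4 * (1 / lam) := by ring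
    rw [e2, e4]
    have p1 : 0 ≤ ρ ^ 2 * ω ^ 2 := by positivity
    have p2 : 0 ≤ ρ ^ 2 * w y ^ 2 := by positivity
    nlinarith [mul_le_mul_of_nonneg_right k p1, mul_le_mul_of_nonneg_right k p2]
  have h9 := (abs_le.1 h2).1
  have e7 : η y ^ 2 * (lam * ∑ i, dgrad v y i ^ 2) = lam * (η y ^ 2 * f ^ 2) := by
    rw [hf2]; unfold gsq; ring
  rw [e7] at h1
  rw [← hω2, ← hf2]
  linarith

lemma sum_W_le (w : Lat 2 → ℝ) (x : Lat 2) (R : ℕ) :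
    ∑ y ∈ Bx x R, (w y ^ 2 + ∑ i, w (y + unitv 2 i) ^ 2) ≤ 3 * ∑ y ∈ Bx x (R + 1), w y ^ 2 := by
  have h0 : ∑ y ∈ Bx x R, w y ^ 2 ≤ ∑ y ∈ Bx x (R + 1), w y ^ 2 :=
    Finset.sum_le_sum_of_subset_of_nonneg (Bx_mono x (by omega)) fun _ _ _ => sq_nonneg _
  have h1 : ∀ i, ∑ y ∈ Bx x R, w (y + unitv 2 i) ^ 2 ≤ ∑ y ∈ Bx x (R + 1), w y ^ 2 := by
    intro i
    have hm := Finset.sum_map (Bx x R) (addRightEmbedding (unitv 2 i)) (fun y => w y ^ 2)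
    simp only [addRightEmbedding_apply] at hm
    rw [← hm]
    refine Finset.sum_le_sum_of_subset_of_nonneg ?_ fun _ _ _ => sq_nonneg _
    intro y hy
    obtain ⟨z, hz, rfl⟩ := Finset.mem_map.1 hy
    rw [mem_Bx] at hz ⊢
    have := (nrm_step (z - x) i).1
    have e : addRightEmbedding (unitv 2 i) z - x = z - x + unitv 2 i := by
      simp [addRightEmbedding]; abel
    rw [e]; omega
  rw [Finset.sum_add_distrib, Finset.sum_comm, Fin.sum_univ_two]
  linarith [h1 0, h1 1]

/-- Caccioppoli's inequality. The sign condition lets the zeroth-order term be dropped. -/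
lemma caccioppoli {lam T : ℝ} (hlam0 : 0 < lam) (hlam1 : lam ≤ 1) (hT : 0 < T)
    {a : Lat 2 → Fin 2 → Fin 2 → ℝ} (h : Ell lam a) {v : Lat 2 → ℝ} {x : Lat 2} {r : ℕ}
    (hr : 1 ≤ r) (hv : Harm T a v {y | nrm (y - x) < 2 * r}) (c : ℝ)
    (hc : 0 ≤ ∑ y ∈ Bx x (2 * r), v y * (cut x r y ^ 2 * (v y - c))) :
    ∑ y ∈ Bx x r, gsq v y ≤ 24 / lam ^ 2 / r ^ 2 * ∑ y ∈ Bx x (2 * r + 1), (v y - c) ^ 2 := by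
  have hr' : (0 : ℝ) < r := by exact_mod_cast hr
  set φ : Lat 2 → ℝ := fun z => cut x r z ^ 2 * (v z - c) with hφ
  have hφ0 : ∀ y, 2 * r ≤ nrm (y - x) → φ y = 0 := fun y hy => by
    simp only [hφ]; rw [cut_eq_zero hy]; ring
  have hφ2 : L2 φ := L2.of_support (Bx x (2 * r)) fun y hy => by
    rw [mem_Bx] at hy; exact hφ0 y (by omega)
  have htest := hv φ hφ2 fun y hy => hφ0 y (by simpa using hy)
  unfold form at htest
  rw [tsum_eq_sum (s := Bx x (2 * r)) (fun y hy => by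
    rw [mem_Bx] at hy; rw [hφ0 y (by omega), mul_zero])] at htest
  rw [tsum_eq_sum (s := Bx x (2 * r)) (fun y hy => by
    rw [mem_Bx] at hy
    have : dgrad φ y = fun i => 0 * dgrad φ y i := by
      funext i
      have e : y - x + unitv 2 i = y + unitv 2 i - x := by abel
      have := (nrm_step (y - x) i).2
      rw [e] at this
      simp only [dgrad]
      rw [hφ0 y (by omega), hφ0 _ (by omega)]; ring
    rw [this, bil_smul_left, zero_mul])] at htest
  have hpt := Finset.sum_le_sum fun y (_ : y ∈ Bx x (2 * r)) =>
    cacc_pointwise hlam0 hlam1 h (v := v) (w := fun z => v z - c) (η := cut x r) (c := c)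
      (ρ := 1 / r) (fun _ => rfl) y (cut_nonneg x r y) (by positivity)
      (fun i => abs_cut_step x hr y i)
  rw [Finset.sum_sub_distrib, ← Finset.mul_sum, ← Finset.mul_sum] at hpt
  have hW := sum_W_le (fun z => v z - c) x (2 * r)
  have hin : ∑ y ∈ Bx x r, gsq v y ≤ ∑ y ∈ Bx x (2 * r), cut x r y ^ 2 * gsq v y := by
    refine le_trans (le_of_eq (Finset.sum_congr rfl fun y hy => ?_))
      (Finset.sum_le_sum_of_subset_of_nonneg (Bx_mono x (by omega)) fun y _ _ =>
        mul_nonneg (sq_nonneg _) (gsq_nonneg v y))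
    rw [cut_eq_one hr hy]; ring
  have hmass : 0 ≤ 1 / T * ∑ y ∈ Bx x (2 * r), v y * φ y := mul_nonneg (by positivity) hc
  set X := ∑ y ∈ Bx x r, gsq v y
  set Y := ∑ y ∈ Bx x (2 * r + 1), (v y - c) ^ 2
  have h1 : lam / 2 * X ≤ 4 / lam * (1 / r) ^ 2 * (3 * Y) := by
    have k1 := mul_le_mul_of_nonneg_left hin (by positivity : 0 ≤ lam / 2)
    have k2 := mul_le_mul_of_nonneg_left hW (by positivity : 0 ≤ 4 / lam * (1 / (r : ℝ)) ^ 2)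
    linarith
  have e : 24 / lam ^ 2 / r ^ 2 * Y = 2 / lam * (4 / lam * (1 / r) ^ 2 * (3 * Y)) := by
    field_simp; ring
  have e' : X = 2 / lam * (lam / 2 * X) := by field_simp
  rw [e, e']
  exact mul_le_mul_of_nonneg_left h1 (by positivity)

/-- The constant of the reverse Hölder inequality. -/
def Arh (lam : ℝ) : ℝ := 17280 / lam ^ 2

lemma one_le_Arh {lam : ℝ} (hlam0 : 0 < lam) (hlam1 : lam ≤ 1) : 1 ≤ Arh lam := by
  rw [Arh, le_div_iff₀ (by positivity)]; nlinarith

/-- Reverse Hölder inequality: Caccioppoli's inequality about the weighted mean, followed by the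
Sobolev-Poincaré inequality. -/
lemma reverse_holder {lam T : ℝ} (hlam0 : 0 < lam) (hlam1 : lam ≤ 1) (hT : 0 < T)
    {a : Lat 2 → Fin 2 → Fin 2 → ℝ} (h : Ell lam a) {v : Lat 2 → ℝ} {x : Lat 2} {r : ℕ}
    (hr : 1 ≤ r) (hv : Harm T a v {y | nrm (y - x) < 2 * r}) :
    (2 * (r : ℝ) + 1) ^ 2 * ∑ y ∈ Bx x r, gsq v y
      ≤ Arh lam * (∑ y ∈ Bx x (3 * r), √(gsq v y)) ^ 2 := by
  have hr' : (1 : ℝ) ≤ r := by exact_mod_cast hr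
  set η := cut x r with hη
  set m := avg (Bx x (3 * r)) v with hm
  set N := ∑ y ∈ Bx x (2 * r), η y ^ 2 with hN
  have hNlow : (2 * (r : ℝ) + 1) ^ 2 ≤ N := by
    rw [← card_Bx_real x r, hN]
    have : ((Bx x r).card : ℝ) = ∑ y ∈ Bx x r, η y ^ 2 := by
      rw [Finset.sum_congr rfl fun y hy => by rw [hη, cut_eq_one hr hy]]; simp
    rw [this]
    exact Finset.sum_le_sum_of_subset_of_nonneg (Bx_mono x (by omega)) fun _ _ _ => sq_nonneg _
  have hN0 : 0 < N := lt_of_lt_of_le (by positivity) hNlow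
  set c := (∑ y ∈ Bx x (2 * r), η y ^ 2 * v y) / N with hc
  have hzero : ∑ y ∈ Bx x (2 * r), η y ^ 2 * (v y - c) = 0 := by
    simp only [mul_sub, Finset.sum_sub_distrib, ← Finset.sum_mul]
    rw [← hN, hc]; field_simp; ring
  have hpos : 0 ≤ ∑ y ∈ Bx x (2 * r), v y * (η y ^ 2 * (v y - c)) := by
    have : ∑ y ∈ Bx x (2 * r), v y * (η y ^ 2 * (v y - c))
        = ∑ y ∈ Bx x (2 * r), (η y * (v y - c)) ^ 2
          + c * ∑ y ∈ Bx x (2 * r), η y ^ 2 * (v y - c) := by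
      rw [Finset.mul_sum, ← Finset.sum_add_distrib]
      exact Finset.sum_congr rfl fun y _ => by ring
    rw [this, hzero, mul_zero, add_zero]
    exact Finset.sum_nonneg fun _ _ => sq_nonneg _
  have h1 := caccioppoli hlam0 hlam1 hT h hr hv c hpos
  set V := ∑ y ∈ Bx x (3 * r), (v y - m) ^ 2 with hV
  have hcm : (2 * (r : ℝ) + 1) ^ 2 * (m - c) ^ 2 ≤ V := by
    have e : N * (m - c) = ∑ y ∈ Bx x (2 * r), η y * (η y * (m - v y)) := by
      have : ∀ y, η y * (η y * (m - v y)) = m * η y ^ 2 - η y ^ 2 * v y := fun y => by ring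
      simp only [this, Finset.sum_sub_distrib, ← Finset.mul_sum]
      rw [← hN, hc]; field_simp
    have k1 := Finset.sum_mul_sq_le_sq_mul_sq (Bx x (2 * r)) η (fun y => η y * (m - v y))
    rw [← e, ← hN] at k1
    have k2 : ∑ y ∈ Bx x (2 * r), (η y * (m - v y)) ^ 2 ≤ V := by
      refine le_trans (Finset.sum_le_sum fun y _ => ?_)
        (Finset.sum_le_sum_of_subset_of_nonneg (Bx_mono x (by omega : 2 * r ≤ 3 * r))
          fun _ _ _ => sq_nonneg _)
      have p0 := cut_nonneg x r y
      have p1 := cut_le_one x r y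
      rw [mul_pow, ← sub_sq_comm]
      exact mul_le_of_le_one_left (sq_nonneg _) (pow_le_one₀ p0 p1)
    have k3 : N * (N * (m - c) ^ 2) ≤ N * V := by nlinarith
    have k4 := le_of_mul_le_mul_left k3 hN0
    nlinarith [sq_nonneg (m - c)]
  have h2 : ∑ y ∈ Bx x (2 * r + 1), (v y - c) ^ 2 ≤ 20 * V := by
    have k1 : ∑ y ∈ Bx x (2 * r + 1), (v y - c) ^ 2 ≤ ∑ y ∈ Bx x (3 * r), (v y - c) ^ 2 :=
      Finset.sum_le_sum_of_subset_of_nonneg (Bx_mono x (by omega)) fun _ _ _ => sq_nonneg _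
    have k2 : ∑ y ∈ Bx x (3 * r), (v y - c) ^ 2
        ≤ ∑ y ∈ Bx x (3 * r), (2 * (v y - m) ^ 2 + 2 * (m - c) ^ 2) := by
      refine Finset.sum_le_sum fun y _ => ?_
      nlinarith [sq_nonneg ((v y - m) - (m - c))]
    rw [Finset.sum_add_distrib, ← Finset.mul_sum, Finset.sum_const, nsmul_eq_mul,
      card_Bx_real] at k2
    push_cast at k2
    have k3 : (2 * (3 * (r : ℝ)) + 1) ^ 2 ≤ 9 * (2 * r + 1) ^ 2 := by nlinarith
    nlinarith [mul_le_mul_of_nonneg_right k3 (sq_nonneg (m - c))]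
  have h3 := sobolev_poincare v x (3 * r)
  have k9 : (2 * (r : ℝ) + 1) ^ 2 ≤ 9 * r ^ 2 := by nlinarith
  set X := ∑ y ∈ Bx x r, gsq v y
  set Z := ∑ y ∈ Bx x (3 * r), √(gsq v y)
  have hX0 : 0 ≤ X := Finset.sum_nonneg fun z _ => gsq_nonneg v z
  calc (2 * (r : ℝ) + 1) ^ 2 * X ≤ 9 * r ^ 2 * X := by gcongr
    _ ≤ 9 * r ^ 2 * (24 / lam ^ 2 / r ^ 2 * (20 * (4 * Z ^ 2))) := by
        gcongr
        refine h1.trans ?_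
        gcongr
        exact h2.trans (by linarith)
    _ = Arh lam * Z ^ 2 := by rw [Arh]; field_simp; ring

/-! ### Gehring's lemma with a variable scale -/

/-- The hypotheses of Gehring's lemma: `f` satisfies a reverse Hölder inequality at scales below
`ρ x`, the weight `φ` is almost constant at these scales, and `E` bounds the weighted mean of
`f ^ 2` at scale `ρ x`. -/
structure GehringData (B : ℝ) (f φ : Lat 2 → ℝ) (ρ : Lat 2 → ℕ) (E : ℝ) : Prop where
  f_nonneg : ∀ x, 0 ≤ f x
  summable : Summable fun x => f x ^ 2
  φ_pos : ∀ x, 0 < φ x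
  E_pos : 0 < E
  rev : ∀ x (r : ℕ), 1 ≤ r → 9 * r + 1 ≤ ρ x →
    (2 * (r : ℝ) + 1) ^ 2 * ∑ y ∈ Bx x r, f y ^ 2 ≤ B ^ 2 * (∑ y ∈ Bx x (3 * r), f y) ^ 2
  slow : ∀ x, ∀ y ∈ Bx x (ρ x), φ x ≤ 2 * φ y ∧ φ y ≤ 2 * φ x
  mean : ∀ x, φ x ^ 2 * ∑ y ∈ Bx x (ρ x), f y ^ 2 ≤ E * (2 * (ρ x : ℝ) + 1) ^ 2

/-- Stopping-time argument at a single point: at the largest scale where the mean exceeds the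
level `t`, the part of `f` above the level `θ t` controls the energy on an enlarged square. -/
lemma GehringData.stopping {B : ℝ} (hB : 1 ≤ B) {f φ : Lat 2 → ℝ} {ρ : Lat 2 → ℕ} {E : ℝ}
    (H : GehringData B f φ ρ E) {t : ℝ} (ht : 0 < t) (htE : 81 * E ≤ t ^ 2) {x : Lat 2}
    (hx : t < f x * φ x) :
    ∃ r : ℕ, ∑ y ∈ Bx x (9 * r), f y ^ 2
      ≤ 324 * B * t * ∑ y ∈ Bx x (3 * r), if 1 / (36 * B) * t < f y * φ y then f y / φ y else 0 := by
  classical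
  have hB0 : 0 < B := by linarith
  have hφx := H.φ_pos x
  set P : ℕ → Prop := fun r =>
    t ^ 2 * (2 * (r : ℝ) + 1) ^ 2 < φ x ^ 2 * ∑ y ∈ Bx x r, f y ^ 2 with hP
  have hP0 : P 0 := by
    simp only [hP, Bx_zero, Finset.sum_singleton]
    have : t ^ 2 < (f x * φ x) ^ 2 := pow_lt_pow_left₀ hx ht.le (by norm_num)
    rw [mul_pow] at this; push_cast; linarith
  set r := Nat.findGreatest P (ρ x) with hr
  have hPr : P r := Nat.findGreatest_spec (P := P) (Nat.zero_le _) hP0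
  have hmono : ∀ {p q : ℕ}, p ≤ q → ∑ y ∈ Bx x p, f y ^ 2 ≤ ∑ y ∈ Bx x q, f y ^ 2 :=
    fun h => Finset.sum_le_sum_of_subset_of_nonneg (Bx_mono x h) fun _ _ _ => sq_nonneg _
  have h9 : 9 * r + 1 ≤ ρ x := by
    by_contra hcon
    have hrρ : r ≤ ρ x := Nat.findGreatest_le _
    have h1 : (ρ x : ℝ) ≤ 9 * r := by exact_mod_cast (by omega : ρ x ≤ 9 * r)
    have h2 := H.mean x
    have h3 : φ x ^ 2 * ∑ y ∈ Bx x r, f y ^ 2 ≤ φ x ^ 2 * ∑ y ∈ Bx x (ρ x), f y ^ 2 :=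
      mul_le_mul_of_nonneg_left (hmono hrρ) (sq_nonneg _)
    have h4 : (2 * (ρ x : ℝ) + 1) ^ 2 ≤ 81 * (2 * r + 1) ^ 2 := by
      have : (2 * (ρ x : ℝ) + 1) ≤ 9 * (2 * r + 1) := by linarith
      calc _ ≤ (9 * (2 * (r : ℝ) + 1)) ^ 2 := pow_le_pow_left₀ (by positivity) this 2
        _ = _ := by ring
    have h5 := mul_le_mul_of_nonneg_left h4 H.E_pos.le
    have h6 := mul_le_mul_of_nonneg_right htE (sq_nonneg (2 * (r : ℝ) + 1))
    have := hPr
    simp only [hP] at this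
    linarith
  have hfail : φ x ^ 2 * ∑ y ∈ Bx x (9 * r), f y ^ 2 ≤ 81 * t ^ 2 * (2 * r + 1) ^ 2 := by
    have h1 : ¬ P (9 * r + 1) := Nat.findGreatest_is_greatest (by omega) h9
    simp only [hP, not_lt] at h1
    have h2 : φ x ^ 2 * ∑ y ∈ Bx x (9 * r), f y ^ 2 ≤ φ x ^ 2 * ∑ y ∈ Bx x (9 * r + 1), f y ^ 2 :=
      mul_le_mul_of_nonneg_left (hmono (by omega)) (sq_nonneg _)
    refine h2.trans (h1.trans ?_)
    push_cast
    have hr0 : (0 : ℝ) ≤ r := by positivity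
    have : (2 * (9 * (r : ℝ) + 1) + 1) ^ 2 ≤ 81 * (2 * r + 1) ^ 2 := by nlinarith
    nlinarith [mul_le_mul_of_nonneg_left this (sq_nonneg t)]
  have hS0 : 0 ≤ ∑ y ∈ Bx x (3 * r), f y := Finset.sum_nonneg fun y _ => H.f_nonneg y
  have hrev : (2 * (r : ℝ) + 1) ^ 2 * ∑ y ∈ Bx x r, f y ^ 2
      ≤ B ^ 2 * (∑ y ∈ Bx x (3 * r), f y) ^ 2 := by
    rcases Nat.eq_zero_or_pos r with h0 | h0
    · rw [h0]
      simp only [mul_zero, Bx_zero, Finset.sum_singleton]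
      push_cast
      have hB2 : 1 ≤ B ^ 2 := one_le_pow₀ hB
      nlinarith [mul_le_mul_of_nonneg_right hB2 (sq_nonneg (f x))]
    · exact H.rev x r h0 h9
  have hkey : t * (2 * r + 1) ^ 2 ≤ B * φ x * ∑ y ∈ Bx x (3 * r), f y := by
    refine le_of_sq_le_sq ?_ (by positivity)
    have h1 := mul_le_mul_of_nonneg_left hrev (sq_nonneg (φ x))
    have h2 := mul_le_mul_of_nonneg_left (le_of_lt hPr) (sq_nonneg (2 * (r : ℝ) + 1))
    nlinarith
  set g : Lat 2 → ℝ := fun y => if 1 / (36 * B) * t < f y * φ y then f y / φ y else 0 with hg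
  refine ⟨r, ?_⟩
  have hpt : ∀ y ∈ Bx x (3 * r), f y ≤ 1 / (18 * B) * t / φ x + 2 * φ x * g y := by
    intro y hy
    have hs := H.slow x y (Bx_mono x (by omega) hy)
    have hφy := H.φ_pos y
    simp only [hg]
    split_ifs with hc
    · have : f y ≤ 2 * φ x * (f y / φ y) := by
        rw [mul_div_assoc', le_div_iff₀ hφy]
        nlinarith [H.f_nonneg y]
      have : 0 ≤ 1 / (18 * B) * t / φ x := by positivity
      linarith
    · rw [not_lt] at hc
      rw [mul_zero, add_zero, le_div_iff₀ hφx]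
      have e : 1 / (18 * B) * t = 2 * (1 / (36 * B) * t) := by field_simp; norm_num
      rw [e]
      nlinarith [H.f_nonneg y]
  have hsum := Finset.sum_le_sum hpt
  rw [Finset.sum_add_distrib, Finset.sum_const, nsmul_eq_mul, card_Bx_real, ← Finset.mul_sum]
    at hsum
  set Γ := ∑ y ∈ Bx x (3 * r), g y with hΓ
  set Sf := ∑ y ∈ Bx x (3 * r), f y
  push_cast at hsum
  have hr0 : (0 : ℝ) ≤ r := by positivity
  have hcard : (2 * (3 * (r : ℝ)) + 1) ^ 2 ≤ 9 * (2 * r + 1) ^ 2 := by nlinarith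
  have h1 : B * φ x * Sf ≤ t * (2 * r + 1) ^ 2 / 2 + 2 * B * φ x ^ 2 * Γ := by
    have k1 := mul_le_mul_of_nonneg_left hsum (by positivity : 0 ≤ B * φ x)
    have k2 := mul_le_mul_of_nonneg_right hcard (by positivity : 0 ≤ t / 18)
    have e1 : B * φ x * ((2 * (3 * (r : ℝ)) + 1) ^ 2 * (1 / (18 * B) * t / φ x) + 2 * φ x * Γ)
        = (2 * (3 * (r : ℝ)) + 1) ^ 2 * (t / 18) + 2 * B * φ x ^ 2 * Γ := by
      field_simp
    rw [e1] at k1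
    linarith
  have h2 : t * (2 * r + 1) ^ 2 ≤ 4 * B * φ x ^ 2 * Γ := by linarith
  have h3 := mul_le_mul_of_nonneg_left h2 (by positivity : 0 ≤ 81 * t)
  have h4 : φ x ^ 2 * ∑ y ∈ Bx x (9 * r), f y ^ 2 ≤ φ x ^ 2 * (324 * B * t * Γ) := by linarith
  exact le_of_mul_le_mul_left h4 (by positivity)

/-- The energy of `f` above the level `t` of `f φ`. -/
def lvl (f φ : Lat 2 → ℝ) (t : ℝ) : ℝ := ∑' x, if t < f x * φ x then f x ^ 2 else 0

lemma lvl_summable {f : Lat 2 → ℝ} (φ : Lat 2 → ℝ) (hf : Summable fun x => f x ^ 2) (t : ℝ) :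
    Summable fun x => if t < f x * φ x then f x ^ 2 else 0 := by
  refine Summable.of_nonneg_of_le (fun x => ?_) (fun x => ?_) hf
  · split_ifs <;> positivity
  · split_ifs
    · exact le_rfl
    · positivity

lemma lvl_le {f : Lat 2 → ℝ} (φ : Lat 2 → ℝ) (hf : Summable fun x => f x ^ 2) (t : ℝ) :
    lvl f φ t ≤ ∑' x, f x ^ 2 := by
  refine Summable.tsum_le_tsum (fun x => ?_) (lvl_summable φ hf t) hf
  split_ifs
  · exact le_rfl
  · positivity

lemma sum_biUnion_le (U : Finset (Lat 2)) (t : Lat 2 → Finset (Lat 2)) (g : Lat 2 → ℝ)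
    (hg : ∀ x, 0 ≤ g x) : ∑ x ∈ U.biUnion t, g x ≤ ∑ b ∈ U, ∑ x ∈ t b, g x := by
  classical
  induction U using Finset.induction_on with
  | empty => simp
  | insert b U hb ih =>
    rw [Finset.biUnion_insert, Finset.sum_insert hb]
    have h1 := Finset.sum_union_inter (s₁ := t b) (s₂ := U.biUnion t) (f := g)
    have h2 : 0 ≤ ∑ x ∈ t b ∩ U.biUnion t, g x := Finset.sum_nonneg fun x _ => hg x
    linarith

/-- Covering by Vitali's lemma turns the local estimate into decay of the level energies. -/
lemma GehringData.decay {B : ℝ} (hB : 1 ≤ B) {f φ : Lat 2 → ℝ} {ρ : Lat 2 → ℕ} {E : ℝ}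
    (H : GehringData B f φ ρ E) {t : ℝ} (ht : 0 < t) (htE : 81 * E ≤ t ^ 2) :
    (11664 * B ^ 2 + 1 / 2) * lvl f φ (648 * B * t)
      ≤ 11664 * B ^ 2 * lvl f φ (1 / (36 * B) * t) := by
  classical
  have hB0 : 0 < B := by linarith
  set θ := 1 / (36 * B) with hθ
  set K := 11664 * B ^ 2 with hK
  have hθ0 : 0 < θ := by positivity
  have hθ1 : θ ≤ 1 := by rw [hθ, div_le_one (by positivity)]; linarith
  have hCθ : 324 * B = K * θ := by rw [hK, hθ]; field_simp; norm_num
  set i1 : Lat 2 → ℝ := fun x => if θ * t < f x * φ x then f x ^ 2 else 0 with hi1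
  set i2 : Lat 2 → ℝ := fun x => if 648 * B * t < f x * φ x then f x ^ 2 else 0 with hi2
  set h : Lat 2 → ℝ := fun x => 1 / 2 * i2 x + K * (i1 x - i2 x) with hh
  have hs1 : Summable i1 := lvl_summable φ H.summable _
  have hs2 : Summable i2 := lvl_summable φ H.summable _
  have hsh : Summable h := (hs2.mul_left _).add ((hs1.sub hs2).mul_left _)
  have hth : ∑' x, h x = 1 / 2 * lvl f φ (648 * B * t)
      + K * (lvl f φ (θ * t) - lvl f φ (648 * B * t)) := by
    simp only [hh]
    rw [Summable.tsum_add (hs2.mul_left _) ((hs1.sub hs2).mul_left _), tsum_mul_left,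
      tsum_mul_left, Summable.tsum_sub hs1 hs2]
    rfl
  have h12 : ∀ x, i2 x ≤ i1 x := fun x => by
    simp only [hi1, hi2]
    split_ifs with c1 c2 c2
    · exact le_rfl
    · exact absurd (lt_of_le_of_lt (mul_le_mul_of_nonneg_right (by nlinarith) ht.le) c1) c2
    · positivity
    · exact le_rfl
  have hi20 : ∀ x, 0 ≤ i2 x := fun x => by simp only [hi2]; split_ifs <;> positivity
  have hh0 : ∀ x, 0 ≤ h x := fun x => by
    have := h12 x; have := hi20 x
    exact add_nonneg (by positivity) (mul_nonneg (by positivity) (by linarith))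
  have hpt : ∀ x, 324 * B * t * (if θ * t < f x * φ x then f x / φ x else 0) ≤ h x := by
    intro x
    split_ifs with c1
    · have hφ := H.φ_pos x
      have hf := H.f_nonneg x
      have hF : 0 < f x * φ x := lt_trans (by positivity) c1
      have e : f x / φ x = f x ^ 2 / (f x * φ x) := by
        have : f x ≠ 0 := by rintro h0; rw [h0, zero_mul] at hF; exact lt_irrefl _ hF
        field_simp
      rw [e]
      have ei1 : i1 x = f x ^ 2 := if_pos c1
      by_cases c2 : 648 * B * t < f x * φ x
      · have ei2 : i2 x = f x ^ 2 := if_pos c2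
        simp only [hh, ei1, ei2]
        rw [sub_self, mul_zero, add_zero, mul_div_assoc', div_le_iff₀ hF]
        nlinarith [sq_nonneg (f x)]
      · have ei2 : i2 x = 0 := if_neg c2
        simp only [hh, ei1, ei2]
        rw [mul_zero, zero_add, sub_zero, mul_div_assoc', div_le_iff₀ hF, hCθ]
        nlinarith [mul_le_mul_of_nonneg_left c1.le (by positivity : 0 ≤ K * f x ^ 2)]
    · rw [mul_zero]; exact hh0 x
  have hmain : lvl f φ t ≤ ∑' x, h x := by
    refine Real.tsum_le_of_sum_le (fun x => by split_ifs <;> positivity) fun s => ?_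
    rw [← Finset.sum_filter]
    set s' := s.filter (fun x => t < f x * φ x) with hs'
    choose! r hr using fun (x : Lat 2) (hx : t < f x * φ x) => H.stopping hB ht htE hx
    obtain ⟨R, hR⟩ : ∃ R : ℝ, ∀ a ∈ s', (r a : ℝ) ≤ R := by
      refine ⟨((s'.sup r : ℕ) : ℝ), fun a ha => ?_⟩
      exact_mod_cast Finset.le_sup (f := r) ha
    obtain ⟨u, hu, hdis, hcov⟩ := Vitali.exists_disjoint_subfamily_covering_enlargement
      (fun x => (Bx x (3 * r x) : Set (Lat 2))) (s' : Set (Lat 2)) (fun x => (r x : ℝ)) 2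
      (by norm_num) (fun _ _ => by positivity) R (fun a ha => hR a (by exact_mod_cast ha))
      (fun a _ => ⟨a, by exact_mod_cast self_mem_Bx a _⟩)
    have hufin : u.Finite := s'.finite_toSet.subset hu
    set U := hufin.toFinset with hU
    have hsub : s' ⊆ U.biUnion fun b => Bx b (9 * r b) := by
      intro a ha
      obtain ⟨b, hb, ⟨z, hz1, hz2⟩, hab⟩ := hcov a (by exact_mod_cast ha)
      rw [Finset.mem_biUnion]
      refine ⟨b, by simpa [hU] using hb, ?_⟩
      have hab' : r a ≤ 2 * r b := by exact_mod_cast hab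
      have hz1' : z ∈ Bx a (3 * r a) := by exact_mod_cast hz1
      have hz2' : z ∈ Bx b (3 * r b) := by exact_mod_cast hz2
      rw [mem_Bx'] at *
      omega
    calc ∑ x ∈ s', f x ^ 2 ≤ ∑ x ∈ U.biUnion fun b => Bx b (9 * r b), f x ^ 2 :=
          Finset.sum_le_sum_of_subset_of_nonneg hsub fun _ _ _ => sq_nonneg _
      _ ≤ ∑ b ∈ U, ∑ x ∈ Bx b (9 * r b), f x ^ 2 :=
          sum_biUnion_le U _ _ fun _ => sq_nonneg _
      _ ≤ ∑ b ∈ U, ∑ x ∈ Bx b (3 * r b), h x := by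
          refine Finset.sum_le_sum fun b hb => ?_
          have hbs : b ∈ s' := by exact_mod_cast hu (by simpa [hU] using hb)
          refine (hr b (Finset.mem_filter.1 hbs).2).trans ?_
          rw [Finset.mul_sum]
          exact Finset.sum_le_sum fun x _ => hpt x
      _ = ∑ x ∈ U.biUnion fun b => Bx b (3 * r b), h x := by
          rw [Finset.sum_biUnion]
          intro a ha b hb hab
          have := hdis (by simpa [hU] using ha) (by simpa [hU] using hb) hab
          simpa [Function.onFun, Finset.disjoint_coe] using this
      _ ≤ ∑' x, h x := hsh.sum_le_tsum _ fun x _ => hh0 x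
  have hmono : lvl f φ (648 * B * t) ≤ lvl f φ t := by
    refine Summable.tsum_le_tsum (fun x => ?_) hs2 (lvl_summable φ H.summable _)
    split_ifs with c1 c2 c2
    · exact le_rfl
    · exact absurd (lt_of_le_of_lt (by nlinarith) c1) c2
    · positivity
    · exact le_rfl
  rw [hth] at hmain
  linarith

/-- Layer-cake bound with geometric levels. -/
lemma layer_cake {L p : ℝ} (hL : 1 < L) (hp : 0 ≤ p) (K : ℕ) {F : ℝ} (hF : F ≤ L ^ K) :
    max 1 F ^ p ≤ 1 + L ^ p * ∑ k ∈ Finset.range K, (L ^ p) ^ k * if L ^ k < F then 1 else 0 := by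
  have hLp : 0 < L ^ p := Real.rpow_pos_of_pos (by linarith) p
  have hnn : ∀ n : ℕ, 0 ≤ L ^ p * ∑ k ∈ Finset.range n, (L ^ p) ^ k * if L ^ k < F then 1 else 0 :=
    fun n => mul_nonneg hLp.le (Finset.sum_nonneg fun k _ => by split_ifs <;> positivity)
  induction K with
  | zero =>
    rw [pow_zero] at hF
    rw [max_eq_left hF, Real.one_rpow]; simp
  | succ K ih =>
    rw [Finset.sum_range_succ, mul_add]
    by_cases hc : F ≤ L ^ K
    · have := ih hc
      have h2 : 0 ≤ L ^ p * ((L ^ p) ^ K * if L ^ K < F then 1 else 0) :=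
        mul_nonneg hLp.le (by split_ifs <;> positivity)
      linarith
    · rw [not_le] at hc
      rw [if_pos hc, mul_one]
      have h1 : max 1 F ≤ L ^ (K + 1) := max_le (one_le_pow₀ hL.le) hF
      have h2 : max 1 F ^ p ≤ (L ^ (K + 1)) ^ p := Real.rpow_le_rpow (by positivity) h1 hp
      have e : (L ^ (K + 1)) ^ p = L ^ p * (L ^ p) ^ K := by
        rw [← Real.rpow_natCast, ← Real.rpow_natCast, ← Real.rpow_mul (by linarith),
          ← Real.rpow_mul (by linarith), ← Real.rpow_add (by linarith)]
        congr 1; push_cast; ring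
      rw [e] at h2
      linarith [hnn K]

/-- Gehring's lemma: a reverse Hölder inequality at scales below `ρ` improves integrability. -/
theorem gehring {B : ℝ} (hB : 1 ≤ B) : ∃ p0 : ℝ, 0 < p0 ∧ p0 ≤ 1 ∧ ∃ C : ℝ, 1 ≤ C ∧
    ∀ p, 0 ≤ p → p ≤ p0 → ∀ (f φ : Lat 2 → ℝ) (ρ : Lat 2 → ℕ) (E : ℝ), GehringData B f φ ρ E →
      ∀ s : Finset (Lat 2), ∑ x ∈ s, f x ^ 2 * (f x * φ x) ^ p ≤ C * √E ^ p * ∑' x, f x ^ 2 := by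
  have hB0 : 0 < B := by linarith
  set K := 11664 * B ^ 2 with hK
  set γ := K / (K + 1 / 2) with hγ
  have hK0 : 0 < K := by positivity
  have hγ0 : 0 < γ := by positivity
  have hγ1 : γ < 1 := by rw [hγ, div_lt_one (by positivity)]; linarith
  set L := 648 * B * (36 * B) with hL
  have hL1 : 1 < L := by rw [hL]; nlinarith
  have hL0 : 0 < L := by linarith
  set β := (1 + γ) / 2 with hβ
  have hβ1 : β < 1 := by rw [hβ]; linarith
  -- For small `p0` the growth `L ^ p0` of the weights does not destroy the decay rate `γ`.
  obtain ⟨p0, hp0, hp01, hpL⟩ : ∃ p0 : ℝ, 0 < p0 ∧ p0 ≤ 1 ∧ L ^ p0 * γ ≤ β := by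
    have hcont : Filter.Tendsto (fun p : ℝ => L ^ p * γ) (nhds 0) (nhds (L ^ (0 : ℝ) * γ)) :=
      ((Real.continuous_const_rpow hL0.ne').tendsto 0).mul_const γ
    rw [Real.rpow_zero, one_mul] at hcont
    have hev := hcont.eventually_lt_const (show γ < β by rw [hβ]; linarith)
    obtain ⟨ε, hε, hball⟩ := Metric.eventually_nhds_iff.1 hev
    refine ⟨min (ε / 2) 1, by positivity, min_le_right _ _, (hball ?_).le⟩
    rw [Real.dist_eq, sub_zero, abs_of_pos (by positivity)]
    exact lt_of_le_of_lt (min_le_left _ _) (by linarith)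
  have hLp0 : 0 < L ^ p0 := Real.rpow_pos_of_pos hL0 _
  refine ⟨p0, hp0, hp01, 1 + L ^ p0 * (1 / (1 - β)), ?_, ?_⟩
  · have : 0 ≤ L ^ p0 * (1 / (1 - β)) := mul_nonneg hLp0.le (one_div_nonneg.2 (by linarith))
    linarith
  intro p hp hpp f φ ρ E H s
  set D := ∑' x, f x ^ 2 with hD
  have hD0 : 0 ≤ D := tsum_nonneg fun _ => sq_nonneg _
  have hE := H.E_pos
  set τ := 9 * √E / (36 * B) with hτ
  have hsE : 0 < √E := Real.sqrt_pos.2 hE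
  have hτ0 : 0 < τ := by positivity
  have hτE : τ ≤ √E := by rw [hτ, div_le_iff₀ (by positivity)]; nlinarith
  have hLp : 0 < L ^ p := Real.rpow_pos_of_pos hL0 _
  have hLpp : L ^ p ≤ L ^ p0 := Real.rpow_le_rpow_of_exponent_le hL1.le hpp
  have hstep : ∀ σ, τ ≤ σ → lvl f φ (L * σ) ≤ γ * lvl f φ σ := by
    intro σ hσ
    have hσ0 : 0 < σ := by linarith
    have h1 := H.decay hB (t := 36 * B * σ) (by positivity) (by
      have : 9 * √E ≤ 36 * B * σ := by
        rw [hτ, div_le_iff₀ (by positivity)] at hσ; linarith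
      have h2 := pow_le_pow_left₀ (by positivity) this 2
      rw [mul_pow, Real.sq_sqrt hE.le] at h2
      linarith)
    have e1 : 648 * B * (36 * B * σ) = L * σ := by rw [hL]; ring
    have e2 : 1 / (36 * B) * (36 * B * σ) = σ := by field_simp
    rw [e1, e2] at h1
    rw [hγ, div_mul_eq_mul_div, le_div_iff₀ (by positivity)]
    linarith
  have hlv : ∀ k : ℕ, lvl f φ (L ^ k * τ) ≤ γ ^ k * D := by
    intro k
    induction k with
    | zero => simpa using lvl_le φ H.summable τ
    | succ k ih =>
      have h1 := hstep (L ^ k * τ) (by nlinarith [one_le_pow₀ hL1.le (n := k)])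
      rw [pow_succ' L, mul_assoc L, pow_succ' γ, mul_assoc γ]
      exact h1.trans (mul_le_mul_of_nonneg_left ih hγ0.le)
  have hF0 : ∀ x, 0 ≤ f x * φ x := fun x => mul_nonneg (H.f_nonneg x) (H.φ_pos x).le
  obtain ⟨N, hN⟩ : ∃ N : ℕ, ∀ x ∈ s, f x * φ x / τ ≤ L ^ N := by
    have : ∀ x, ∃ n : ℕ, f x * φ x / τ ≤ L ^ n := fun x =>
      (pow_unbounded_of_one_lt _ hL1).imp fun _ h => h.le
    choose n hn using this
    exact ⟨s.sup n, fun x hx => (hn x).trans (pow_le_pow_right₀ hL1.le (Finset.le_sup hx))⟩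
  have hterm : ∀ x ∈ s, f x ^ 2 * (f x * φ x) ^ p ≤ √E ^ p * (f x ^ 2
      + L ^ p * ∑ k ∈ Finset.range N, (L ^ p) ^ k * if L ^ k * τ < f x * φ x then f x ^ 2 else 0) := by
    intro x hx
    have h1 := layer_cake hL1 hp N (hN x hx)
    have h2 : (f x * φ x) ^ p ≤ √E ^ p * max 1 (f x * φ x / τ) ^ p := by
      rw [← Real.mul_rpow hsE.le (by positivity)]
      refine Real.rpow_le_rpow (hF0 x) ?_ hp
      calc f x * φ x = τ * (f x * φ x / τ) := by field_simp
        _ ≤ √E * max 1 (f x * φ x / τ) :=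
          mul_le_mul hτE (le_max_right _ _) (div_nonneg (hF0 x) hτ0.le) hsE.le
    have h3 : (f x * φ x) ^ p ≤ √E ^ p * (1 + L ^ p * ∑ k ∈ Finset.range N,
        (L ^ p) ^ k * if L ^ k < f x * φ x / τ then 1 else 0) :=
      h2.trans (mul_le_mul_of_nonneg_left h1 (by positivity))
    refine (mul_le_mul_of_nonneg_left h3 (sq_nonneg (f x))).trans (le_of_eq ?_)
    have e : ∑ k ∈ Finset.range N, (L ^ p) ^ k * (if L ^ k * τ < f x * φ x then f x ^ 2 else 0)
        = f x ^ 2 * ∑ k ∈ Finset.range N, (L ^ p) ^ k * if L ^ k < f x * φ x / τ then 1 else 0 := by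
      rw [Finset.mul_sum]
      refine Finset.sum_congr rfl fun k _ => ?_
      simp only [lt_div_iff₀ hτ0]
      split_ifs <;> ring
    rw [e]; ring
  refine (Finset.sum_le_sum hterm).trans ?_
  rw [← Finset.mul_sum, Finset.sum_add_distrib, ← Finset.mul_sum, Finset.sum_comm]
  have h1 : ∑ x ∈ s, f x ^ 2 ≤ D := H.summable.sum_le_tsum _ fun _ _ => sq_nonneg _
  have h2 : ∑ k ∈ Finset.range N, ∑ x ∈ s,
      (L ^ p) ^ k * (if L ^ k * τ < f x * φ x then f x ^ 2 else 0) ≤ 1 / (1 - β) * D := by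
    have k1 : ∀ k ∈ Finset.range N, ∑ x ∈ s,
        (L ^ p) ^ k * (if L ^ k * τ < f x * φ x then f x ^ 2 else 0) ≤ β ^ k * D := by
      intro k _
      rw [← Finset.mul_sum]
      have m1 : ∑ x ∈ s, (if L ^ k * τ < f x * φ x then f x ^ 2 else 0) ≤ lvl f φ (L ^ k * τ) :=
        (lvl_summable φ H.summable _).sum_le_tsum _ fun x _ => by split_ifs <;> positivity
      have m2 : (L ^ p) ^ k * γ ^ k ≤ β ^ k := by
        rw [← mul_pow]
        exact pow_le_pow_left₀ (by positivity)
          ((mul_le_mul_of_nonneg_right hLpp hγ0.le).trans hpL) k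
      calc _ ≤ (L ^ p) ^ k * (γ ^ k * D) :=
            mul_le_mul_of_nonneg_left (m1.trans (hlv k)) (by positivity)
        _ = (L ^ p) ^ k * γ ^ k * D := by ring
        _ ≤ β ^ k * D := mul_le_mul_of_nonneg_right m2 hD0
    refine (Finset.sum_le_sum k1).trans ?_
    rw [← Finset.sum_mul]
    refine mul_le_mul_of_nonneg_right ?_ hD0
    have hβ0 : 0 ≤ β := by rw [hβ]; linarith
    have := (summable_geometric_of_lt_one hβ0 hβ1).sum_le_tsum (Finset.range N)
      fun _ _ => by positivity
    rwa [tsum_geometric_of_lt_one hβ0 hβ1, ← one_div] at this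
  have hb : 0 ≤ 1 / (1 - β) * D := mul_nonneg (one_div_nonneg.2 (by linarith)) hD0
  calc √E ^ p * (_ + L ^ p * _) ≤ √E ^ p * (D + L ^ p0 * (1 / (1 - β) * D)) := by
        refine mul_le_mul_of_nonneg_left (add_le_add h1 ?_) (by positivity)
        exact (mul_le_mul_of_nonneg_left h2 hLp.le).trans (mul_le_mul_of_nonneg_right hLpp hb)
    _ = _ := by ring

/-! ### Interior energy decay and a local boundedness estimate -/

lemma sum_mono_Bx {g : Lat 2 → ℝ} (hg : ∀ x, 0 ≤ g x) {s t : Finset (Lat 2)} (h : s ⊆ t) :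
    ∑ x ∈ s, g x ≤ ∑ x ∈ t, g x :=
  Finset.sum_le_sum_of_subset_of_nonneg h fun x _ _ => hg x

/-- The gradient of a local solution, cut off to the domain, satisfies the hypotheses of Gehring's
lemma with scale proportional to the distance to the boundary. -/
lemma gehringData_interior {lam T : ℝ} (hlam0 : 0 < lam) (hlam1 : lam ≤ 1) (hT : 0 < T)
    {a : Lat 2 → Fin 2 → Fin 2 → ℝ} (h : Ell lam a) {v : Lat 2 → ℝ} {R : ℕ}
    (hv : Harm T a v {y | nrm y < R}) {M : ℝ} (hM0 : 0 < M)
    (hM : ∑ y ∈ Bx 0 R, gsq v y ≤ M) :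
    GehringData (√(Arh lam)) (fun x => if x ∈ Bx 0 R then √(gsq v x) else 0)
      (fun x => ((R - nrm x : ℕ) : ℝ) + 4) (fun x => (R - nrm x) / 4) (64 * M) := by
  have hsq : ∀ x, (if x ∈ Bx 0 R then √(gsq v x) else 0) ^ 2
      = if x ∈ Bx 0 R then gsq v x else 0 := fun x => by
    split_ifs
    · exact Real.sq_sqrt (gsq_nonneg v x)
    · norm_num
  refine ⟨fun x => by split_ifs <;> positivity, ?_, fun x => by positivity, by positivity, ?_, ?_, ?_⟩
  · simp only [hsq]
    exact summable_of_ne_finset_zero (s := Bx 0 R) fun x hx => if_neg hx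
  · intro x r hr hrR
    have hin : ∀ q, q ≤ 3 * r → ∀ y ∈ Bx x q, y ∈ Bx 0 R := by
      intro q hq y hy
      rw [mem_Bx] at *
      have := nrm_add_le (y - x) x
      rw [sub_add_cancel] at this
      rw [sub_zero]; omega
    have hH : Harm T a v {y | nrm (y - x) < 2 * r} := hv.mono fun y hy => by
      have := nrm_add_le (y - x) x
      rw [sub_add_cancel] at this
      simp only [Set.mem_ofPred_eq] at *; omega
    have := reverse_holder hlam0 hlam1 hT h hr hH
    rw [Real.sq_sqrt (by have := one_le_Arh hlam0 hlam1; linarith)]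
    have e1 : ∑ y ∈ Bx x r, (if y ∈ Bx 0 R then √(gsq v y) else 0) ^ 2 = ∑ y ∈ Bx x r, gsq v y :=
      Finset.sum_congr rfl fun y hy => by rw [hsq, if_pos (hin r (by omega) y hy)]
    have e2 : ∑ y ∈ Bx x (3 * r), (if y ∈ Bx 0 R then √(gsq v y) else 0)
        = ∑ y ∈ Bx x (3 * r), √(gsq v y) :=
      Finset.sum_congr rfl fun y hy => by rw [if_pos (hin _ le_rfl y hy)]
    rw [e1, e2]; exact this
  · intro x y hy
    rw [mem_Bx] at hy
    have h1 := nrm_add_le (y - x) x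
    have h2 := nrm_add_le (x - y) y
    rw [sub_add_cancel] at h1 h2
    rw [nrm_sub_comm] at h2
    constructor
    · exact_mod_cast (by omega : (R - nrm x) + 4 ≤ 2 * ((R - nrm y) + 4))
    · exact_mod_cast (by omega : (R - nrm y) + 4 ≤ 2 * ((R - nrm x) + 4))
  · intro x
    simp only [hsq]
    have h1 : ∑ y ∈ Bx x ((R - nrm x) / 4), (if y ∈ Bx 0 R then gsq v y else 0) ≤ M := by
      rw [← Finset.sum_filter]
      refine (sum_mono_Bx (gsq_nonneg v) fun y hy => ?_).trans hM
      exact (Finset.mem_filter.1 hy).2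
    have h2 : ((R - nrm x : ℕ) : ℝ) + 4 ≤ 8 * (2 * (((R - nrm x) / 4 : ℕ) : ℝ) + 1) := by
      exact_mod_cast (by omega : (R - nrm x) + 4 ≤ 8 * (2 * ((R - nrm x) / 4) + 1))
    calc _ ≤ (8 * (2 * (((R - nrm x) / 4 : ℕ) : ℝ) + 1)) ^ 2 * M := by
          refine mul_le_mul (pow_le_pow_left₀ (by positivity) h2 2) h1 ?_ (by positivity)
          exact Finset.sum_nonneg fun y _ => by split_ifs <;> [exact gsq_nonneg v y; exact le_rfl]
      _ = _ := by ring

/-- Power decay of the energy of a local solution on concentric squares. -/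
lemma interior_decay {lam : ℝ} (hlam0 : 0 < lam) (hlam1 : lam ≤ 1) :
    ∃ κ : ℝ, 0 < κ ∧ κ ≤ 1 ∧ ∃ C : ℝ, 1 ≤ C ∧ ∀ T, 0 < T →
      ∀ a : Lat 2 → Fin 2 → Fin 2 → ℝ, Ell lam a → ∀ (v : Lat 2 → ℝ) (R : ℕ),
      Harm T a v {y | nrm y < R} → ∀ M, ∑ y ∈ Bx 0 R, gsq v y ≤ M → ∀ r, r ≤ R →
      ∑ y ∈ Bx 0 r, gsq v y ≤ C * M * ((2 * (r : ℝ) + 1) / (R + 1)) ^ κ := by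
  have hB : 1 ≤ √(Arh lam) := Real.one_le_sqrt.2 (one_le_Arh hlam0 hlam1)
  obtain ⟨p, hp0, hp1, C, hC, hG⟩ := gehring hB
  refine ⟨p / 2, by linarith, by linarith, 1 + 16 * C, by linarith, ?_⟩
  intro T hT a h v R hv M hM r hrR
  have hle : ∑ y ∈ Bx 0 r, gsq v y ≤ M := (sum_mono_Bx (gsq_nonneg v) (Bx_mono 0 hrR)).trans hM
  have hM0 : 0 ≤ M := (Finset.sum_nonneg fun y _ => gsq_nonneg v y).trans hM
  rcases hM0.eq_or_lt with h0 | hMpos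
  · rw [← h0] at hle ⊢; simpa using hle
  set s : ℝ := (2 * (r : ℝ) + 1) / (R + 1) with hs
  have hs0 : 0 < s := by positivity
  rcases le_or_gt 1 s with hs1 | hs1
  · have : 1 ≤ s ^ (p / 2) := Real.one_le_rpow hs1 (by linarith)
    calc _ ≤ M := hle
      _ ≤ (1 + 16 * C) * M := by nlinarith
      _ ≤ _ := le_mul_of_one_le_right (by positivity) this
  have h2r : 2 * r < R := by
    rw [hs, div_lt_one (by positivity)] at hs1
    have : (2 * (r : ℝ)) < R := by linarith
    exact_mod_cast this
  have hg := hG p hp0.le le_rfl _ _ _ _ (gehringData_interior hlam0 hlam1 hT h hv hMpos hM) (Bx 0 r)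
  have hsub : Bx (0 : Lat 2) r ⊆ Bx 0 R := Bx_mono 0 hrR
  have hsq : ∀ x, (if x ∈ Bx 0 R then √(gsq v x) else 0) ^ 2
      = if x ∈ Bx 0 R then gsq v x else 0 := fun x => by
    split_ifs
    · exact Real.sq_sqrt (gsq_nonneg v x)
    · norm_num
  simp only [hsq] at hg
  rw [tsum_eq_sum (s := Bx 0 R) (fun x hx => if_neg hx),
    Finset.sum_congr rfl (fun x (hx : x ∈ Bx 0 R) => if_pos hx)] at hg
  set ℓ : ℝ := (R + 1) / 2 with hℓ
  have hℓ0 : 0 < ℓ := by positivity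
  set Z := ∑ x ∈ Bx 0 r, gsq v x * √(gsq v x) ^ p with hZ
  have hsM : 0 < √M := Real.sqrt_pos.2 hMpos
  have hZb : ℓ ^ p * Z ≤ C * (8 * √M) ^ p * M := by
    have e8 : √(64 * M) = 8 * √M := by
      rw [Real.sqrt_mul (by norm_num), show (64 : ℝ) = 8 ^ 2 by norm_num,
        Real.sqrt_sq (by norm_num)]
    rw [e8] at hg
    refine le_trans ?_ (hg.trans (mul_le_mul_of_nonneg_left hM (by positivity)))
    rw [hZ, Finset.mul_sum]
    refine Finset.sum_le_sum fun x hx => ?_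
    rw [if_pos (hsub hx), if_pos (hsub hx)]
    have hφ : ℓ ≤ ((R - nrm x : ℕ) : ℝ) + 4 := by
      rw [mem_Bx, sub_zero] at hx
      rw [hℓ, div_le_iff₀ (by norm_num)]
      exact_mod_cast (by omega : R + 1 ≤ ((R - nrm x) + 4) * 2)
    have h1 : (√(gsq v x) * ℓ) ^ p ≤ (√(gsq v x) * (((R - nrm x : ℕ) : ℝ) + 4)) ^ p :=
      Real.rpow_le_rpow (by positivity) (mul_le_mul_of_nonneg_left hφ (by positivity)) hp0.le
    rw [Real.mul_rpow (by positivity) hℓ0.le] at h1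
    calc ℓ ^ p * (gsq v x * √(gsq v x) ^ p) = gsq v x * (√(gsq v x) ^ p * ℓ ^ p) := by ring
      _ ≤ _ := mul_le_mul_of_nonneg_left h1 (gsq_nonneg v x)
  -- The splitting level balances the two contributions below.
  set τ := √M / ((R + 1) * √s) with hτ
  have hss : 0 < √s := Real.sqrt_pos.2 hs0
  have hτ0 : 0 < τ := by positivity
  have hsplit : ∑ x ∈ Bx 0 r, gsq v x ≤ (2 * r + 1) ^ 2 * τ ^ 2 + (τ ^ p)⁻¹ * Z := by
    have hpt : ∀ x ∈ Bx (0 : Lat 2) r, gsq v x ≤ τ ^ 2 + (τ ^ p)⁻¹ * (gsq v x * √(gsq v x) ^ p) := by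
      intro x _
      have hg0 := gsq_nonneg v x
      rcases le_or_gt (√(gsq v x)) τ with hc | hc
      · have : gsq v x ≤ τ ^ 2 := by
          rw [← Real.sq_sqrt hg0]; exact pow_le_pow_left₀ (by positivity) hc 2
        have : 0 ≤ (τ ^ p)⁻¹ * (gsq v x * √(gsq v x) ^ p) := by positivity
        linarith
      · have h1 : τ ^ p ≤ √(gsq v x) ^ p := Real.rpow_le_rpow hτ0.le hc.le hp0.le
        have h2 : 0 < τ ^ p := Real.rpow_pos_of_pos hτ0 p
        have h3 : 1 ≤ (τ ^ p)⁻¹ * √(gsq v x) ^ p := by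
          rw [inv_mul_eq_div, le_div_iff₀ h2]; linarith
        nlinarith [sq_nonneg τ, mul_le_mul_of_nonneg_left h3 hg0]
    have := Finset.sum_le_sum hpt
    rwa [Finset.sum_add_distrib, Finset.sum_const, nsmul_eq_mul, card_Bx_real,
      ← Finset.mul_sum] at this
  have e1 : (2 * (r : ℝ) + 1) ^ 2 * τ ^ 2 = M * s := by
    rw [hτ, div_pow, mul_pow, Real.sq_sqrt hMpos.le, Real.sq_sqrt hs0.le]
    have : (2 * (r : ℝ) + 1) = s * (R + 1) := by rw [hs]; field_simp
    rw [this]; field_simp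
  have e2 : (τ ^ p)⁻¹ * Z ≤ 16 * C * M * s ^ (p / 2) := by
    have h1 : Z ≤ C * (8 * √M) ^ p * M / ℓ ^ p := by
      rw [le_div_iff₀ (Real.rpow_pos_of_pos hℓ0 p)]; linarith
    have h2 : (8 * √M) ^ p / ℓ ^ p * (τ ^ p)⁻¹ = 16 ^ p * s ^ (p / 2) := by
      rw [← Real.div_rpow (by positivity) hℓ0.le, ← Real.inv_rpow hτ0.le,
        ← Real.mul_rpow (by positivity) (by positivity)]
      have e : 8 * √M / ℓ * τ⁻¹ = 16 * √s := by rw [hℓ, hτ]; field_simp; norm_num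
      rw [e, Real.mul_rpow (by norm_num) hss.le, Real.sqrt_eq_rpow, ← Real.rpow_mul hs0.le]
      congr 2; ring
    have h3 : (16 : ℝ) ^ p ≤ 16 := by
      calc (16 : ℝ) ^ p ≤ 16 ^ (1 : ℝ) := Real.rpow_le_rpow_of_exponent_le (by norm_num) hp1
        _ = 16 := Real.rpow_one _
    calc (τ ^ p)⁻¹ * Z ≤ (τ ^ p)⁻¹ * (C * (8 * √M) ^ p * M / ℓ ^ p) :=
          mul_le_mul_of_nonneg_left h1 (by positivity)
      _ = C * M * ((8 * √M) ^ p / ℓ ^ p * (τ ^ p)⁻¹) := by ring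
      _ = C * M * (16 ^ p * s ^ (p / 2)) := by rw [h2]
      _ ≤ C * M * (16 * s ^ (p / 2)) := by gcongr
      _ = _ := by ring
  have e3 : s ≤ s ^ (p / 2) := by
    conv_lhs => rw [← Real.rpow_one s]
    exact Real.rpow_le_rpow_of_exponent_ge hs0 hs1.le (by linarith)
  calc _ ≤ M * s + 16 * C * M * s ^ (p / 2) := by rw [e1] at hsplit; linarith
    _ ≤ M * s ^ (p / 2) + 16 * C * M * s ^ (p / 2) := by gcongr
    _ = _ := by ring

/-- Local boundedness: the value of a local solution at the centre differs from its mean by at most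
a multiple of the Dirichlet norm. -/
lemma center_sub_avg_le {lam : ℝ} (hlam0 : 0 < lam) (hlam1 : lam ≤ 1) :
    ∃ C : ℝ, 1 ≤ C ∧ ∀ T, 0 < T →
      ∀ a : Lat 2 → Fin 2 → Fin 2 → ℝ, Ell lam a → ∀ (v : Lat 2 → ℝ) (R : ℕ),
      Harm T a v {y | nrm y < R} → ∀ M, ∑ y ∈ Bx 0 R, gsq v y ≤ M →
      |v 0 - avg (Bx 0 R) v| ≤ C * √M := by
  obtain ⟨κ, hκ0, hκ1, C, hC, hdec⟩ := interior_decay hlam0 hlam1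
  set ε : ℝ := (1 / 2 : ℝ) ^ (κ / 2) with hε
  have hε0 : 0 < ε := by positivity
  have hε1 : ε < 1 := Real.rpow_lt_one (by norm_num) (by norm_num) (by linarith)
  set C' := 6 * √C / (1 - ε) with hC'
  have hC'0 : 0 ≤ C' := div_nonneg (by positivity) (by linarith)
  refine ⟨2 * C' + 6, by linarith, ?_⟩
  intro T hT a h v R hv M hM
  have hM0 : 0 ≤ M := (Finset.sum_nonneg fun y _ => gsq_nonneg v y).trans hM
  set s : ℕ → ℝ := fun r => (2 * (r : ℝ) + 1) / (R + 1) with hs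
  have hs0 : ∀ r, 0 < s r := fun r => by positivity
  have hne : ∀ r, (Bx (0 : Lat 2) r).Nonempty := fun r => ⟨0, self_mem_Bx 0 r⟩
  have key : ∀ j : ℕ, 2 ^ j - 1 ≤ R →
      |v 0 - avg (Bx 0 (2 ^ j - 1)) v| ≤ C' * √M * s (2 ^ j - 1) ^ (κ / 2) := by
    intro j
    induction j with
    | zero =>
      intro _
      have : avg (Bx 0 (2 ^ 0 - 1)) v = v 0 := by
        rw [show 2 ^ 0 - 1 = 0 by norm_num, Bx_zero]; simp [avg]
      rw [this, sub_self, abs_zero]; positivity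
    | succ j ih =>
      intro hj
      set r := 2 ^ j - 1 with hr
      have hr' : 2 ^ (j + 1) - 1 = 2 * r + 1 := by
        have : 1 ≤ 2 ^ j := Nat.one_le_two_pow
        rw [pow_succ]; omega
      rw [hr'] at hj ⊢
      have h1 := ih (by omega)
      have h2 := avg_diff v 0 (2 * r + 1) (hne r) (Bx_mono 0 (by omega)) (k := 9) (by
        rw [card_Bx_real]; push_cast; nlinarith [(Nat.cast_nonneg r : (0 : ℝ) ≤ r)])
      have h3 := hdec T hT a h v R hv M hM (2 * r + 1) hj
      have h4 : |avg (Bx 0 (2 * r + 1)) v - avg (Bx 0 r) v|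
          ≤ 6 * √C * √M * s (2 * r + 1) ^ (κ / 2) := by
        apply abs_le_of_sq_le_sq _ (by positivity)
        refine h2.trans ?_
        have e : (6 * √C * √M * s (2 * r + 1) ^ (κ / 2)) ^ 2
            = 36 * (C * M * s (2 * r + 1) ^ κ) := by
          rw [mul_pow, mul_pow, mul_pow, Real.sq_sqrt (by linarith), Real.sq_sqrt hM0,
            ← Real.rpow_natCast (_ ^ (κ / 2)), ← Real.rpow_mul (hs0 _).le]
          rw [show κ / 2 * ((2 : ℕ) : ℝ) = κ by push_cast; ring]; ring
        rw [e]
        have : C * M * s (2 * r + 1) ^ κ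
          = C * M * ((2 * ((2 * r + 1 : ℕ) : ℝ) + 1) / (R + 1)) ^ κ := rfl
        rw [this]; linarith
      have h5 : s r ^ (κ / 2) ≤ ε * s (2 * r + 1) ^ (κ / 2) := by
        rw [hε, ← Real.mul_rpow (by norm_num) (hs0 _).le]
        refine Real.rpow_le_rpow (hs0 r).le ?_ (by linarith)
        simp only [hs]; push_cast
        rw [mul_div_assoc']
        gcongr; linarith
      have h6 : C' * (1 - ε) = 6 * √C := by rw [hC']; field_simp [(by linarith : (1 - ε) ≠ 0)]
      have h7 : |v 0 - avg (Bx 0 (2 * r + 1)) v|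
          ≤ |v 0 - avg (Bx 0 r) v| + |avg (Bx 0 (2 * r + 1)) v - avg (Bx 0 r) v| := by
        rw [abs_sub_comm (avg (Bx 0 (2 * r + 1)) v)]
        exact abs_sub_le _ _ _
      have h8 : C' * √M * s r ^ (κ / 2) ≤ C' * √M * (ε * s (2 * r + 1) ^ (κ / 2)) :=
        mul_le_mul_of_nonneg_left h5 (by positivity)
      calc _ ≤ C' * √M * (ε * s (2 * r + 1) ^ (κ / 2)) + 6 * √C * √M * s (2 * r + 1) ^ (κ / 2) := by
            linarith
        _ = C' * √M * s (2 * r + 1) ^ (κ / 2) := by rw [← h6]; ring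
  set j := Nat.log 2 (R + 1) with hj
  have hj1 : 2 ^ j ≤ R + 1 := Nat.pow_log_le_self 2 (by omega)
  have hj2 : R + 1 < 2 ^ (j + 1) := Nat.lt_pow_succ_log_self (by norm_num) _
  rw [pow_succ] at hj2
  set r := 2 ^ j - 1 with hr
  have h1 := key j (by omega)
  have h2 := avg_diff v 0 R (hne r) (Bx_mono 0 (by omega)) (k := 9) (by
    rw [card_Bx_real]
    have : 2 * (R : ℝ) + 1 ≤ 3 * (2 * r + 1) := by
      exact_mod_cast (by omega : 2 * R + 1 ≤ 3 * (2 * r + 1))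
    calc _ ≤ (3 * (2 * (r : ℝ) + 1)) ^ 2 := pow_le_pow_left₀ (by positivity) this 2
      _ = _ := by ring)
  have h3 : |avg (Bx 0 R) v - avg (Bx 0 r) v| ≤ 6 * √M := by
    apply abs_le_of_sq_le_sq _ (by positivity)
    rw [mul_pow, Real.sq_sqrt hM0]; linarith
  have h4 : s r ^ (κ / 2) ≤ 2 := by
    have : s r ≤ 2 := by
      simp only [hs]
      rw [div_le_iff₀ (by positivity)]
      exact_mod_cast (by omega : 2 * r + 1 ≤ 2 * (R + 1))
    calc s r ^ (κ / 2) ≤ 2 ^ (κ / 2) := Real.rpow_le_rpow (hs0 r).le this (by linarith)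
      _ ≤ 2 ^ (1 : ℝ) := Real.rpow_le_rpow_of_exponent_le (by norm_num) (by linarith)
      _ = 2 := Real.rpow_one _
  have h5 : |v 0 - avg (Bx 0 R) v| ≤ |v 0 - avg (Bx 0 r) v| + |avg (Bx 0 R) v - avg (Bx 0 r) v| := by
    rw [abs_sub_comm (avg (Bx 0 R) v)]
    exact abs_sub_le _ _ _
  have h6 : C' * √M * s r ^ (κ / 2) ≤ C' * √M * 2 := mul_le_mul_of_nonneg_left h4 (by positivity)
  linarith

/-! ### Energy of the planar Green's function on annuli -/

/-- Solvability and energy estimates for a right-hand side bounded by the Dirichlet norm. -/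
lemma exists_solution_energy {lam T : ℝ} (hlam : 0 < lam) (hT : 0 < T)
    {a : Lat 2 → Fin 2 → Fin 2 → ℝ} (h : Ell lam a) (ℓ : (Lat 2 → ℝ) →ₗ[ℝ] ℝ) {b : ℝ}
    (hb0 : 0 ≤ b) (hb : ∀ φ, L2 φ → |ℓ φ| ≤ b * √(∑' x, gsq φ x)) :
    ∃ v, L2 v ∧ (∀ φ, L2 φ → form T a v φ = ℓ φ) ∧ ∑' x, gsq v x ≤ (b / lam) ^ 2 ∧
      ∑' x, v x ^ 2 ≤ T * b ^ 2 / lam := by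
  obtain ⟨v, hv, hsol⟩ := exists_solution hlam hT h ℓ (b * √8) (fun φ hφ => by
    refine (hb φ hφ).trans ?_
    rw [mul_assoc, ← Real.sqrt_mul (by norm_num)]
    refine mul_le_mul_of_nonneg_left (Real.sqrt_le_sqrt ?_) hb0
    have := tsum_gsq_le hφ
    push_cast at this; linarith)
  have h1 := le_form_self (T := T) h hv
  rw [hsol v hv] at h1
  have h2 := (le_abs_self _).trans (hb v hv)
  set D := ∑' x, gsq v x
  set V := ∑' x, v x ^ 2
  have hD0 : 0 ≤ D := tsum_nonneg fun x => gsq_nonneg v x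
  have hV0 : 0 ≤ V := tsum_nonneg fun x => sq_nonneg _
  have hVT : 0 ≤ 1 / T * V := by positivity
  have hd : lam * √D ≤ b := by
    rcases (Real.sqrt_nonneg D).eq_or_lt with h0 | h0
    · rw [← h0, mul_zero]; exact hb0
    · have : lam * √D * √D ≤ b * √D := by
        rw [mul_assoc, Real.mul_self_sqrt hD0]; linarith
      exact le_of_mul_le_mul_right this h0
  have hd' : √D ≤ b / lam := by rw [le_div_iff₀ hlam]; linarith
  refine ⟨v, hv, hsol, ?_, ?_⟩
  · change D ≤ _
    rw [← Real.sq_sqrt hD0]; exact pow_le_pow_left₀ (Real.sqrt_nonneg _) hd' 2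
  · have h3 : 1 / T * V ≤ b * (b / lam) := by
      have := mul_le_mul_of_nonneg_left hd' hb0
      have : 0 ≤ lam * D := by positivity
      linarith
    have h4 := mul_le_mul_of_nonneg_left h3 hT.le
    have e : T * (1 / T * V) = V := by field_simp
    rw [e] at h4
    calc V ≤ _ := h4
      _ = _ := by ring

/-- The averaging functional as a linear map. -/
def avgL (Q : Finset (Lat 2)) : (Lat 2 → ℝ) →ₗ[ℝ] ℝ where
  toFun u := avg Q u
  map_add' u v := by simp only [avg, Pi.add_apply, Finset.sum_add_distrib, add_div]
  map_smul' c u := by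
    simp only [avg, Pi.smul_apply, smul_eq_mul, ← Finset.mul_sum, RingHom.id_apply, mul_div_assoc]

/-- The functional `φ ↦ ∑_P ∇G · ∇φ` as a linear map. -/
def gradL (P : Finset (Lat 2)) (G : Lat 2 → ℝ) : (Lat 2 → ℝ) →ₗ[ℝ] ℝ where
  toFun u := ∑ x ∈ P, ∑ i, dgrad G x i * dgrad u x i
  map_add' u v := by
    simp only [← Finset.sum_add_distrib]
    refine Finset.sum_congr rfl fun x _ => Finset.sum_congr rfl fun i _ => ?_
    simp only [dgrad, Pi.add_apply]; ring
  map_smul' c u := by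
    simp only [Finset.mul_sum, RingHom.id_apply, smul_eq_mul]
    refine Finset.sum_congr rfl fun x _ => Finset.sum_congr rfl fun i _ => ?_
    simp only [dgrad, Pi.smul_apply, smul_eq_mul]; ring

lemma gradL_self (P : Finset (Lat 2)) (G : Lat 2 → ℝ) : gradL P G G = ∑ x ∈ P, gsq G x := by
  refine Finset.sum_congr rfl fun x _ => Finset.sum_congr rfl fun i _ => ?_
  ring

lemma abs_gradL_le (P : Finset (Lat 2)) (G u : Lat 2 → ℝ) :
    |gradL P G u| ≤ √(∑ x ∈ P, gsq G x) * √(∑ x ∈ P, gsq u x) := by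
  have h1 : |gradL P G u| ≤ ∑ x ∈ P, √(gsq G x) * √(gsq u x) := by
    refine (Finset.abs_sum_le_sum_abs _ _).trans (Finset.sum_le_sum fun x _ => ?_)
    rw [abs_le]
    constructor
    · have := Real.sum_mul_le_sqrt_mul_sqrt Finset.univ (fun i => -dgrad G x i) (dgrad u x)
      simp only [neg_mul, Finset.sum_neg_distrib, neg_sq] at this
      unfold gsq; linarith
    · exact Real.sum_mul_le_sqrt_mul_sqrt Finset.univ (dgrad G x) (dgrad u x)
  have h2 := Real.sum_mul_le_sqrt_mul_sqrt P (fun x => √(gsq G x)) (fun x => √(gsq u x))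
  simp only [Real.sq_sqrt (gsq_nonneg _ _)] at h2
  exact h1.trans h2

lemma sum_le_tsum_gsq {u : Lat 2 → ℝ} (hu : L2 u) (P : Finset (Lat 2)) :
    ∑ x ∈ P, gsq u x ≤ ∑' x, gsq u x := hu.gsq.sum_le_tsum _ fun x _ => gsq_nonneg u x

lemma abs_avg_diff (u : Lat 2 → ℝ) (hu : L2 u) (x : Lat 2) (r : ℕ) {Q : Finset (Lat 2)}
    (hQ : Q.Nonempty) (hQB : Q ⊆ Bx x r) {k : ℝ} (hk0 : 0 ≤ k)
    (hk : (2 * (r : ℝ) + 1) ^ 2 ≤ k ^ 2 * Q.card) :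
    |avg (Bx x r) u - avg Q u| ≤ 2 * k * √(∑' z, gsq u z) := by
  have hD0 : 0 ≤ ∑' z, gsq u z := tsum_nonneg fun x => gsq_nonneg u x
  apply abs_le_of_sq_le_sq _ (by positivity)
  refine (avg_diff u x r hQ hQB hk).trans ?_
  rw [mul_pow, mul_pow, Real.sq_sqrt hD0]
  have := mul_le_mul_of_nonneg_left (sum_le_tsum_gsq hu (Bx x r)) (by positivity : 0 ≤ 4 * k ^ 2)
  linarith

/-- A square of radius `m` centred at distance `8 m` from the origin. -/
def farBox (m : ℕ) : Finset (Lat 2) := Bx ![8 * (m : ℤ), 0] m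

lemma farBox_nonempty (m : ℕ) : (farBox m).Nonempty := ⟨_, self_mem_Bx _ _⟩

lemma farBox_subset (m : ℕ) : farBox m ⊆ Bx 0 (9 * m) := fun y hy => by
  rw [farBox, mem_Bx'] at hy
  rw [mem_Bx']
  simp at hy ⊢
  omega

lemma le_nrm_of_mem_farBox {m : ℕ} {y : Lat 2} (hy : y ∈ farBox m) : 7 * m ≤ nrm y := by
  rw [farBox, mem_Bx'] at hy
  rw [nrm]
  simp at hy
  omega

lemma avg_eq_zero {Q : Finset (Lat 2)} {u : Lat 2 → ℝ} (h : ∀ y ∈ Q, u y = 0) : avg Q u = 0 := by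
  rw [avg, Finset.sum_eq_zero h, zero_div]

/-- The equation whose right-hand side is the difference of the means over two consecutive far
boxes has a solution of bounded energy, homogeneous on the square of radius `7 m`. Testing it against
`v` represents the difference of the means of `v`. -/
lemma exists_avg_solution {lam T : ℝ} (hlam : 0 < lam) (hT : 0 < T)
    {a : Lat 2 → Fin 2 → Fin 2 → ℝ} (h : Ell lam a) {m : ℕ} (hm : 1 ≤ m) :
    ∃ w, L2 w ∧ (∀ φ, L2 φ → form T a w φ = avg (farBox m) φ - avg (farBox (2 * m)) φ) ∧
      ∑' x, gsq w x ≤ (54 / lam) ^ 2 ∧ Harm T a w {y | nrm y < 7 * m} := by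
  have hmR : (1 : ℝ) ≤ m := by exact_mod_cast hm
  obtain ⟨w, hw, hsol, hen, -⟩ := exists_solution_energy hlam hT h
    (avgL (farBox m) - avgL (farBox (2 * m))) (b := 54) (by norm_num) (fun φ hφ => by
      have h1 := abs_avg_diff φ hφ 0 (9 * (2 * m)) (farBox_nonempty m)
        ((farBox_subset m).trans (Bx_mono 0 (by omega))) (k := 18) (by norm_num) (by
          rw [farBox, card_Bx_real]; push_cast
          nlinarith)
      have h2 := abs_avg_diff φ hφ 0 (9 * (2 * m)) (farBox_nonempty (2 * m))
        (farBox_subset (2 * m)) (k := 9) (by norm_num) (by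
          rw [farBox, card_Bx_real]; push_cast
          nlinarith)
      have h3 := abs_sub_le (avg (farBox m) φ) (avg (Bx 0 (9 * (2 * m))) φ) (avg (farBox (2 * m)) φ)
      rw [abs_sub_comm (avg (farBox m) φ) (avg (Bx 0 (9 * (2 * m))) φ)] at h3
      have e : (avgL (farBox m) - avgL (farBox (2 * m))) φ
        = avg (farBox m) φ - avg (farBox (2 * m)) φ := rfl
      rw [e]; linarith)
  refine ⟨w, hw, hsol, hen, fun φ hφ h0 => ?_⟩
  rw [hsol φ hφ]
  have e1 : avg (farBox m) φ = 0 := avg_eq_zero fun y hy => h0 y (by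
    have := le_nrm_of_mem_farBox hy; simp only [Set.mem_ofPred_eq]; omega)
  have e2 : avg (farBox (2 * m)) φ = 0 := avg_eq_zero fun y hy => h0 y (by
    have := le_nrm_of_mem_farBox hy; simp only [Set.mem_ofPred_eq]; omega)
  change avg (farBox m) φ - avg (farBox (2 * m)) φ = 0
  rw [e1, e2, sub_zero]

/-- The Dirichlet energy of the Green's function on a dyadic annulus is bounded. By duality it is
the value at the pole of the solution `v` of the transposed equation whose right-hand side is the
divergence of the gradient of `G` on the annulus. -/
lemma annulus_energy {lam : ℝ} (hlam0 : 0 < lam) (hlam1 : lam ≤ 1) :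
    ∃ C : ℝ, 1 ≤ C ∧ ∀ T, 0 < T → ∀ S : ℕ, T ≤ 4 * (S : ℝ) ^ 2 →
      ∀ a : Lat 2 → Fin 2 → Fin 2 → ℝ, Ell lam a → ∀ G, L2 G →
      (∀ φ, L2 φ → form T a G φ = φ 0) →
      ∀ (n : ℕ) (P : Finset (Lat 2)), (∀ x ∈ P, n ≤ nrm x ∧ nrm x ≤ 4 * n + 4) →
      ∑ x ∈ P, gsq G x ≤ C := by
  obtain ⟨C1, hC1, hcen⟩ := center_sub_avg_le hlam0 hlam1
  obtain ⟨κ, hκ0, hκ1, C2, hC2, hdec⟩ := interior_decay hlam0 hlam1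
  set ε : ℝ := (1 / 2 : ℝ) ^ (κ / 2) with hε
  have hε0 : 0 < ε := by positivity
  have hε1 : ε < 1 := Real.rpow_lt_one (by norm_num) (by norm_num) (by linarith)
  set A := √(2 * C2) * (54 / lam) with hA
  set K := C1 / lam + 92 / lam + A * (1 / (1 - ε)) + 1 / lam with hK
  have hA0 : 0 ≤ A := by positivity
  have h1ε : 0 ≤ 1 / (1 - ε) := one_div_nonneg.2 (by linarith)
  have hK1 : 1 ≤ K := by
    have : 1 ≤ 1 / lam := by rw [le_div_iff₀ hlam0]; linarith
    have : 0 ≤ C1 / lam := by positivity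
    have : 0 ≤ 92 / lam := by positivity
    have := mul_nonneg hA0 h1ε
    linarith
  refine ⟨K ^ 2, one_le_pow₀ hK1, ?_⟩
  intro T hT S hTS a h G hG2 hG n P hP
  set N := ∑ x ∈ P, gsq G x with hN
  have hN0 : 0 ≤ N := Finset.sum_nonneg fun x _ => gsq_nonneg G x
  obtain ⟨v, hv, hsol, hen, hmass⟩ := exists_solution_energy hlam0 hT h.transp (gradL P G)
    (b := √N) (Real.sqrt_nonneg _) (fun φ hφ => (abs_gradL_le P G φ).trans
      (mul_le_mul_of_nonneg_left (Real.sqrt_le_sqrt (sum_le_tsum_gsq hφ P)) (Real.sqrt_nonneg _)))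
  have hdual : ∀ φ, L2 φ → form T a φ v = gradL P G φ := fun φ hφ => by
    rw [← form_transp]; exact hsol φ hφ
  have hv0 : v 0 = N := by rw [← hG v hv, hdual G hG2, gradL_self]
  have hharm : Harm T (transp a) v {y | nrm y < n - 1} := fun φ hφ h0 => by
    rw [hsol φ hφ]
    refine Finset.sum_eq_zero fun x hx => Finset.sum_eq_zero fun i _ => ?_
    have h1 := (hP x hx).1
    have h2 := (nrm_step x i).2
    simp only [dgrad]
    rw [h0 x (by simp only [Set.mem_ofPred_eq]; omega),
      h0 (x + unitv 2 i) (by simp only [Set.mem_ofPred_eq]; omega)]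
    ring
  have hsqD : √(∑' x, gsq v x) ≤ √N / lam := by
    rw [← Real.sqrt_sq (by positivity : 0 ≤ √N / lam)]
    exact Real.sqrt_le_sqrt hen
  set sD := √(∑' x, gsq v x) with hsD
  -- from the pole to the mean on the hole of the annulus
  have s1 : |v 0 - avg (Bx 0 (n - 1)) v| ≤ C1 * sD :=
    hcen T hT _ h.transp v (n - 1) hharm _ (sum_le_tsum_gsq hv _)
  -- from there to the first far box
  set m := n + 1 with hm
  have s2 : |avg (Bx 0 (9 * m)) v - avg (Bx 0 (n - 1)) v| ≤ 2 * 37 * sD := by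
    refine abs_avg_diff v hv 0 (9 * m) ⟨0, self_mem_Bx 0 _⟩ (Bx_mono 0 (by omega)) (by norm_num) ?_
    rw [card_Bx_real]
    have : 2 * ((9 * m : ℕ) : ℝ) + 1 ≤ 37 * (2 * ((n - 1 : ℕ) : ℝ) + 1) := by
      exact_mod_cast (by omega : 2 * (9 * m) + 1 ≤ 37 * (2 * (n - 1) + 1))
    calc _ ≤ (37 * (2 * ((n - 1 : ℕ) : ℝ) + 1)) ^ 2 := pow_le_pow_left₀ (by positivity) this 2
      _ = _ := by ring
  have s3 : |avg (Bx 0 (9 * m)) v - avg (farBox m) v| ≤ 2 * 9 * sD := by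
    refine abs_avg_diff v hv 0 (9 * m) (farBox_nonempty m) (farBox_subset m) (by norm_num) ?_
    rw [farBox, card_Bx_real]; push_cast
    nlinarith [(Nat.cast_nonneg m : (0 : ℝ) ≤ m)]
  -- along the far boxes
  have hstep : ∀ j : ℕ, |avg (farBox (2 ^ j * m)) v - avg (farBox (2 ^ (j + 1) * m)) v|
      ≤ √N * (A * ε ^ j) := by
    intro j
    set μ := 2 ^ j * m with hμ
    have h2j : 1 ≤ 2 ^ j := Nat.one_le_two_pow
    have hμm : m ≤ μ := Nat.le_mul_of_pos_left m h2j
    obtain ⟨w, hw, hwsol, hwen, hwharm⟩ := exists_avg_solution hlam0 hT h (m := μ) (by omega)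
    have e : 2 ^ (j + 1) * m = 2 * μ := by rw [hμ, pow_succ]; ring
    rw [e, ← hwsol v hv, hdual w hw]
    refine (abs_gradL_le P G w).trans ?_
    refine mul_le_mul_of_nonneg_left ?_ (Real.sqrt_nonneg _)
    have h1 := hdec T hT a h w (7 * μ) hwharm _ ((sum_le_tsum_gsq hw _).trans hwen) (4 * m)
      (by omega)
    have h2 : ∑ x ∈ P, gsq w x ≤ ∑ x ∈ Bx 0 (4 * m), gsq w x :=
      sum_mono_Bx (gsq_nonneg w) fun x hx => by
        rw [mem_Bx, sub_zero]; have := (hP x hx).2; omega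
    have h3 : (2 * ((4 * m : ℕ) : ℝ) + 1) / ((7 * μ : ℕ) + 1) ≤ 2 * (1 / 2) ^ j := by
      rw [div_le_iff₀ (by positivity), hμ]
      push_cast
      have hm1 : (1 : ℝ) ≤ m := by exact_mod_cast (by omega : 1 ≤ m)
      have hp : (0 : ℝ) < (1 / 2) ^ j := by positivity
      have e : (1 / 2 : ℝ) ^ j * 2 ^ j = 1 := by rw [← mul_pow]; norm_num
      have : 2 * (1 / 2 : ℝ) ^ j * (7 * (2 ^ j * m) + 1) = 14 * m + 2 * (1 / 2) ^ j := by
        linear_combination 14 * (m : ℝ) * e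
      rw [this]; linarith
    have h4 : ((2 * ((4 * m : ℕ) : ℝ) + 1) / ((7 * μ : ℕ) + 1)) ^ κ ≤ 2 * (ε ^ j) ^ 2 := by
      calc _ ≤ (2 * (1 / 2 : ℝ) ^ j) ^ κ := Real.rpow_le_rpow (by positivity) h3 hκ0.le
        _ = 2 ^ κ * ((1 / 2 : ℝ) ^ j) ^ κ := Real.mul_rpow (by norm_num) (by positivity)
        _ ≤ 2 * ((1 / 2 : ℝ) ^ j) ^ κ := by
            gcongr
            calc (2 : ℝ) ^ κ ≤ 2 ^ (1 : ℝ) := Real.rpow_le_rpow_of_exponent_le (by norm_num) hκ1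
              _ = 2 := Real.rpow_one _
        _ = 2 * (ε ^ j) ^ 2 := by
            congr 1
            rw [hε, ← Real.rpow_natCast, ← Real.rpow_natCast, ← Real.rpow_natCast,
              ← Real.rpow_mul (by positivity), ← Real.rpow_mul (by positivity),
              ← Real.rpow_mul (by positivity)]
            congr 1; push_cast; ring
    rw [← Real.sqrt_sq (by positivity : 0 ≤ A * ε ^ j)]
    refine Real.sqrt_le_sqrt (h2.trans (h1.trans ?_))
    calc _ ≤ C2 * (54 / lam) ^ 2 * (2 * (ε ^ j) ^ 2) :=
          mul_le_mul_of_nonneg_left h4 (by positivity)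
      _ = _ := by
          rw [hA, mul_pow, mul_pow, Real.sq_sqrt (by positivity)]; ring
  have s4 : |avg (farBox m) v - avg (farBox (2 ^ S * m)) v| ≤ √N * (A * (1 / (1 - ε))) := by
    have e := Finset.sum_range_sub' (fun j => avg (farBox (2 ^ j * m)) v) S
    simp only [pow_zero, one_mul] at e
    rw [← e]
    refine (Finset.abs_sum_le_sum_abs _ _).trans ((Finset.sum_le_sum fun j _ => hstep j).trans ?_)
    rw [← Finset.mul_sum, ← Finset.mul_sum]
    have := (summable_geometric_of_lt_one hε0.le hε1).sum_le_tsum (Finset.range S)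
      fun _ _ => by positivity
    rw [tsum_geometric_of_lt_one hε0.le hε1, ← one_div] at this
    gcongr
  -- the last far box has radius at least `√T / 2`
  have s5 : |avg (farBox (2 ^ S * m)) v| ≤ √N / lam := by
    apply abs_le_of_sq_le_sq _ (by positivity)
    have h1 := sq_sub_avg_le (farBox_nonempty (2 ^ S * m)) v 0
    simp only [zero_sub, neg_sq] at h1
    refine h1.trans ?_
    set μ := 2 ^ S * m with hμ
    have hSμ : (S : ℝ) ≤ μ := by
      have h1 : S < 2 ^ S := Nat.lt_two_pow_self
      have h2 : 2 ^ S ≤ μ := Nat.le_mul_of_pos_right _ (by omega)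
      exact_mod_cast (by omega : S ≤ μ)
    rw [farBox, card_Bx_real, div_le_iff₀ (by positivity), div_pow, Real.sq_sqrt hN0]
    rw [Real.sq_sqrt hN0] at hmass
    have h2 : ∑ y ∈ Bx ![8 * (μ : ℤ), 0] μ, v y ^ 2 ≤ T * N / lam :=
      (hv.sum_le_tsum _ fun _ _ => sq_nonneg _).trans hmass
    refine h2.trans ?_
    have h3 : T ≤ (2 * (μ : ℝ) + 1) ^ 2 := by
      have : (2 * (S : ℝ)) ^ 2 ≤ (2 * (μ : ℝ) + 1) ^ 2 :=
        pow_le_pow_left₀ (by positivity) (by linarith) 2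
      nlinarith
    calc T * N / lam ≤ (2 * (μ : ℝ) + 1) ^ 2 * N / lam := by gcongr
      _ = N / lam * (2 * (μ : ℝ) + 1) ^ 2 := by ring
      _ ≤ _ := by
          gcongr
          nlinarith
  have htot : N ≤ √N * K := by
    have t1 : v 0 ≤ |v 0 - avg (Bx 0 (n - 1)) v| + |avg (Bx 0 (9 * m)) v - avg (Bx 0 (n - 1)) v|
        + |avg (Bx 0 (9 * m)) v - avg (farBox m) v|
        + |avg (farBox m) v - avg (farBox (2 ^ S * m)) v| + |avg (farBox (2 ^ S * m)) v| := by
      have q1 := le_abs_self (v 0 - avg (Bx 0 (n - 1)) v)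
      have q2 := neg_abs_le (avg (Bx 0 (9 * m)) v - avg (Bx 0 (n - 1)) v)
      have q3 := le_abs_self (avg (Bx 0 (9 * m)) v - avg (farBox m) v)
      have q4 := le_abs_self (avg (farBox m) v - avg (farBox (2 ^ S * m)) v)
      have q5 := le_abs_self (avg (farBox (2 ^ S * m)) v)
      linarith
    have t2 : C1 * sD ≤ C1 * (√N / lam) := mul_le_mul_of_nonneg_left hsqD (by linarith)
    have e : √N * K = C1 * (√N / lam) + 92 * (√N / lam) + √N * (A * (1 / (1 - ε))) + √N / lam := by
      rw [hK]; ring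
    rw [e]; linarith [hv0]
  have hsN : √N ≤ K := by
    rcases (Real.sqrt_nonneg N).eq_or_lt with h0 | h0
    · rw [← h0]; linarith
    · have : √N * √N ≤ √N * K := by rw [Real.mul_self_sqrt hN0]; exact htot
      exact le_of_mul_le_mul_left this h0
  rw [← Real.sq_sqrt hN0]
  exact pow_le_pow_left₀ (Real.sqrt_nonneg _) hsN 2

/-! ### The region beyond distance `√T` -/

/-- Cutoff function: zero on the square of radius `S`, one from distance `2 S` on. -/
def farCut (S : ℕ) (y : Lat 2) : ℝ := max (min ((nrm y - S) / S) 1) 0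

lemma farCut_nonneg (S : ℕ) (y : Lat 2) : 0 ≤ farCut S y := le_max_right _ _

lemma farCut_le_one (S : ℕ) (y : Lat 2) : farCut S y ≤ 1 :=
  max_le (min_le_right _ _) zero_le_one

lemma farCut_eq_one {S : ℕ} (hS : 1 ≤ S) {y : Lat 2} (h : 2 * S ≤ nrm y) : farCut S y = 1 := by
  have h' : 2 * (S : ℝ) ≤ nrm y := by exact_mod_cast h
  have hS' : (0 : ℝ) < S := by exact_mod_cast hS
  have : (1 : ℝ) ≤ (nrm y - S) / S := by rw [le_div_iff₀ hS']; linarith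
  rw [farCut, min_eq_right this]; norm_num

lemma farCut_eq_zero {S : ℕ} {y : Lat 2} (h : nrm y ≤ S) : farCut S y = 0 := by
  have h' : (nrm y : ℝ) ≤ S := by exact_mod_cast h
  rw [farCut]
  apply max_eq_right
  refine (min_le_left _ _).trans (div_nonpos_of_nonpos_of_nonneg (by linarith) (by positivity))

lemma abs_farCut_step {S : ℕ} (hS : 1 ≤ S) (y : Lat 2) (i : Fin 2) :
    |farCut S (y + unitv 2 i) - farCut S y| ≤ 1 / S := by
  have hr' : (0 : ℝ) < S := by exact_mod_cast hS
  refine (abs_clamp_sub_le _ _).trans ?_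
  rw [← sub_div, abs_div, abs_of_pos hr']
  gcongr
  have := abs_nrm_step 0 y i
  simp only [sub_zero] at this
  have e : ((nrm (y + unitv 2 i) : ℝ) - S) - (nrm y - S) = nrm (y + unitv 2 i) - nrm y := by ring
  rw [e]; exact this

/-- The annulus outside of which `farCut S` has vanishing gradient. -/
def farAnn (S : ℕ) : Finset (Lat 2) := (Bx 0 (2 * S)).filter fun y => S - 1 ≤ nrm y

lemma farCut_step_eq {S : ℕ} (hS : 1 ≤ S) {y : Lat 2} (hy : y ∉ farAnn S) (i : Fin 2) :
    farCut S (y + unitv 2 i) = farCut S y := by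
  have hn := nrm_step y i
  simp only [farAnn, Finset.mem_filter, mem_Bx, sub_zero, not_and_or, not_le] at hy
  rcases hy with hy | hy
  · rw [farCut_eq_one hS (by omega), farCut_eq_one hS (by omega)]
  · rw [farCut_eq_zero (by omega), farCut_eq_zero (by omega)]

/-- The pointwise estimate for the test function `χ² G`. The gradient of the cutoff costs
`|χ G| |∇G| / S`, which the zeroth-order term absorbs because `S` is comparable to `√T`. -/
lemma far_pointwise {lam T : ℝ} (hT : 0 < T) {S : ℕ} (hS : 1 ≤ S) (hTS : T ≤ 4 * (S : ℝ) ^ 2)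
    {a : Lat 2 → Fin 2 → Fin 2 → ℝ} (h : Ell lam a) (G : Lat 2 → ℝ) (y : Lat 2) :
    lam * (farCut S y ^ 2 * gsq G y)
      - 1 / (8 * T) * (2 * (farCut S y * G y) ^ 2
          + ∑ i, (farCut S (y + unitv 2 i) * G (y + unitv 2 i)) ^ 2)
      - 34 * (if y ∈ farAnn S then gsq G y else 0)
      ≤ bil (a y) (dgrad (fun z => farCut S z * (farCut S z * G z)) y) (dgrad G y) := by
  have hS' : (1 : ℝ) ≤ S := by exact_mod_cast hS
  set χ := farCut S with hχ
  set ζ : Fin 2 → ℝ := fun i => G (y + unitv 2 i) * (χ (y + unitv 2 i) ^ 2 - χ y ^ 2) with hζ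
  have e1 : dgrad (fun z => χ z * (χ z * G z)) y = fun i => χ y ^ 2 * dgrad G y i + ζ i := by
    funext i; simp only [dgrad, hζ]; ring
  rw [e1, bil_add_left, bil_smul_left]
  have h1 := mul_le_mul_of_nonneg_left (h.1 y (dgrad G y)) (sq_nonneg (χ y))
  have h2 := h.2 y ζ (dgrad G y)
  set f := √(gsq G y) with hf
  have hf0 : 0 ≤ f := Real.sqrt_nonneg _
  have hf2 : f ^ 2 = gsq G y := Real.sq_sqrt (gsq_nonneg G y)
  have e7 : χ y ^ 2 * (lam * ∑ i, dgrad G y i ^ 2) = lam * (χ y ^ 2 * gsq G y) := by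
    unfold gsq; ring
  rw [e7] at h1
  have h9 := (abs_le.1 h2).1
  have hpos : 0 ≤ 1 / (8 * T) * (2 * (χ y * G y) ^ 2
      + ∑ i, (χ (y + unitv 2 i) * G (y + unitv 2 i)) ^ 2) :=
    mul_nonneg (by positivity) (add_nonneg (by positivity)
      (Finset.sum_nonneg fun _ _ => sq_nonneg _))
  by_cases hy : y ∈ farAnn S
  · rw [if_pos hy]
    have hz : ∀ i, |ζ i| ≤ 1 / S * |χ y * G y| + 1 / S * |χ (y + unitv 2 i) * G (y + unitv 2 i)|
        + f := by
      intro i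
      have k := abs_farCut_step hS y i
      rw [← hχ] at k
      have hc0 := farCut_nonneg S y
      have hc1 := farCut_le_one S y
      rw [← hχ] at hc0 hc1
      have hD : |dgrad G y i| ≤ f := abs_dgrad_le G y i
      have e : ζ i = (χ (y + unitv 2 i) - χ y) * (χ y * G y + χ y * dgrad G y i
          + χ (y + unitv 2 i) * G (y + unitv 2 i)) := by
        simp only [hζ, dgrad]; ring
      rw [e, abs_mul]
      have k2 : |χ y * G y + χ y * dgrad G y i + χ (y + unitv 2 i) * G (y + unitv 2 i)|
          ≤ |χ y * G y| + f + |χ (y + unitv 2 i) * G (y + unitv 2 i)| := by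
        refine (abs_add_three _ _ _).trans ?_
        have : |χ y * dgrad G y i| ≤ f := by
          rw [abs_mul, abs_of_nonneg hc0]
          exact (mul_le_of_le_one_left (abs_nonneg _) hc1).trans hD
        linarith
      refine (mul_le_mul k k2 (abs_nonneg _) (by positivity)).trans ?_
      have : 1 / (S : ℝ) * f ≤ f := mul_le_of_le_one_left hf0 (by
        rw [div_le_one (by positivity)]; exact hS')
      linarith
    have hsq : √(∑ i, ζ i ^ 2) ≤ |ζ 0| + |ζ 1| := by
      rw [Fin.sum_univ_two]
      refine Real.sqrt_le_iff.2 ⟨by positivity, ?_⟩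
      rw [← sq_abs (ζ 0), ← sq_abs (ζ 1)]
      nlinarith [abs_nonneg (ζ 0), abs_nonneg (ζ 1)]
    have young : ∀ m : ℝ, 1 / S * |m| * f ≤ 1 / (8 * T) * m ^ 2 + 8 * f ^ 2 := by
      intro m
      have k1 : (1 / S * |m|) ^ 2 ≤ 4 / T * m ^ 2 := by
        rw [mul_pow, sq_abs]
        refine mul_le_mul_of_nonneg_right ?_ (sq_nonneg _)
        rw [div_pow, one_pow, div_le_div_iff₀ (by positivity) hT]
        linarith
      have e : 1 / (8 * T) * m ^ 2 = 1 / 32 * (4 / T * m ^ 2) := by field_simp; ring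
      rw [e]
      nlinarith [sq_nonneg (1 / S * |m| - 16 * f)]
    have hcross : √(∑ i, ζ i ^ 2) * √(∑ i, dgrad G y i ^ 2)
        ≤ 1 / (8 * T) * (2 * (χ y * G y) ^ 2
          + ∑ i, (χ (y + unitv 2 i) * G (y + unitv 2 i)) ^ 2) + 34 * f ^ 2 := by
      have k : √(∑ i, ζ i ^ 2) * f ≤ (|ζ 0| + |ζ 1|) * f := mul_le_mul_of_nonneg_right hsq hf0
      have k0 := mul_le_mul_of_nonneg_right (hz 0) hf0
      have k1 := mul_le_mul_of_nonneg_right (hz 1) hf0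
      have y0 := young (χ y * G y)
      have y1 := young (χ (y + unitv 2 0) * G (y + unitv 2 0))
      have y2 := young (χ (y + unitv 2 1) * G (y + unitv 2 1))
      rw [Fin.sum_univ_two (fun i => (χ (y + unitv 2 i) * G (y + unitv 2 i)) ^ 2)]
      have : √(∑ i, dgrad G y i ^ 2) = f := rfl
      rw [this]
      linarith
    rw [← hf2]
    rw [← hf2] at h1
    linarith
  · rw [if_neg hy]
    have : ∑ i, ζ i ^ 2 = 0 := Finset.sum_eq_zero fun i _ => by
      simp only [hζ]; rw [hχ, farCut_step_eq hS hy i]; ring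
    rw [this, Real.sqrt_zero, zero_mul] at h9
    linarith

/-- Beyond distance `2 S ≥ √T`, the energy of `G` is bounded and `∑ G²` is at most of order `T`. -/
lemma far_energy {lam : ℝ} (hlam0 : 0 < lam) (hlam1 : lam ≤ 1) :
    ∃ C : ℝ, 1 ≤ C ∧ ∀ T : ℝ, 0 < T → ∀ S : ℕ, 1 ≤ S → T ≤ 4 * (S : ℝ) ^ 2 →
      ∀ a, Ell lam a → ∀ G : Lat 2 → ℝ, L2 G → (∀ φ, L2 φ → form T a G φ = φ 0) →
      ∀ P : Finset (Lat 2), (∀ x ∈ P, 2 * S ≤ nrm x) →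
        ∑ x ∈ P, G x ^ 2 ≤ C * T ∧ ∑ x ∈ P, gsq G x ≤ C := by
  obtain ⟨C, hC1, hC⟩ := annulus_energy hlam0 hlam1
  refine ⟨68 * C / lam, by rw [le_div_iff₀ hlam0]; linarith, ?_⟩
  intro T hT S hS hTS a h G hG hG0 P hP
  set χ := farCut S with hχ
  have hχ0 : ∀ y, 0 ≤ χ y := farCut_nonneg S
  have hχ1 : ∀ y, χ y ≤ 1 := farCut_le_one S
  have hχb : ∀ y, |χ y| ≤ 1 := fun y => by rw [abs_of_nonneg (hχ0 y)]; exact hχ1 y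
  set m : Lat 2 → ℝ := fun y => χ y * G y with hm
  have hm2 : L2 m := hG.mul_bdd hχb
  set φ : Lat 2 → ℝ := fun y => χ y * m y with hφ
  have hφ2 : L2 φ := hm2.mul_bdd hχb
  have hφ0 : φ 0 = 0 := by
    simp only [hφ, hχ]; rw [farCut_eq_zero (by rw [nrm_zero]; omega)]; ring
  have htest := hG0 φ hφ2
  rw [hφ0] at htest
  unfold form at htest
  have hsm : Summable fun y => m y ^ 2 := hm2
  have e1 : (fun y => G y * φ y) = fun y => m y ^ 2 := by
    funext y; simp only [hφ, hm]; ring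
  rw [e1] at htest
  have hsg : Summable fun y => χ y ^ 2 * gsq G y :=
    Summable.of_nonneg_of_le (fun y => mul_nonneg (sq_nonneg _) (gsq_nonneg G y))
      (fun y => mul_le_of_le_one_left (gsq_nonneg G y) (pow_le_one₀ (hχ0 y) (hχ1 y))) hG.gsq
  have hsm' : ∀ i, Summable fun y => m (y + unitv 2 i) ^ 2 := fun i => hm2.shift _
  have hsM : Summable fun y => 2 * m y ^ 2 + ∑ i, m (y + unitv 2 i) ^ 2 :=
    (hsm.mul_left 2).add (summable_sum fun i _ => hsm' i)
  have hsA : Summable fun y => if y ∈ farAnn S then gsq G y else 0 :=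
    summable_of_ne_finset_zero (s := farAnn S) fun y hy => if_neg hy
  have hsB : Summable fun y => bil (a y) (dgrad φ y) (dgrad G y) := h.summable hG hφ2
  have hle := ((((hsg.mul_left lam).sub (hsM.mul_left (1 / (8 * T)))).sub
    (hsA.mul_left 34))).tsum_le_tsum (fun y => far_pointwise hT hS hTS h G y) hsB
  have hLHS : ∑' y, (lam * (χ y ^ 2 * gsq G y)
      - 1 / (8 * T) * (2 * m y ^ 2 + ∑ i, m (y + unitv 2 i) ^ 2)
      - 34 * (if y ∈ farAnn S then gsq G y else 0))
      = lam * ∑' y, χ y ^ 2 * gsq G y - 1 / (8 * T) * (4 * ∑' y, m y ^ 2)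
        - 34 * ∑ y ∈ farAnn S, gsq G y := by
    rw [((hsg.mul_left lam).sub (hsM.mul_left _)).tsum_sub (hsA.mul_left 34),
      (hsg.mul_left lam).tsum_sub (hsM.mul_left _), tsum_mul_left, tsum_mul_left, tsum_mul_left,
      (hsm.mul_left 2).tsum_add (summable_sum fun i _ => hsm' i), tsum_mul_left,
      Summable.tsum_finsetSum fun i _ => hsm' i]
    have e2 : ∀ i, ∑' y, m (y + unitv 2 i) ^ 2 = ∑' y, m y ^ 2 :=
      fun i => tsum_shift (fun y => m y ^ 2) (unitv 2 i)
    rw [Fin.sum_univ_two, e2, e2, tsum_eq_sum (s := farAnn S) fun y hy => if_neg hy,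
      Finset.sum_congr rfl fun y hy => if_pos hy]
    ring
  have hle' := hLHS.symm.le.trans hle
  have hA : ∑ y ∈ farAnn S, gsq G y ≤ C := by
    refine hC T hT S hTS a h G hG hG0 (S - 1) _ fun x hx => ?_
    simp only [farAnn, Finset.mem_filter, mem_Bx, sub_zero] at hx
    omega
  set M := ∑' y, m y ^ 2 with hM
  set E := ∑' y, χ y ^ 2 * gsq G y with hE
  have hM0 : 0 ≤ M := tsum_nonneg fun y => sq_nonneg _
  have hE0 : 0 ≤ E := tsum_nonneg fun y => mul_nonneg (sq_nonneg _) (gsq_nonneg G y)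
  have key : lam * E + 1 / (2 * T) * M ≤ 34 * C := by
    have e : 1 / T * M = 1 / (2 * T) * M + 1 / (8 * T) * (4 * M) := by field_simp; ring
    rw [e] at htest
    linarith
  have hPχ : ∀ x ∈ P, χ x = 1 := fun x hx => farCut_eq_one hS (hP x hx)
  have hPM : ∑ x ∈ P, G x ^ 2 ≤ M := by
    refine le_trans (le_of_eq (Finset.sum_congr rfl fun x hx => ?_))
      (hsm.sum_le_tsum P fun _ _ => sq_nonneg _)
    simp only [hm]; rw [hPχ x hx, one_mul]
  have hPE : ∑ x ∈ P, gsq G x ≤ E := by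
    refine le_trans (le_of_eq (Finset.sum_congr rfl fun x hx => ?_))
      (hsg.sum_le_tsum P fun y _ => mul_nonneg (sq_nonneg _) (gsq_nonneg G y))
    rw [hPχ x hx]; ring
  have hE1 : E ≤ 34 * C / lam := by
    rw [le_div_iff₀ hlam0]
    have : 0 ≤ 1 / (2 * T) * M := by positivity
    linarith
  have hM1 : M ≤ 68 * C * T := by
    have : 1 / (2 * T) * M ≤ 34 * C := by nlinarith
    rw [one_div, inv_mul_le_iff₀ (by positivity)] at this
    linarith
  refine ⟨hPM.trans (hM1.trans ?_), hPE.trans (hE1.trans ?_)⟩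
  · gcongr
    rw [le_div_iff₀ hlam0]
    exact mul_le_of_le_one_right (by positivity) hlam1
  · gcongr; norm_num

/-! ### Dimension two -/

/-- The total energy of the Green's function grows at most logarithmically: there are about
`log T` dyadic annuli up to distance `√T`. -/
lemma green_energy_two {lam : ℝ} (hlam0 : 0 < lam) (hlam1 : lam ≤ 1) :
    ∃ C : ℝ, 1 ≤ C ∧ ∀ T : ℝ, 2 ≤ T → ∀ S : ℕ, 1 ≤ S → (S : ℝ) ^ 2 ≤ T → T ≤ 4 * (S : ℝ) ^ 2 →
      ∀ a, Ell lam a → ∀ G : Lat 2 → ℝ, L2 G → (∀ φ, L2 φ → form T a G φ = φ 0) →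
      ∑' x, gsq G x ≤ C * Real.log T := by
  obtain ⟨C1, hC1, hA⟩ := annulus_energy hlam0 hlam1
  obtain ⟨C2, hC2, hF⟩ := far_energy hlam0 hlam1
  refine ⟨6 * C1 + 2 * C2, by linarith, ?_⟩
  intro T hT S hS hST hTS a h G hG hG0
  have hT0 : 0 < T := by linarith
  have hS' : (1 : ℝ) ≤ S := by exact_mod_cast hS
  have near : ∀ K : ℕ, ∀ P : Finset (Lat 2), (∀ x ∈ P, nrm x < 4 ^ K) →
      ∑ x ∈ P, gsq G x ≤ (K + 1) * C1 := by
    intro K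
    induction K with
    | zero =>
      intro P hP
      have := hA T hT0 S hTS a h G hG hG0 0 P fun x hx => by
        have := hP x hx
        simp at this; omega
      simpa using this
    | succ K ih =>
      intro P hP
      rw [← Finset.sum_filter_add_sum_filter_not P (fun x => nrm x < 4 ^ K)]
      have k1 := ih (P.filter fun x => nrm x < 4 ^ K) fun x hx => (Finset.mem_filter.1 hx).2
      have k2 := hA T hT0 S hTS a h G hG hG0 (4 ^ K) (P.filter fun x => ¬ nrm x < 4 ^ K)
        fun x hx => by
          rw [Finset.mem_filter] at hx
          have := hP x hx.1
          rw [pow_succ] at this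
          omega
      push_cast
      linarith
  set ℓ := Nat.log 2 S with hℓ
  have hcov : 2 * S ≤ 4 ^ (ℓ + 1) := by
    have h1 : S < 2 ^ (ℓ + 1) := Nat.lt_pow_succ_log_self (by norm_num) S
    have h2 : 2 ^ (ℓ + 1) * 2 ≤ 2 ^ (ℓ + 1) * 2 ^ (ℓ + 1) :=
      Nat.mul_le_mul_left _ (by rw [pow_succ]; have := Nat.one_le_two_pow (n := ℓ); omega)
    have h3 : (4 : ℕ) ^ (ℓ + 1) = 2 ^ (ℓ + 1) * 2 ^ (ℓ + 1) := by rw [← mul_pow]; norm_num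
    omega
  have hl2 : 1 / 2 < Real.log 2 := by have := Real.log_two_gt_d9; linarith
  have hlT : Real.log 2 ≤ Real.log T := Real.log_le_log (by norm_num) hT
  have hℓT : ℓ * Real.log 2 ≤ Real.log T := by
    rw [← Real.log_pow]
    apply Real.log_le_log (by positivity)
    have : (2 : ℕ) ^ ℓ ≤ S := Nat.pow_log_le_self 2 (by omega)
    have : (2 : ℝ) ^ ℓ ≤ S := by exact_mod_cast this
    nlinarith
  have hcount : (ℓ : ℝ) + 2 ≤ 6 * Real.log T := by nlinarith [(Nat.cast_nonneg ℓ : (0 : ℝ) ≤ ℓ)]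
  refine Real.tsum_le_of_sum_le (gsq_nonneg G) fun P => ?_
  rw [← Finset.sum_filter_add_sum_filter_not P (fun x => nrm x < 2 * S)]
  have k1 := near (ℓ + 1) (P.filter fun x => nrm x < 2 * S) fun x hx =>
    lt_of_lt_of_le (Finset.mem_filter.1 hx).2 hcov
  have k2 := (hF T hT0 S hS hTS a h G hG hG0 (P.filter fun x => ¬ nrm x < 2 * S) fun x hx =>
    not_lt.1 (Finset.mem_filter.1 hx).2).2
  push_cast at k1
  have k3 : ((ℓ : ℝ) + 1 + 1) * C1 ≤ 6 * Real.log T * C1 := by gcongr; linarith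
  nlinarith

/-- The weight used in Gehring's lemma: `m + m² / S` with `m = 2 nrm x + 1`. -/
def wt (S : ℕ) (x : Lat 2) : ℝ := (2 * (nrm x : ℝ) + 1) + (2 * (nrm x : ℝ) + 1) ^ 2 / S

lemma wt_le_two_mul {S : ℕ} {x y : Lat 2} (h : 7 * nrm x ≤ 8 * nrm y) : wt S x ≤ 2 * wt S y := by
  have h' : 7 * (nrm x : ℝ) ≤ 8 * nrm y := by exact_mod_cast h
  have h0 : (0 : ℝ) ≤ nrm x := by positivity
  have k1 : 2 * (nrm x : ℝ) + 1 ≤ 8 / 7 * (2 * (nrm y : ℝ) + 1) := by linarith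
  have k2 : (2 * (nrm x : ℝ) + 1) ^ 2 ≤ 2 * (2 * (nrm y : ℝ) + 1) ^ 2 := by
    have := pow_le_pow_left₀ (by positivity) k1 2
    nlinarith [sq_nonneg (2 * (nrm y : ℝ) + 1)]
  have k3 : (2 * (nrm x : ℝ) + 1) ^ 2 / S ≤ 2 * (2 * (nrm y : ℝ) + 1) ^ 2 / S := by gcongr
  have k4 : 2 * (2 * (nrm y : ℝ) + 1) ^ 2 / S = 2 * ((2 * (nrm y : ℝ) + 1) ^ 2 / S) := by ring
  rw [k4] at k3
  unfold wt
  have : (0 : ℝ) ≤ nrm y := by positivity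
  linarith

/-- The gradient of the Green's function satisfies the hypotheses of Gehring's lemma with scale
proportional to the distance to the pole. -/
lemma gehringData_green {lam : ℝ} (hlam0 : 0 < lam) (hlam1 : lam ≤ 1) :
    ∃ E : ℝ, 1 ≤ E ∧ ∀ T : ℝ, 0 < T → ∀ S : ℕ, 1 ≤ S → T ≤ 4 * (S : ℝ) ^ 2 →
      ∀ a, Ell lam a → ∀ G : Lat 2 → ℝ, L2 G → (∀ φ, L2 φ → form T a G φ = φ 0) →
      GehringData (√(Arh lam)) (fun x => √(gsq G x)) (wt S) (fun x => nrm x / 8) E := by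
  obtain ⟨C1, hC1, hA⟩ := annulus_energy hlam0 hlam1
  obtain ⟨C2, hC2, hF⟩ := far_energy hlam0 hlam1
  have hl1 : 1 ≤ 1 / lam ^ 2 := by
    rw [le_div_iff₀ (by positivity), one_mul]; exact pow_le_one₀ hlam0.le hlam1
  set E : ℝ := 72900 * C1 + 174960000 * C2 * (1 / lam ^ 2) with hE
  have hE2 : 0 ≤ 174960000 * C2 * (1 / lam ^ 2) := by positivity
  refine ⟨E, by linarith, ?_⟩
  intro T hT S hS hTS a h G hG hG0
  have hS' : (1 : ℝ) ≤ S := by exact_mod_cast hS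
  have hsq : ∀ x, √(gsq G x) ^ 2 = gsq G x := fun x => Real.sq_sqrt (gsq_nonneg G x)
  have hHarm : ∀ (x : Lat 2) (r : ℕ), 2 * r ≤ nrm x → Harm T a G {y | nrm (y - x) < 2 * r} := by
    intro x r hr φ hφ hφ0
    rw [hG0 φ hφ]
    apply hφ0
    rw [Set.mem_ofPred_eq, zero_sub, nrm_neg]
    omega
  refine ⟨fun x => by positivity, ?_, fun x => by unfold wt; positivity, by linarith, ?_, ?_, ?_⟩
  · simp only [hsq]; exact hG.gsq
  · intro x r hr hrx
    simp only [hsq]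
    rw [Real.sq_sqrt (by have := one_le_Arh hlam0 hlam1; linarith)]
    exact reverse_holder hlam0 hlam1 hT h hr (hHarm x r (by omega))
  · intro x y hy
    rw [mem_Bx] at hy
    have h1 := nrm_add_le (y - x) x
    have h2 := nrm_add_le (x - y) y
    rw [sub_add_cancel] at h1 h2
    rw [nrm_sub_comm] at h2
    exact ⟨wt_le_two_mul (by omega), wt_le_two_mul (by omega)⟩
  · intro x
    simp only [hsq]
    set ρ := nrm x / 8 with hρ
    set m : ℝ := 2 * (nrm x : ℝ) + 1 with hm
    set R : ℝ := 2 * (ρ : ℝ) + 1 with hR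
    have hR1 : 1 ≤ R := by rw [hR]; have : (0 : ℝ) ≤ ρ := by positivity
                           linarith
    have hm0 : 0 < m := by positivity
    have hmR : m ≤ 15 * R := by
      rw [hm, hR]
      exact_mod_cast (by omega : 2 * nrm x + 1 ≤ 15 * (2 * ρ + 1))
    have hw : wt S x = m + m ^ 2 / S := rfl
    have htri : ∀ q, ∀ y ∈ Bx x q, nrm x ≤ nrm y + q ∧ nrm y ≤ nrm x + q := by
      intro q y hy
      rw [mem_Bx] at hy
      have h1 := nrm_add_le (y - x) x
      have h2 := nrm_add_le (x - y) y
      rw [sub_add_cancel] at h1 h2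
      rw [nrm_sub_comm] at h2
      omega
    rcases le_or_gt (nrm x) (8 * S) with hx | hx
    · have hsum : ∑ y ∈ Bx x ρ, gsq G y ≤ C1 := by
        refine hA T hT S hTS a h G hG hG0 (nrm x - ρ) _ fun y hy => ?_
        have := htri _ y hy
        omega
      have hmS : m ≤ 17 * S := by
        have : (nrm x : ℝ) ≤ 8 * S := by exact_mod_cast hx
        rw [hm]; linarith
      have hwm : wt S x ≤ 270 * R := by
        have : m ^ 2 / S ≤ 17 * m := by rw [div_le_iff₀ (by linarith)]; nlinarith
        rw [hw]; linarith
      calc _ ≤ (270 * R) ^ 2 * C1 := by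
            refine mul_le_mul (pow_le_pow_left₀ ?_ hwm 2) hsum ?_ (by positivity)
            · rw [hw]; positivity
            · exact Finset.sum_nonneg fun y _ => gsq_nonneg G y
        _ = 72900 * C1 * R ^ 2 := by ring
        _ ≤ E * R ^ 2 := by gcongr; linarith
    · have hρS : S ≤ ρ := by omega
      have hρ1 : 1 ≤ ρ := by omega
      have hρ' : (1 : ℝ) ≤ ρ := by exact_mod_cast hρ1
      have hcac := caccioppoli hlam0 hlam1 hT h hρ1 (hHarm x ρ (by omega)) 0
        (Finset.sum_nonneg fun y _ => by
          have : G y * (cut x ρ y ^ 2 * (G y - 0)) = (cut x ρ y * G y) ^ 2 := by ring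
          rw [this]; exact sq_nonneg _)
      simp only [sub_zero] at hcac
      have hL2 := (hF T hT S hS hTS a h G hG hG0 (Bx x (2 * ρ + 1)) fun y hy => by
        have := htri _ y hy
        omega).1
      have hsum : ∑ y ∈ Bx x ρ, gsq G y ≤ 24 / lam ^ 2 / ρ ^ 2 * (C2 * (4 * (S : ℝ) ^ 2)) := by
        refine hcac.trans ?_
        gcongr
        exact hL2.trans (by gcongr)
      have hSm : (S : ℝ) ≤ m := by
        have : 8 * (S : ℝ) < nrm x := by exact_mod_cast hx
        rw [hm]; linarith
      have hwm : wt S x ≤ 2 * (15 * R) ^ 2 / S := by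
        have k1 : m ≤ m ^ 2 / S := by rw [le_div_iff₀ (by linarith)]; nlinarith
        have k2 : m ^ 2 / S ≤ (15 * R) ^ 2 / S := by gcongr
        have k3 : 2 * (15 * R) ^ 2 / S = 2 * ((15 * R) ^ 2 / S) := by ring
        rw [hw, k3]; linarith
      have hRρ : R ^ 2 ≤ 9 * ρ ^ 2 := by rw [hR]; nlinarith
      have hS0 : (0 : ℝ) < S := by linarith
      have hρ0 : (0 : ℝ) < ρ := by linarith
      calc _ ≤ (2 * (15 * R) ^ 2 / S) ^ 2 * (24 / lam ^ 2 / ρ ^ 2 * (C2 * (4 * (S : ℝ) ^ 2))) := by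
            refine mul_le_mul (pow_le_pow_left₀ ?_ hwm 2) hsum ?_ (by positivity)
            · rw [hw]; positivity
            · exact Finset.sum_nonneg fun y _ => gsq_nonneg G y
        _ = 19440000 * C2 * (1 / lam ^ 2) * R ^ 2 * (R ^ 2 / ρ ^ 2) := by
            field_simp; ring
        _ ≤ 19440000 * C2 * (1 / lam ^ 2) * R ^ 2 * 9 := by
            gcongr
            rw [div_le_iff₀ (by positivity)]; exact hRρ
        _ = 174960000 * C2 * (1 / lam ^ 2) * R ^ 2 := by ring
        _ ≤ E * R ^ 2 := by gcongr; linarith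

lemma latnorm_le (x : Lat 2) : latnorm x ≤ 2 * nrm x := by
  have h : ∀ i, |(x i : ℝ)| ≤ nrm x := by
    intro i
    have : (x i).natAbs ≤ nrm x := by
      fin_cases i
      · exact le_max_left _ _
      · exact le_max_right _ _
    rw [← Int.cast_abs, Int.abs_eq_natAbs]
    exact_mod_cast this
  unfold latnorm vnorm
  refine Real.sqrt_le_iff.2 ⟨by positivity, ?_⟩
  rw [Fin.sum_univ_two]
  have h0 := sq_le_sq' (abs_le.1 (h 0)).1 (abs_le.1 (h 0)).2
  have h1 := sq_le_sq' (abs_le.1 (h 1)).1 (abs_le.1 (h 1)).2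
  nlinarith [sq_nonneg (nrm x : ℝ)]

/-- The two terms of `ω_q` correspond to the two terms of `wt S`, as `S ≤ √T`. -/
lemma weight_two_le {q T : ℝ} (hq : 1 ≤ q) {S : ℕ} (hS : 1 ≤ S) (hST : (S : ℝ) ^ 2 ≤ T)
    (x : Lat 2) : weight 2 q T x ≤ 2 * wt S x ^ (2 * (q - 1)) := by
  have hS' : (0 : ℝ) < S := by exact_mod_cast hS
  rw [weight, if_pos rfl]
  set m : ℝ := 2 * (nrm x : ℝ) + 1 with hm
  have hm0 : 0 < m := by positivity
  have hL0 : 0 ≤ latnorm x := Real.sqrt_nonneg _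
  have hL : latnorm x + 1 ≤ m := by rw [hm]; linarith [latnorm_le x]
  have hw : wt S x = m + m ^ 2 / S := rfl
  have hmS : 0 ≤ m ^ 2 / S := by positivity
  have hp : 0 ≤ 2 * (q - 1) := by linarith
  have h1 : (latnorm x + 1) ^ (2 * (q - 1)) ≤ wt S x ^ (2 * (q - 1)) :=
    Real.rpow_le_rpow (by linarith) (by rw [hw]; linarith) hp
  have h2 : T ^ (1 - q) ≤ ((S : ℝ) ^ (2 * (q - 1)))⁻¹ := by
    calc T ^ (1 - q) ≤ ((S : ℝ) ^ 2) ^ (1 - q) :=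
          Real.rpow_le_rpow_of_nonpos (by positivity) hST (by linarith)
      _ = _ := by
          rw [← Real.rpow_natCast, ← Real.rpow_mul hS'.le, ← Real.rpow_neg hS'.le]
          congr 1; push_cast; ring
  have h3 : (latnorm x + 1) ^ (4 * (q - 1)) ≤ (m ^ 2) ^ (2 * (q - 1)) := by
    calc _ ≤ m ^ (4 * (q - 1)) := Real.rpow_le_rpow (by linarith) hL (by linarith)
      _ = _ := by
          rw [← Real.rpow_natCast m 2, ← Real.rpow_mul hm0.le]
          congr 1; push_cast; ring
  have h4 : T ^ (1 - q) * (latnorm x + 1) ^ (4 * (q - 1)) ≤ wt S x ^ (2 * (q - 1)) := by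
    calc _ ≤ ((S : ℝ) ^ (2 * (q - 1)))⁻¹ * (m ^ 2) ^ (2 * (q - 1)) :=
          mul_le_mul h2 h3 (Real.rpow_nonneg (by linarith) _) (by positivity)
      _ = (m ^ 2 / S) ^ (2 * (q - 1)) := by
          rw [Real.div_rpow (by positivity) hS'.le, inv_mul_eq_div]
      _ ≤ _ := Real.rpow_le_rpow hmS (by rw [hw]; linarith) hp
  linarith

/-- The weighted estimate in dimension two. -/
lemma case_two {lam : ℝ} (hlam0 : 0 < lam) (hlam1 : lam ≤ 1) :
    ∃ q0 : ℝ, 1 < q0 ∧ ∃ C : ℝ, 0 < C ∧ ∀ q : ℝ, 1 ≤ q → q ≤ q0 → ∀ T : ℝ, 2 ≤ T →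
      ∀ a, Ell lam a → ∀ G : Lat 2 → ℝ, L2 G → (∀ φ, L2 φ → form T a G φ = φ 0) →
      ∀ s : Finset (Lat 2),
        ∑ x ∈ s, vnorm (dgrad G x) ^ (2 * q) * weight 2 q T x ≤ C * Real.log T := by
  have hB : 1 ≤ √(Arh lam) := Real.one_le_sqrt.2 (one_le_Arh hlam0 hlam1)
  obtain ⟨p0, hp0, hp1, Cg, hCg, hGeh⟩ := gehring hB
  obtain ⟨E, hE, hdata⟩ := gehringData_green hlam0 hlam1
  obtain ⟨Ce, hCe, hen⟩ := green_energy_two hlam0 hlam1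
  have hsE : 1 ≤ √E := Real.one_le_sqrt.2 hE
  refine ⟨1 + p0 / 2, by linarith, 2 * (Cg * √E * Ce), by positivity, ?_⟩
  intro q hq1 hq2 T hT a h G hG hG0 s
  have hT0 : 0 < T := by linarith
  set S := ⌊√T⌋₊ with hSdef
  have hsT : 1 ≤ √T := Real.one_le_sqrt.2 (by linarith)
  have hS : 1 ≤ S := Nat.le_floor (by simpa using hsT)
  have hSle : (S : ℝ) ≤ √T := Nat.floor_le (Real.sqrt_nonneg T)
  have hSlt : √T < S + 1 := Nat.lt_floor_add_one _
  have hS' : (1 : ℝ) ≤ S := by exact_mod_cast hS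
  have hTsq := Real.sq_sqrt hT0.le
  have hST : (S : ℝ) ^ 2 ≤ T := by nlinarith
  have hTS : T ≤ 4 * (S : ℝ) ^ 2 := by nlinarith
  set p := 2 * (q - 1) with hp
  have hpp : 0 ≤ p := by rw [hp]; linarith
  have hpp0 : p ≤ p0 := by rw [hp]; linarith
  have hg := hGeh p hpp hpp0 _ _ _ _ (hdata T hT0 S hS hTS a h G hG hG0) s
  have hsq : ∀ x, √(gsq G x) ^ 2 = gsq G x := fun x => Real.sq_sqrt (gsq_nonneg G x)
  simp only [hsq] at hg
  have hlog : 0 ≤ Real.log T := Real.log_nonneg (by linarith)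
  have hpt : ∀ x, vnorm (dgrad G x) ^ (2 * q) * weight 2 q T x
      ≤ 2 * (gsq G x * (√(gsq G x) * wt S x) ^ p) := by
    intro x
    have hw0 : 0 ≤ wt S x := by unfold wt; positivity
    have e : gsq G x ^ q = gsq G x * √(gsq G x) ^ p := by
      have hg0 := gsq_nonneg G x
      rcases hg0.eq_or_lt with h0 | h0
      · rw [← h0, Real.zero_rpow (by linarith)]; ring
      · rw [Real.sqrt_eq_rpow, ← Real.rpow_mul hg0, ← Real.rpow_one_add' hg0 (by
          rw [hp]; linarith)]
        congr 1; rw [hp]; ring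
    rw [vnorm_rpow, e, Real.mul_rpow (by positivity) hw0]
    calc _ ≤ gsq G x * √(gsq G x) ^ p * (2 * wt S x ^ p) :=
          mul_le_mul_of_nonneg_left (weight_two_le hq1 hS hST x)
            (mul_nonneg (gsq_nonneg G x) (by positivity))
      _ = _ := by ring
  calc _ ≤ ∑ x ∈ s, 2 * (gsq G x * (√(gsq G x) * wt S x) ^ p) := Finset.sum_le_sum fun x _ => hpt x
    _ = 2 * ∑ x ∈ s, gsq G x * (√(gsq G x) * wt S x) ^ p := by rw [Finset.mul_sum]
    _ ≤ 2 * (Cg * √E ^ p * ∑' x, gsq G x) := by gcongr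
    _ ≤ 2 * (Cg * √E * (Ce * Real.log T)) := by
        have k1 : √E ^ p ≤ √E := by
          calc √E ^ p ≤ √E ^ (1 : ℝ) := Real.rpow_le_rpow_of_exponent_le hsE (by linarith)
            _ = _ := Real.rpow_one _
        have k2 := hen T hT S hS hST hTS a h G hG hG0
        have k3 : 0 ≤ ∑' x, gsq G x := tsum_nonneg fun x => gsq_nonneg G x
        gcongr
    _ = _ := by ring

/-- Lemma 4, estimate (eq:L2): weighted `ℓ^{2q}` bounds on the
gradient of the Green's function, uniformly in `a ∈ Ω`. -/
theorem statement9 (d : ℕ) (hd : 2 ≤ d) (lam : ℝ) (hlam0 : 0 < lam) (hlam1 : lam ≤ 1) :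
    ∃ q0 : ℝ, 1 < q0 ∧ ∃ C : ℝ, 0 < C ∧
      ∀ q : ℝ, 1 ≤ q → q ≤ q0 →
      ∀ T : ℝ, 2 ≤ T →
      ∀ a : Lat d → Fin d → Fin d → ℝ, (∀ x, IsElliptic d lam (a x)) →
      ∀ G : Lat d → ℝ, IsGreen d T a 0 G →
        Summable (fun x : Lat d => vnorm (dgrad G x) ^ (2 * q) * weight d q T x) ∧
        ∑' x : Lat d, vnorm (dgrad G x) ^ (2 * q) * weight d q T x
          ≤ C * (if d = 2 then Real.log T else 1) := by
  -- a uniform bound on finite partial sums gives summability and the bound on the sum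
  suffices hfin : ∃ q0 : ℝ, 1 < q0 ∧ ∃ C : ℝ, 0 < C ∧ ∀ q : ℝ, 1 ≤ q → q ≤ q0 →
      ∀ T : ℝ, 2 ≤ T → ∀ a, Ell lam a → ∀ G : Lat d → ℝ, L2 G →
      (∀ φ, L2 φ → form T a G φ = φ 0) → ∀ s : Finset (Lat d),
        ∑ x ∈ s, vnorm (dgrad G x) ^ (2 * q) * weight d q T x
          ≤ C * (if d = 2 then Real.log T else 1) by
    obtain ⟨q0, hq0, C, hC, H⟩ := hfin
    refine ⟨q0, hq0, C, hC, fun q hq1 hq2 T hT a ha G hG => ?_⟩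
    have h : Ell lam a := Ell.of_isElliptic ha
    have hs := H q hq1 hq2 T hT a h G hG.1 fun φ hφ => hG.form_eq h hφ
    have hnn : ∀ x, 0 ≤ vnorm (dgrad G x) ^ (2 * q) * weight d q T x := by
      intro x
      have hL : 0 ≤ latnorm x := Real.sqrt_nonneg _
      have hv : 0 ≤ vnorm (dgrad G x) := Real.sqrt_nonneg _
      have hT0 : 0 ≤ T := by linarith
      refine mul_nonneg (by positivity) ?_
      unfold weight
      split_ifs <;> positivity
    exact ⟨summable_of_sum_le hnn hs, Real.tsum_le_of_sum_le hnn hs⟩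
  rcases hd.eq_or_lt with rfl | hd3
  · simpa only [if_true] using case_two hlam0 hlam1
  · obtain ⟨q0, hq0, C, hC, H⟩ := case_three_le (d := d) hd3 hlam0 hlam1
    refine ⟨q0, hq0, C, hC, fun q hq1 hq2 T hT a h G hG hG0 s => ?_⟩
    have hd2 : d ≠ 2 := by omega
    simp only [weight, if_neg hd2, mul_one]
    exact H q hq1 hq2 T (by linarith) a h G hG hG0 s
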